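/- Fix 0 < ε < 1/6, and for each n let λ^n be a partition of n whose number of parts satisfies n(λ^n) ≤ n^ε. Then for every continuous function f : ℝ → ℝ of polynomial growth, E_n[f(Ū(σ)) | λ(σ) = λ^n] − E_n[f(Ū(σ))] → 0 as n → ∞, where Ū is the normalized length of the longest increasing subsequence and the conditional expectation is the average of f(Ū) over the uniform measure on S_n^{λ^n}. -/

import Mathlib

open scoped BigOperators Classical
open Finset Filter

/-- Expectation under the uniform measure on `S_n`. -/
noncomputable def En {n : ℕ} (g : Equiv.Perm (Fin n) → ℝ) : ℝ :=
  (∑ σ : Equiv.Perm (Fin n), g σ) / (Fintype.card (Equiv.Perm (Fin n)) : ℝ)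

/-- Variance under the uniform measure on `S_n`. -/
noncomputable def VarN {n : ℕ} (g : Equiv.Perm (Fin n) → ℝ) : ℝ :=
  En (fun σ => (g σ - En g) ^ 2)

/-- The length of the longest increasing subsequence of `(σ(1),…,σ(n))`:
the largest cardinality of a set of indices on which `σ` is strictly increasing. -/
noncomputable def lisLen {n : ℕ} (σ : Equiv.Perm (Fin n)) : ℕ :=
  Finset.univ.sup fun s : Finset (Fin n) =>
    if StrictMonoOn (fun i => σ i) (s : Set (Fin n)) then s.card else 0

/-- Normalized Ulam statistic `Ū = (U − E U)/√(Var U)`. -/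
noncomputable def lisLenBar {n : ℕ} (σ : Equiv.Perm (Fin n)) : ℝ :=
  ((lisLen σ : ℝ) - En (fun σ : Equiv.Perm (Fin n) => (lisLen σ : ℝ))) /
    Real.sqrt (VarN (fun σ : Equiv.Perm (Fin n) => (lisLen σ : ℝ)))

/-- Conditional expectation given cycle type `λ`: the average over `S_n^λ`. -/
noncomputable def EnCond {n : ℕ} (lam : (Fintype.card (Fin n)).Partition)
    (g : Equiv.Perm (Fin n) → ℝ) : ℝ :=
  (∑ σ ∈ Finset.univ.filter (fun σ : Equiv.Perm (Fin n) => σ.partition = lam), g σ) /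
    ((Finset.univ.filter (fun σ : Equiv.Perm (Fin n) => σ.partition = lam)).card : ℝ)

/-!
The longest increasing subsequence length `U` moves by at most the number of points at which two
permutations differ, and multiplying by a transposition that merges two cycles changes two points.
Hence two permutations with few cycles can be turned into conjugate long cycles cheaply. Averaging
over conjugations compares the uniform measure on a conjugacy class with few cycles with the one on
the class of a typical permutation, which has `O(log n)` cycles in the mean. What remains is to know
that `Ū` has bounded moments and that the standard deviation of `U` is at least of order `n^(1/6)`.

Both follow from estimates at the edge `2√n`. By Gessel's identity, the distribution function of `U`
for a Poisson(`s²`) number of points is `exp (-s²)` times the Toeplitz determinant of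
`exp (s (z + z⁻¹))`. The ratios of consecutive determinants are given by the Verblunsky coefficients
of this weight, which, up to sign, are positive and solve the discrete Painlevé II equation. Viewed
as a second-order difference equation it is convex to the right of `2s`, which forces exponential
decay at scale `s^(1/3)` and thus the upper tail; its cubic term forbids large values near `2s`,
which bounds the density there by `O(s^(-1/3))`; and to the left of `2s` small solutions would
oscillate, contradicting positivity, so that the coefficients are large and the lower tail decays.
Monotonicity in `n` transfers the tails to fixed `n`; for the density one uses in addition that a
uniformly chosen point of a permutation of `n` points lies on a given longest increasing subsequence
only with probability `O(n^(-1/2))`.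
-/

section InvFactorialDet

/-- `1 / z!`, extended by zero to negative integers. -/
noncomputable def invFactorial (z : ℤ) : ℝ :=
  if z < 0 then 0 else 1 / (z.toNat.factorial : ℝ)

lemma invFactorial_of_neg {z : ℤ} (hz : z < 0) : invFactorial z = 0 := by simp [invFactorial, hz]

lemma invFactorial_natCast (m : ℕ) : invFactorial (m : ℤ) = 1 / (m.factorial : ℝ) := by
  simp [invFactorial]

lemma invFactorial_nonneg (z : ℤ) : 0 ≤ invFactorial z := by
  rw [invFactorial]; split_ifs <;> positivity

lemma invFactorial_le_one (z : ℤ) : invFactorial z ≤ 1 := by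
  rw [invFactorial]
  split_ifs
  · exact zero_le_one
  · exact (div_le_one (by positivity)).2 (by exact_mod_cast Nat.factorial_pos _)

lemma intCast_mul_invFactorial (z : ℤ) : (z : ℝ) * invFactorial z = invFactorial (z - 1) := by
  rcases lt_trichotomy z 0 with hz | rfl | hz
  · rw [invFactorial_of_neg hz, invFactorial_of_neg (by lia), mul_zero]
  · rw [invFactorial_of_neg (by lia : (0 : ℤ) - 1 < 0), Int.cast_zero, zero_mul]
  · obtain ⟨m, rfl⟩ : ∃ m : ℕ, z = ((m + 1 : ℕ) : ℤ) := ⟨z.toNat - 1, by lia⟩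
    have hpred : ((m + 1 : ℕ) : ℤ) - 1 = (m : ℤ) := by lia
    rw [hpred, invFactorial_natCast, invFactorial_natCast, Nat.factorial_succ]
    push_cast
    field_simp

/-- The determinant `det (1 / (m i + j - i)!)`. For a partition `m` with at most `k` rows this is
`f^m / |m|!`, where `f^m` counts standard Young tableaux of shape `m`. -/
noncomputable def invFactorialDet (k : ℕ) (m : ℕ → ℤ) : ℝ :=
  Matrix.det (Matrix.of fun i j : Fin k => invFactorial (m i + (j : ℤ) - (i : ℤ)))

lemma invFactorialDet_eq_sum (k : ℕ) (m : ℕ → ℤ) :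
    invFactorialDet k m = ∑ σ : Equiv.Perm (Fin k), ((Equiv.Perm.sign σ : ℤ) : ℝ) *
      ∏ a : Fin k, invFactorial (m a + (σ a : ℕ) - (a : ℕ)) := by
  rw [invFactorialDet, ← Matrix.det_transpose, Matrix.det_apply']
  rfl

lemma invFactorialDet_sub_single (k : ℕ) (m : ℕ → ℤ) (i : Fin k) :
    invFactorialDet k (m - Pi.single (i : ℕ) 1) =
      ∑ σ : Equiv.Perm (Fin k), ((Equiv.Perm.sign σ : ℤ) : ℝ) *
        (((m i : ℝ) + ((σ i : ℕ) : ℝ) - ((i : ℕ) : ℝ)) *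
          ∏ a : Fin k, invFactorial (m a + (σ a : ℕ) - (a : ℕ))) := by
  rw [invFactorialDet_eq_sum]
  refine sum_congr rfl fun σ _ => ?_
  have hshift := intCast_mul_invFactorial (m i + (σ i : ℕ) - (i : ℕ))
  push_cast at hshift
  rw [← mul_prod_erase _ _ (mem_univ i), ← mul_prod_erase _ _ (mem_univ i),
    ← mul_assoc ((m i : ℝ) + _ - _), hshift]
  congr 2
  · simp only [Pi.sub_apply, Pi.single_eq_same]
    congr 1
    ring
  · refine prod_congr rfl fun a ha => ?_
    have hai : (a : ℕ) ≠ i := fun h => ne_of_mem_erase ha (Fin.ext h)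
    simp [hai]

lemma sum_mul_invFactorialDet (k : ℕ) (m : ℕ → ℤ) :
    (∑ i ∈ range k, (m i : ℝ)) * invFactorialDet k m =
      ∑ i ∈ range k, invFactorialDet k (m - Pi.single i 1) := by
  rw [Finset.sum_range, Finset.sum_range]
  simp_rw [invFactorialDet_sub_single]
  rw [sum_comm, invFactorialDet_eq_sum, mul_sum]
  refine sum_congr rfl fun σ _ => ?_
  have hweight : ∑ i : Fin k, ((m i : ℝ) + ((σ i : ℕ) : ℝ) - ((i : ℕ) : ℝ)) =
      ∑ i : Fin k, (m i : ℝ) := by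
    rw [sum_sub_distrib, sum_add_distrib, Equiv.sum_comp σ fun i : Fin k => ((i : ℕ) : ℝ),
      add_sub_cancel_right]
  rw [← mul_sum, ← sum_mul, hweight]
  ring

lemma invFactorialDet_swap_rows {k i : ℕ} (hi : i + 1 < k) {m m' : ℕ → ℤ}
    (hfst : m' i = m (i + 1) - 1) (hsnd : m' (i + 1) = m i + 1)
    (hrest : ∀ j, j ≠ i → j ≠ i + 1 → m' j = m j) :
    invFactorialDet k m' = -invFactorialDet k m := by
  have hdet := Matrix.det_permute (Equiv.swap (⟨i, by lia⟩ : Fin k) ⟨i + 1, hi⟩)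
    (Matrix.of fun i j : Fin k => invFactorial (m i + (j : ℤ) - (i : ℤ)))
  rw [Equiv.Perm.sign_swap (by simp [Fin.ext_iff])] at hdet
  simp only [Units.val_neg, Units.val_one, Int.cast_neg, Int.cast_one, neg_mul, one_mul] at hdet
  rw [invFactorialDet, invFactorialDet, ← hdet]
  congr 1
  ext a b
  simp only [Matrix.submatrix_apply, id, Matrix.of_apply]
  congr 1
  by_cases ha : a = ⟨i, by lia⟩
  · subst ha
    rw [Equiv.swap_apply_left, hfst]
    push_cast
    ring
  by_cases ha' : a = ⟨i + 1, hi⟩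
  · subst ha'
    rw [Equiv.swap_apply_right, hsnd]
    push_cast
    ring
  rw [Equiv.swap_apply_of_ne_of_ne ha ha',
    hrest _ (by simpa [Fin.ext_iff] using ha) (by simpa [Fin.ext_iff] using ha')]

lemma invFactorialDet_eq_zero_of_last_neg {k : ℕ} (hk : 0 < k) {m : ℕ → ℤ} (hm : m (k - 1) < 0) :
    invFactorialDet k m = 0 := by
  refine Matrix.det_eq_zero_of_row_eq_zero (⟨k - 1, by lia⟩ : Fin k) fun j => ?_
  rw [Matrix.of_apply]
  exact invFactorial_of_neg (by have := j.2; lia)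

lemma invFactorialDet_eq_zero_of_neg_one {k i : ℕ} (hi : i < k) {m : ℕ → ℤ} (hm : m i = -1)
    (hsucc : i + 1 < k → m (i + 1) = 0) : invFactorialDet k m = 0 := by
  rcases Nat.lt_or_ge (i + 1) k with hik | hik
  · have hswap := invFactorialDet_swap_rows (m := m) (m' := m) hik (by lia) (by lia)
      fun _ _ _ => rfl
    linarith
  · obtain rfl : k = i + 1 := by lia
    exact invFactorialDet_eq_zero_of_last_neg i.succ_pos (by simp [hm])

lemma invFactorialDet_zero (k : ℕ) : invFactorialDet k 0 = 1 := by
  rw [invFactorialDet, Matrix.det_of_isUpperTriangular]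
  · simp [invFactorial]
  · intro i j hji
    have hlt : (j : ℕ) < i := hji
    exact invFactorial_of_neg (by simpa using hlt)

end InvFactorialDet

section DetFunctional

open MvPolynomial

/-- The linear functional sending the monomial `X ^ m` to `invFactorialDet k (m + r)`. -/
noncomputable def detFunctional (k : ℕ) (r : ℕ → ℤ) : MvPolynomial ℕ ℝ →ₗ[ℝ] ℝ :=
  (basisMonomials ℕ ℝ).constr ℝ fun m => invFactorialDet k fun i => (m i : ℤ) + r i

lemma detFunctional_monomial (k : ℕ) (r : ℕ → ℤ) (m : ℕ →₀ ℕ) :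
    detFunctional k r (monomial m 1) = invFactorialDet k fun i => (m i : ℤ) + r i := by
  have hbasis : monomial m (1 : ℝ) = basisMonomials ℕ ℝ m := by rw [coe_basisMonomials]
  rw [hbasis, detFunctional, Module.Basis.constr_basis]

lemma detFunctional_X_mul (k : ℕ) (r : ℕ → ℤ) (i : ℕ) (p : MvPolynomial ℕ ℝ) :
    detFunctional k r (X i * p) = detFunctional k (r + Pi.single i 1) p := by
  suffices (detFunctional k r).comp (LinearMap.mulLeft ℝ (X i)) =
      detFunctional k (r + Pi.single i 1) from LinearMap.congr_fun this p
  refine (basisMonomials ℕ ℝ).ext fun m => ?_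
  simp only [coe_basisMonomials, LinearMap.comp_apply, LinearMap.mulLeft_apply]
  rw [X, monomial_mul, one_mul, detFunctional_monomial, detFunctional_monomial]
  congr 1
  ext j
  simp only [Finsupp.add_apply, Finsupp.single_apply, Pi.add_apply, Pi.single_apply, eq_comm]
  split_ifs <;> push_cast <;> ring

lemma detFunctional_one (k : ℕ) (r : ℕ → ℤ) : detFunctional k r 1 = invFactorialDet k r := by
  simpa using detFunctional_monomial k r 0

lemma detFunctional_rename_swap {k i : ℕ} (hi : i + 1 < k) {r : ℕ → ℤ} (hr : r (i + 1) = r i + 1)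
    (p : MvPolynomial ℕ ℝ) :
    detFunctional k r (rename (Equiv.swap i (i + 1)) p) = -detFunctional k r p := by
  suffices (detFunctional k r).comp (rename (Equiv.swap i (i + 1))).toLinearMap =
      -detFunctional k r from LinearMap.congr_fun this p
  refine (basisMonomials ℕ ℝ).ext fun m => ?_
  simp only [coe_basisMonomials, LinearMap.comp_apply, LinearMap.neg_apply,
    AlgHom.toLinearMap_apply]
  rw [rename_monomial, detFunctional_monomial, detFunctional_monomial]
  have hmap : ∀ j, Finsupp.mapDomain (Equiv.swap i (i + 1)) m j = m (Equiv.swap i (i + 1) j) := by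
    simp [Finsupp.mapDomain_equiv_apply]
  apply invFactorialDet_swap_rows hi
  · rw [hmap, Equiv.swap_apply_left, hr]; ring
  · rw [hmap, Equiv.swap_apply_right, hr]; ring
  · intro j hji hji1
    rw [hmap, Equiv.swap_apply_of_ne_of_ne hji hji1]

/-- The product over the labels `t ∈ T` of the sums of the variables `X i`, `i < h`, whose
threshold `x i` is at most `t`. -/
noncomputable def thresholdProd (h : ℕ) (T : Finset ℕ) (x : ℕ → ℕ) : MvPolynomial ℕ ℝ :=
  ∏ t ∈ T, ∑ i ∈ range h with x i ≤ t, X i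

/-- `thresholdProd h T x` with the variable `X i` left out of the factors of labels below `y`. -/
noncomputable def thresholdProdSkip (h : ℕ) (T : Finset ℕ) (x : ℕ → ℕ) (i y : ℕ) :
    MvPolynomial ℕ ℝ :=
  ∏ t ∈ T, (∑ j ∈ range h with x j ≤ t, X j - if x i ≤ t ∧ t < y then X i else 0)

lemma thresholdProd_empty (h : ℕ) (x : ℕ → ℕ) : thresholdProd h ∅ x = 1 := prod_empty

lemma detFunctional_thresholdProd_insert (k h : ℕ) {T : Finset ℕ} {t : ℕ} (ht : t ∉ T)
    (x : ℕ → ℕ) (r : ℕ → ℤ) :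
    detFunctional k r (thresholdProd h (insert t T) x) =
      ∑ i ∈ range h with x i ≤ t, detFunctional k (r + Pi.single i 1) (thresholdProd h T x) := by
  simp only [thresholdProd, prod_insert ht, sum_mul, map_sum, detFunctional_X_mul]

lemma add_sum_mul_detFunctional_thresholdProd {k h : ℕ} (hk : h ≤ k) (T : Finset ℕ) (x : ℕ → ℕ)
    (r : ℕ → ℤ) :
    ((#T : ℝ) + ∑ i ∈ range k, (r i : ℝ)) * detFunctional k r (thresholdProd h T x) =
      ∑ i ∈ range k, detFunctional k (r - Pi.single i 1) (thresholdProd h T x) := by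
  induction T using Finset.induction_on generalizing r with
  | empty =>
    simp only [thresholdProd_empty, detFunctional_one, card_empty, Nat.cast_zero, zero_add]
    exact sum_mul_invFactorialDet k r
  | insert t T ht ih =>
    simp only [detFunctional_thresholdProd_insert k h ht]
    rw [sum_comm, mul_sum]
    refine sum_congr rfl fun i hi => ?_
    have hik : i < k := (mem_range.1 (mem_filter.1 hi).1).trans_le hk
    have hsingle : ∑ j ∈ range k, ((Pi.single i 1 : ℕ → ℤ) j : ℝ) = 1 := by
      simp [Pi.single_apply, apply_ite, hik]
    simp_rw [sub_add_eq_add_sub]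
    rw [← ih, card_insert_of_notMem ht]
    simp only [Pi.add_apply, Int.cast_add, sum_add_distrib, hsingle]
    push_cast
    ring

lemma detFunctional_thresholdProd_eq_zero {k h : ℕ} (T : Finset ℕ) (x : ℕ → ℕ) {r : ℕ → ℤ}
    (hr : ∀ r' : ℕ → ℤ, (∀ j, h ≤ j → r' j = r j) → invFactorialDet k r' = 0) :
    detFunctional k r (thresholdProd h T x) = 0 := by
  induction T using Finset.induction_on generalizing r with
  | empty => rw [thresholdProd_empty, detFunctional_one]; exact hr r fun _ _ => rfl
  | insert t T ht ih =>
    rw [detFunctional_thresholdProd_insert k h ht]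
    refine sum_eq_zero fun i hi => ih fun r' hr' => hr r' fun j hj => ?_
    have hji : j ≠ i := by
      have := mem_range.1 (mem_filter.1 hi).1
      lia
    simp [hr' j hj, hji]

lemma sum_threshold_update {h i : ℕ} (hi : i < h) (x : ℕ → ℕ) (v t : ℕ) :
    (∑ j ∈ range h with Function.update x i v j ≤ t, (X j : MvPolynomial ℕ ℝ)) =
      (∑ j ∈ range h with x j ≤ t, X j) - (if x i ≤ t then X i else 0) +
        if v ≤ t then X i else 0 := by
  have hrest : ∑ j ∈ (range h).erase i,
      (if Function.update x i v j ≤ t then (X j : MvPolynomial ℕ ℝ) else 0) =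
        ∑ j ∈ (range h).erase i, if x j ≤ t then X j else 0 :=
    sum_congr rfl fun j hj => by rw [Function.update_of_ne (ne_of_mem_erase hj)]
  rw [sum_filter, sum_filter, ← add_sum_erase _ _ (mem_range.2 hi),
    ← add_sum_erase (range h) (fun j => if x j ≤ t then X j else 0) (mem_range.2 hi), hrest,
    Function.update_self]
  ring

lemma filter_lt_union_filter_gt (T : Finset ℕ) (v : ℕ) :
    {t ∈ T | t < v} ∪ {t ∈ T | v < t} = T.erase v := by
  rw [← filter_or, ← filter_ne']
  exact filter_congr fun t _ => by lia

lemma thresholdProd_eq_skip_add {h i : ℕ} (hi : i < h) (T : Finset ℕ) (x : ℕ → ℕ) (y : ℕ) :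
    thresholdProd h T x = thresholdProdSkip h T x i y +
      X i * ∑ v ∈ T with x i ≤ v ∧ v < y,
        thresholdProd h (T.erase v) (Function.update x i v) := by
  rw [thresholdProdSkip, prod_sub_ordered, mul_sum, sum_filter, thresholdProd, sub_add, eq_comm,
    sub_eq_self, sub_eq_zero]
  refine sum_congr rfl fun v _ => ?_
  split_ifs with hv
  · have hdisj : Disjoint {t ∈ T | t < v} {t ∈ T | v < t} :=
      disjoint_filter.2 fun t _ hlt => hlt.not_gt
    rw [mul_assoc, thresholdProd, ← filter_lt_union_filter_gt, prod_union hdisj]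
    congr 2 <;> refine prod_congr rfl fun t ht => ?_ <;> rw [mem_filter] at ht <;>
      rw [sum_threshold_update hi]
    · have hvt : ¬ v ≤ t := by lia
      have hty : t < y := by lia
      simp only [hvt, hty, and_true, if_false, add_zero]
    · have hvt : v ≤ t := by lia
      have hxt : x i ≤ t := by lia
      simp only [hvt, hxt, if_true, sub_add_cancel]
  · simp only [zero_mul]

lemma thresholdProdSkip_last {h y : ℕ} {T : Finset ℕ} (hy : ∀ t ∈ T, t < y) (x : ℕ → ℕ) :
    thresholdProdSkip (h + 1) T x h y = thresholdProd h T x := by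
  refine prod_congr rfl fun t ht => ?_
  simp only [hy t ht, and_true, sum_filter, sum_range_succ, add_sub_cancel_right]

lemma sum_threshold_sub_ite {h i : ℕ} (hi : i + 1 < h) {x : ℕ → ℕ} (hx : x i ≤ x (i + 1)) (t : ℕ) :
    (∑ j ∈ range h with x j ≤ t, (X j : MvPolynomial ℕ ℝ)) -
        (if x i ≤ t ∧ t < x (i + 1) then X i else 0) =
      (if x (i + 1) ≤ t then X i + X (i + 1) else 0) +
        ∑ j ∈ ((range h).erase i).erase (i + 1), if x j ≤ t then X j else 0 := by
  rw [sum_filter, ← add_sum_erase _ _ (mem_range.2 (by lia : i < h)),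
    ← add_sum_erase ((range h).erase i) _ (by simp [hi] : i + 1 ∈ (range h).erase i)]
  split_ifs <;> first | lia | ring

lemma rename_swap_thresholdProdSkip {h i : ℕ} (hi : i + 1 < h) (T : Finset ℕ) {x : ℕ → ℕ}
    (hx : x i ≤ x (i + 1)) :
    rename (Equiv.swap i (i + 1)) (thresholdProdSkip h T x i (x (i + 1))) =
      thresholdProdSkip h T x i (x (i + 1)) := by
  rw [thresholdProdSkip, map_prod]
  refine prod_congr rfl fun t _ => ?_
  rw [sum_threshold_sub_ite hi hx, map_add, map_sum]
  congr 1
  · split_ifs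
    · simp [add_comm]
    · exact map_zero _
  · refine sum_congr rfl fun j hj => ?_
    simp only [mem_erase] at hj
    split_ifs
    · rw [rename_X, Equiv.swap_apply_of_ne_of_ne hj.2.1 hj.1]
    · exact map_zero _

/-- The functional is antisymmetric and the polynomial symmetric under exchanging `X i` and
`X (i + 1)`. -/
lemma detFunctional_sub_single_thresholdProdSkip {k i : ℕ} (hi : i + 1 < k) {h : ℕ}
    (hih : i + 1 < h) (T : Finset ℕ) {x : ℕ → ℕ} (hx : x i ≤ x (i + 1)) {r : ℕ → ℤ}
    (hr : r (i + 1) = r i) :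
    detFunctional k (r - Pi.single i 1) (thresholdProdSkip h T x i (x (i + 1))) = 0 := by
  have hanti := detFunctional_rename_swap hi (r := r - Pi.single i 1) (by simp [hr])
    (thresholdProdSkip h T x i (x (i + 1)))
  rw [rename_swap_thresholdProdSkip hih T hx] at hanti
  linarith

lemma detFunctional_sub_single_thresholdProd (k : ℕ) {h i : ℕ} (hi : i < h) (T : Finset ℕ)
    (x : ℕ → ℕ) (y : ℕ) (r : ℕ → ℤ) :
    detFunctional k (r - Pi.single i 1) (thresholdProd h T x) =
      detFunctional k (r - Pi.single i 1) (thresholdProdSkip h T x i y) +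
        ∑ v ∈ T with x i ≤ v ∧ v < y,
          detFunctional k r (thresholdProd h (T.erase v) (Function.update x i v)) := by
  conv_lhs => rw [thresholdProd_eq_skip_add hi T x y]
  rw [map_add, detFunctional_X_mul, map_sum, sub_add_cancel]

lemma monotoneOn_update {x : ℕ → ℕ} {s : Set ℕ} (hx : MonotoneOn x s) {i v : ℕ} (hi : i ∈ s)
    (hiv : x i ≤ v) (hnext : ∀ j ∈ s, i < j → v ≤ x j) :
    MonotoneOn (Function.update x i v) s := by
  intro a ha b hb hab
  rcases eq_or_ne a i with rfl | hai <;> rcases eq_or_ne b a with rfl | hba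
  · exact le_rfl
  · rw [Function.update_self, Function.update_of_ne hba]
    exact hnext b hb (lt_of_le_of_ne hab hba.symm)
  · exact le_rfl
  · rw [Function.update_of_ne hai]
    rcases eq_or_ne b i with rfl | hbi
    · rw [Function.update_self]
      exact (hx ha hi hab).trans hiv
    · rw [Function.update_of_ne hbi]
      exact hx ha hb hab

/-- The indicator of `{0, …, h - 1}`, as a shift of the row lengths. -/
def indicatorLT (h : ℕ) : ℕ → ℤ := fun i => if i < h then 1 else 0

lemma indicatorLT_zero : indicatorLT 0 = 0 := by
  funext i
  simp [indicatorLT]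

lemma indicatorLT_succ_sub_single (h : ℕ) :
    indicatorLT (h + 1) - Pi.single h 1 = indicatorLT h := by
  funext j
  simp only [indicatorLT, Pi.sub_apply, Pi.single_apply]
  split_ifs <;> lia

lemma sum_indicatorLT {h k : ℕ} (hk : h ≤ k) : ∑ i ∈ range k, (indicatorLT h i : ℝ) = h := by
  have hmem : ∀ i, (indicatorLT h i : ℝ) = if i ∈ range h then 1 else 0 := by simp [indicatorLT]
  simp_rw [hmem]
  rw [sum_ite_mem, inter_eq_right.2 (range_subset_range.2 hk)]
  simp

lemma detFunctional_indicatorLT_sub_single_of_ge {k h i : ℕ} (hik : i < k) (hi : h ≤ i)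
    (T : Finset ℕ) (x : ℕ → ℕ) :
    detFunctional k (indicatorLT h - Pi.single i 1) (thresholdProd h T x) = 0 := by
  refine detFunctional_thresholdProd_eq_zero T x fun r' hr' =>
    invFactorialDet_eq_zero_of_neg_one hik ?_ fun _ => ?_
  · rw [hr' i hi]
    simp [indicatorLT, hi]
  · rw [hr' (i + 1) (by lia)]
    simp [indicatorLT, show h ≤ i + 1 by lia]

lemma sum_detFunctional_update_nonneg {k h : ℕ} {T : Finset ℕ}
    (ih : ∀ T' ⊂ T, ∀ x : ℕ → ℕ, MonotoneOn x (Set.Iio h) →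
      0 ≤ detFunctional k (indicatorLT h) (thresholdProd h T' x))
    {x : ℕ → ℕ} (hx : MonotoneOn x (Set.Iio h)) {i y : ℕ} (hi : i < h)
    (hy : ∀ j < h, i < j → y ≤ x j) :
    0 ≤ ∑ v ∈ T with x i ≤ v ∧ v < y,
      detFunctional k (indicatorLT h) (thresholdProd h (T.erase v) (Function.update x i v)) := by
  refine sum_nonneg fun v hv => ?_
  obtain ⟨hvT, hiv, hvy⟩ := mem_filter.1 hv
  exact ih _ (erase_ssubset hvT) _
    (monotoneOn_update hx hi hiv fun j hj hij => hvy.le.trans (hy j hj hij))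

theorem detFunctional_indicatorLT_thresholdProd_nonneg {k h : ℕ} (hk : h ≤ k) (T : Finset ℕ)
    {x : ℕ → ℕ} (hx : MonotoneOn x (Set.Iio h)) :
    0 ≤ detFunctional k (indicatorLT h) (thresholdProd h T x) := by
  induction h generalizing T x with
  | zero =>
    rcases T.eq_empty_or_nonempty with rfl | ⟨t, ht⟩
    · rw [thresholdProd_empty, detFunctional_one, indicatorLT_zero, invFactorialDet_zero]
      exact zero_le_one
    · rw [thresholdProd, prod_eq_zero ht (by simp), map_zero]
  | succ h ihh =>
    induction T using Finset.strongInduction generalizing x with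
    | H T ihT =>
    have hpos : 0 < (#T : ℝ) + ∑ i ∈ range k, (indicatorLT (h + 1) i : ℝ) := by
      rw [sum_indicatorLT hk]; positivity
    refine nonneg_of_mul_nonneg_right ?_ hpos
    rw [add_sum_mul_detFunctional_thresholdProd hk]
    refine sum_nonneg fun i hi => ?_
    rw [mem_range] at hi
    rcases lt_trichotomy i h with hih | rfl | hih
    · rw [detFunctional_sub_single_thresholdProd k (by lia) T x (x (i + 1)),
        detFunctional_sub_single_thresholdProdSkip (by lia) (by lia) T
          (hx (by simp; lia) (by simp; lia) i.le_succ) (by simp [indicatorLT]; lia), zero_add]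
      exact sum_detFunctional_update_nonneg (fun T' hT' _ hx' => ihT T' hT' hx') hx (by lia)
        fun j hj hij => hx (by simp; lia) hj hij
    · have hlt : ∀ t ∈ T, t < T.sup id + 1 := fun t ht => Nat.lt_succ_of_le (le_sup (f := id) ht)
      rw [detFunctional_sub_single_thresholdProd k i.lt_succ_self T x (T.sup id + 1),
        thresholdProdSkip_last hlt, indicatorLT_succ_sub_single]
      exact add_nonneg (ihh (by lia) T (hx.mono (Set.Iio_subset_Iio i.le_succ)))
        (sum_detFunctional_update_nonneg (fun T' hT' _ hx' => ihT T' hT' hx') hx i.lt_succ_self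
          fun j hj hij => by lia)
    · exact (detFunctional_indicatorLT_sub_single_of_ge hi hih T x).ge

end DetFunctional

section DecreasingSublists

/-- The maximal length of a strictly decreasing sublist of `l` with entries below `x`. -/
def decLenBelow : List ℕ → ℕ → ℕ
  | [], _ => 0
  | v :: l, x => if v < x then max (decLenBelow l x) (decLenBelow l v + 1) else decLenBelow l x

lemma decLenBelow_mono (l : List ℕ) : Monotone (decLenBelow l) := by
  induction l with
  | nil => exact fun _ _ _ => le_rfl
  | cons v l ih =>
    intro a b hab
    have hl := ih hab
    simp only [decLenBelow]
    split_ifs <;> lia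

lemma decLenBelow_zero (l : List ℕ) : decLenBelow l 0 = 0 := by
  induction l with
  | nil => rfl
  | cons v l ih => simp [decLenBelow, ih]

lemma card_le_card_filter_succ_add {n : ℕ} (s : Finset (Fin (n + 1))) :
    #s ≤ #{i : Fin n | i.succ ∈ s} + if 0 ∈ s then 1 else 0 := by
  have hsub : s ⊆ ({i : Fin n | i.succ ∈ s} : Finset (Fin n)).image Fin.succ ∪
      if 0 ∈ s then {0} else ∅ := by
    intro a ha
    rcases Fin.eq_zero_or_eq_succ a with rfl | ⟨b, rfl⟩
    · simp [ha]
    · exact mem_union_left _ (mem_image_of_mem _ (by simp [ha]))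
  refine (card_le_card hsub).trans ((card_union_le _ _).trans (add_le_add card_image_le ?_))
  split_ifs <;> simp

lemma card_le_decLenBelow_ofFn {n : ℕ} {g : Fin n → ℕ} {x : ℕ} {s : Finset (Fin n)}
    (hanti : StrictAntiOn g s) (hlt : ∀ i ∈ s, g i < x) :
    #s ≤ decLenBelow (List.ofFn g) x := by
  induction n generalizing x with
  | zero => simp [eq_empty_of_isEmpty s]
  | succ n ih =>
    have hcard := card_le_card_filter_succ_add s
    set s' : Finset (Fin n) := {i | i.succ ∈ s} with hs'
    have hmem : ∀ i ∈ s', i.succ ∈ s := by simp [hs']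
    have hanti' : StrictAntiOn (fun i : Fin n => g i.succ) s' := fun i hi j hj hij =>
      hanti (hmem i hi) (hmem j hj) (Fin.succ_lt_succ_iff.2 hij)
    rw [List.ofFn_succ]
    simp only [decLenBelow]
    by_cases h0 : (0 : Fin (n + 1)) ∈ s
    · rw [if_pos h0] at hcard
      rw [if_pos (hlt 0 h0)]
      have hhead := ih hanti' fun i hi => hanti h0 (hmem i hi) i.succ_pos
      lia
    · rw [if_neg h0] at hcard
      have htail := ih hanti' fun i hi => hlt _ (hmem i hi)
      split_ifs <;> lia

lemma strictAntiOn_map_succ {n : ℕ} {g : Fin (n + 1) → ℕ} {s : Finset (Fin n)}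
    (hs : StrictAntiOn (fun i : Fin n => g i.succ) s) : StrictAntiOn g (s.map (Fin.succEmb n)) := by
  intro i hi j hj hij
  obtain ⟨i, his, rfl⟩ := mem_map.1 hi
  obtain ⟨j, hjs, rfl⟩ := mem_map.1 hj
  exact hs his hjs (Fin.succ_lt_succ_iff.1 hij)

lemma strictAntiOn_insert_zero_map_succ {n : ℕ} {g : Fin (n + 1) → ℕ} {s : Finset (Fin n)}
    (hs : StrictAntiOn (fun i : Fin n => g i.succ) s) (hlt : ∀ i ∈ s, g i.succ < g 0) :
    StrictAntiOn g (insert 0 (s.map (Fin.succEmb n)) : Finset (Fin (n + 1))) := by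
  intro i hi j hj hij
  rcases mem_insert.1 hj with rfl | hj
  · exact absurd hij (Fin.not_lt_zero i)
  rcases mem_insert.1 hi with rfl | hi
  · obtain ⟨j, hjs, rfl⟩ := mem_map.1 hj
    exact hlt j hjs
  · exact strictAntiOn_map_succ hs hi hj hij

lemma exists_strictAntiOn_card_eq_decLenBelow {n : ℕ} (g : Fin n → ℕ) (x : ℕ) :
    ∃ s : Finset (Fin n), StrictAntiOn g s ∧ (∀ i ∈ s, g i < x) ∧
      #s = decLenBelow (List.ofFn g) x := by
  induction n generalizing x with
  | zero => exact ⟨∅, by simp [decLenBelow, StrictAntiOn]⟩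
  | succ n ih =>
    have htail : ∃ s : Finset (Fin (n + 1)), StrictAntiOn g s ∧ (∀ i ∈ s, g i < x) ∧
        #s = decLenBelow (List.ofFn fun i : Fin n => g i.succ) x := by
      obtain ⟨s, hanti, hlt, hcard⟩ := ih (fun i => g i.succ) x
      exact ⟨s.map (Fin.succEmb n), strictAntiOn_map_succ hanti, by simpa using hlt,
        by rw [card_map, hcard]⟩
    rw [List.ofFn_succ]
    simp only [decLenBelow]
    split_ifs with hx
    · rcases max_choice (decLenBelow (List.ofFn fun i : Fin n => g i.succ) x)
        (decLenBelow (List.ofFn fun i : Fin n => g i.succ) (g 0) + 1) with hmax | hmax <;> rw [hmax]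
      · exact htail
      · obtain ⟨s, hanti, hlt, hcard⟩ := ih (fun i => g i.succ) (g 0)
        refine ⟨insert 0 (s.map (Fin.succEmb n)), strictAntiOn_insert_zero_map_succ hanti hlt,
          ?_, ?_⟩
        · simpa [hx] using fun i hi => (hlt i hi).trans hx
        · rw [card_insert_of_notMem (by simp), card_map, hcard]
    · exact htail

end DecreasingSublists

section LisLen

variable {n : ℕ} (σ : Equiv.Perm (Fin n))

lemma lisLen_le_iff (k : ℕ) :
    lisLen σ ≤ k ↔
      ∀ s : Finset (Fin n), StrictMonoOn (fun i => σ i) (s : Set (Fin n)) → #s ≤ k := by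
  rw [lisLen, Finset.sup_le_iff]
  refine ⟨fun h s hs => by simpa [hs] using h s (mem_univ s), fun h s _ => ?_⟩
  split_ifs with hs
  · exact h s hs
  · exact Nat.zero_le _

variable {σ} in
lemma card_le_lisLen {s : Finset (Fin n)} (hs : StrictMonoOn (fun i => σ i) (s : Set (Fin n))) :
    #s ≤ lisLen σ :=
  (lisLen_le_iff σ _).1 le_rfl s hs

lemma exists_strictMonoOn_card_eq_lisLen : ∃ s : Finset (Fin n),
    StrictMonoOn (fun i => σ i) (s : Set (Fin n)) ∧ #s = lisLen σ := by
  obtain ⟨s, -, hs⟩ := exists_mem_eq_sup (univ : Finset (Finset (Fin n))) univ_nonempty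
    fun s => if StrictMonoOn (fun i => σ i) (s : Set (Fin n)) then #s else 0
  change lisLen σ = _ at hs
  split_ifs at hs with hmono
  · exact ⟨s, hmono, hs.symm⟩
  · exact ⟨∅, by simp [StrictMonoOn], by simp [hs]⟩

lemma lisLen_le : lisLen σ ≤ n :=
  (lisLen_le_iff σ n).2 fun s _ => (card_le_univ s).trans_eq (Fintype.card_fin n)

/-- The values of `σ` in order and complemented, so that increasing subsequences of `σ`
become decreasing sublists. -/
def complList : List ℕ := List.ofFn fun i => n - 1 - (σ i : ℕ)

lemma lisLen_eq_decLenBelow : lisLen σ = decLenBelow (complList σ) n := by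
  apply le_antisymm
  · refine (lisLen_le_iff σ _).2 fun s hs => card_le_decLenBelow_ofFn ?_ ?_
    · intro i hi j hj hij
      have hlt : (σ i : ℕ) < σ j := hs hi hj hij
      have := (σ j).2
      lia
    · intro i _
      have := (σ i).2
      lia
  · obtain ⟨s, hanti, -, hcard⟩ :=
      exists_strictAntiOn_card_eq_decLenBelow (fun i => n - 1 - (σ i : ℕ)) n
    rw [complList, ← hcard]
    refine card_le_lisLen fun i hi j hj hij => Fin.lt_def.2 ?_
    have hlt := hanti hi hj hij
    lia

end LisLen

section Orderings

/-- The lists enumerating the finite set `T` without repetition. -/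
noncomputable def orderings (T : Finset ℕ) : Finset (List ℕ) := T.toList.permutations.toFinset

lemma mem_orderings {T : Finset ℕ} {l : List ℕ} : l ∈ orderings T ↔ (l : Multiset ℕ) = T.val := by
  rw [orderings, List.mem_toFinset, List.mem_permutations, ← Multiset.coe_eq_coe, coe_toList]

lemma card_orderings (T : Finset ℕ) : #(orderings T) = (#T).factorial := by
  rw [orderings, List.toFinset_card_of_nodup (List.nodup_permutations _ T.nodup_toList),
    List.length_permutations, length_toList]

lemma filter_orderings_eq_biUnion {T : Finset ℕ} (hT : T.Nonempty) (p : List ℕ → Prop) :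
    {l ∈ orderings T | p l} =
      T.biUnion fun v => {l ∈ orderings (T.erase v) | p (v :: l)}.image (List.cons v) := by
  ext l
  simp only [mem_filter, mem_biUnion, mem_image, mem_orderings]
  constructor
  · rintro ⟨hl, hp⟩
    cases l with
    | nil => exact absurd (val_eq_zero.1 hl.symm) hT.ne_empty
    | cons v l =>
      have hv : v ∈ T := by rw [← mem_val, ← hl]; simp
      exact ⟨v, hv, l, ⟨by rw [erase_val, ← hl]; simp, hp⟩, rfl⟩
  · rintro ⟨v, hv, l, ⟨hl, hp⟩, rfl⟩
    exact ⟨by rw [← Multiset.cons_coe, hl, erase_val, Multiset.cons_erase hv], hp⟩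

lemma card_filter_orderings {T : Finset ℕ} (hT : T.Nonempty) (p : List ℕ → Prop) :
    #{l ∈ orderings T | p l} = ∑ v ∈ T, #{l ∈ orderings (T.erase v) | p (v :: l)} := by
  rw [filter_orderings_eq_biUnion hT, card_biUnion]
  · exact sum_congr rfl fun v _ => card_image_of_injective _ List.cons_injective
  · intro v _ w _ hvw
    rw [Function.onFun, disjoint_left]
    rintro l hl hl'
    obtain ⟨a, -, rfl⟩ := mem_image.1 hl
    obtain ⟨b, -, hb⟩ := mem_image.1 hl'
    exact hvw (List.cons_eq_cons.1 hb).1.symm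

/-- Every decreasing sublist of `l` with entries below `x i` has length at most `i`, for all
`i ≤ k`. -/
def DecLenBounded (k : ℕ) (x : ℕ → ℕ) (l : List ℕ) : Prop := ∀ i ≤ k, decLenBelow l (x i) ≤ i

lemma decLenBounded_nil (k : ℕ) (x : ℕ → ℕ) : DecLenBounded k x [] := fun _ _ => Nat.zero_le _

variable {k : ℕ} {x : ℕ → ℕ}

lemma not_decLenBounded_cons {v : ℕ} (hv : v < x 0) (l : List ℕ) :
    ¬ DecLenBounded k x (v :: l) := by
  intro h
  simpa [decLenBelow, hv] using h 0 (Nat.zero_le k)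

/-- Prepending `v` uses up the slack of the interval `[x i, x (i + 1))` containing it. -/
lemma decLenBounded_cons_iff (hx : MonotoneOn x (Set.Iic k)) {i v : ℕ} (hi : i < k)
    (hiv : x i ≤ v) (hvi : v < x (i + 1)) (l : List ℕ) :
    DecLenBounded k x (v :: l) ↔ DecLenBounded k (Function.update x i v) l := by
  constructor <;> intro h j hj <;> rcases eq_or_ne j i with rfl | hji
  · have hsucc := h (j + 1) hi
    simp only [decLenBelow, hvi, if_true] at hsucc
    rw [Function.update_self]
    lia
  · have hcons := h j hj
    rw [Function.update_of_ne hji]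
    simp only [decLenBelow] at hcons
    split_ifs at hcons <;> lia
  · have hself := h j hj
    rw [Function.update_self] at hself
    have hmono := decLenBelow_mono l hiv
    simp only [decLenBelow, hiv.not_gt, if_false]
    lia
  · have hself := h i hi.le
    have hother := h j hj
    rw [Function.update_self] at hself
    rw [Function.update_of_ne hji] at hother
    simp only [decLenBelow]
    split_ifs with hvj
    · have hij : i < j := by
        by_contra hle
        have := hx hj hi.le (not_lt.1 hle)
        lia
      lia
    · exact hother

lemma exists_interval_of_lt (hx : MonotoneOn x (Set.Iic k)) {v : ℕ} (h0 : x 0 ≤ v)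
    (hk : v < x k) : ∃ i, {a ∈ range k | x a ≤ v ∧ v < x (a + 1)} = {i} := by
  have hex : ∃ j, v < x j := ⟨k, hk⟩
  obtain ⟨i, hi⟩ : ∃ i, Nat.find hex = i + 1 :=
    Nat.exists_eq_succ_of_ne_zero fun h => h0.not_gt (h ▸ Nat.find_spec hex)
  have hvi : v < x (i + 1) := hi ▸ Nat.find_spec hex
  have hiv : ¬ v < x i := Nat.find_min hex (by lia)
  have hik : i + 1 ≤ k := hi ▸ Nat.find_min' hex hk
  refine ⟨i, ext fun a => ?_⟩
  simp only [mem_filter, mem_range, mem_singleton]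
  refine ⟨fun _ => ?_, by rintro rfl; lia⟩
  rcases lt_trichotomy a i with hlt | heq | hgt
  · have := hx (by simp; lia) (by simp; lia) (show a + 1 ≤ i from hlt)
    lia
  · exact heq
  · have := hx hik (by simp; lia) (show i + 1 ≤ a from hgt)
    lia

lemma card_decLenBounded_rec {T : Finset ℕ} (hT : T.Nonempty) (hx : MonotoneOn x (Set.Iic k))
    (hk : ∀ t ∈ T, t < x k) :
    #{l ∈ orderings T | DecLenBounded k x l} =
      ∑ i ∈ range k, ∑ v ∈ T with x i ≤ v ∧ v < x (i + 1),
        #{l ∈ orderings (T.erase v) | DecLenBounded k (Function.update x i v) l} := by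
  rw [card_filter_orderings hT]
  simp_rw [sum_filter]
  rw [sum_comm]
  refine sum_congr rfl fun v hv => ?_
  rw [← sum_filter]
  rcases lt_or_ge v (x 0) with h0 | h0
  · rw [sum_eq_zero, card_eq_zero, filter_eq_empty_iff]
    · exact fun l _ => not_decLenBounded_cons h0 l
    · intro i hi
      simp only [mem_filter, mem_range] at hi
      have := hx (Nat.zero_le k) hi.1.le (Nat.zero_le i)
      lia
  · obtain ⟨i, hi⟩ := exists_interval_of_lt hx h0 (hk v hv)
    have hmem : i ∈ {a ∈ range k | x a ≤ v ∧ v < x (a + 1)} := hi ▸ mem_singleton_self i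
    simp only [mem_filter, mem_range] at hmem
    rw [hi, sum_singleton]
    congr 1
    exact filter_congr fun l _ => decLenBounded_cons_iff hx hmem.1 hmem.2.1 hmem.2.2 l

lemma detFunctional_neg_single_thresholdProd {T : Finset ℕ} (hx : MonotoneOn x (Set.Iic k))
    (hk : ∀ t ∈ T, t < x k) {i : ℕ} (hi : i < k) :
    detFunctional k (0 - Pi.single i 1) (thresholdProd k T x) =
      ∑ v ∈ T with x i ≤ v ∧ v < x (i + 1),
        detFunctional k 0 (thresholdProd k (T.erase v) (Function.update x i v)) := by
  rw [detFunctional_sub_single_thresholdProd k hi T x (x (i + 1)), add_eq_right]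
  rcases Nat.lt_or_ge (i + 1) k with hik | hik
  · exact detFunctional_sub_single_thresholdProdSkip hik hik T
      (hx hi.le (by simpa using hik.le) i.le_succ) rfl
  · obtain rfl : k = i + 1 := by lia
    rw [thresholdProdSkip_last hk]
    exact detFunctional_thresholdProd_eq_zero T x fun r' hr' =>
      invFactorialDet_eq_zero_of_neg_one hi (by simp [hr' i le_rfl]) fun h => absurd h (lt_irrefl _)

lemma card_decLenBounded_empty : #{l ∈ orderings ∅ | DecLenBounded k x l} = 1 := by
  refine card_eq_one.2 ⟨[], ext fun l => ?_⟩
  simp only [mem_filter, mem_orderings, empty_val, Multiset.coe_eq_zero, mem_singleton,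
    and_iff_left_iff_imp]
  rintro rfl
  exact decLenBounded_nil k x

/-- Both sides satisfy the same recursion in `T`: the head of the list on the left, Euler's
identity `add_sum_mul_detFunctional_thresholdProd` on the right. -/
theorem card_decLenBounded_eq_detFunctional {T : Finset ℕ} (hx : MonotoneOn x (Set.Iic k))
    (hk : ∀ t ∈ T, t < x k) :
    (#{l ∈ orderings T | DecLenBounded k x l} : ℝ) =
      ((#T).factorial : ℝ) * detFunctional k 0 (thresholdProd k T x) := by
  induction hn : #T generalizing T x with
  | zero =>
    obtain rfl := card_eq_zero.1 hn
    rw [card_decLenBounded_empty, thresholdProd_empty, detFunctional_one, invFactorialDet_zero]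
    simp
  | succ n ih =>
    have heuler := add_sum_mul_detFunctional_thresholdProd le_rfl T x (k := k) 0
    simp only [Pi.zero_apply, Int.cast_zero, sum_const_zero, add_zero, hn] at heuler
    rw [card_decLenBounded_rec (card_pos.1 (by lia)) hx hk, Nat.factorial_succ]
    push_cast at heuler ⊢
    rw [mul_comm ((n : ℝ) + 1), mul_assoc, heuler, mul_sum]
    refine sum_congr rfl fun i hi => ?_
    rw [mem_range] at hi
    rw [detFunctional_neg_single_thresholdProd hx hk hi, mul_sum]
    refine sum_congr rfl fun v hv => ?_
    obtain ⟨hvT, hiv, hvi⟩ := mem_filter.1 hv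
    refine ih (monotoneOn_update hx hi.le hiv fun j hj hij => ?_) (fun t ht => ?_)
      (by rw [card_erase_of_mem hvT, hn, Nat.add_sub_cancel])
    · exact hvi.le.trans (hx (by simp; lia) hj hij)
    · rw [Function.update_of_ne (by lia)]
      exact hk t (mem_of_mem_erase ht)

end Orderings

section Gessel

lemma complList_injective {n : ℕ} : Function.Injective (complList (n := n)) := by
  intro σ τ h
  ext i
  have hi := congrFun (List.ofFn_injective h) i
  have := (σ i).2
  have := (τ i).2
  lia

lemma image_complList (n : ℕ) : univ.image (complList (n := n)) = orderings (range n) := by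
  apply eq_of_subset_of_card_le
  · intro l hl
    obtain ⟨σ, -, rfl⟩ := mem_image.1 hl
    refine mem_orderings.2 (Multiset.eq_of_le_of_card_le ?_ ?_).symm
    · rw [Multiset.le_iff_subset (range n).nodup]
      intro t ht
      have htn : t < n := by simpa using ht
      rw [Multiset.mem_coe, complList, List.mem_ofFn]
      exact ⟨σ.symm ⟨n - 1 - t, by lia⟩, by simp; lia⟩
    · simp [complList]
  · rw [card_orderings, card_image_of_injective _ complList_injective]
    simp [Fintype.card_perm]

/-- The number of permutations of `Fin n` without increasing subsequence longer than `k`. -/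
noncomputable def cardLisLE (k n : ℕ) : ℕ := #{σ : Equiv.Perm (Fin n) | lisLen σ ≤ k}

lemma cardLisLE_eq_card_decLenBounded (k n : ℕ) :
    cardLisLE k n =
      #{l ∈ orderings (range n) | DecLenBounded k (fun i => if i < k then 0 else n) l} := by
  rw [← image_complList, filter_image, card_image_of_injective _ complList_injective, cardLisLE]
  congr 1
  refine filter_congr fun σ _ => ?_
  rw [lisLen_eq_decLenBelow]
  refine ⟨fun h i hi => ?_, fun h => by simpa using h k le_rfl⟩
  rcases hi.lt_or_eq with hik | rfl
  · dsimp only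
    rw [if_pos hik, decLenBelow_zero]
    exact Nat.zero_le i
  · simpa using h

theorem cardLisLE_eq_detFunctional (k n : ℕ) :
    (cardLisLE k n : ℝ) =
      (n.factorial : ℝ) * detFunctional k 0 ((∑ i ∈ range k, MvPolynomial.X i) ^ n) := by
  have hprod : thresholdProd k (range n) (fun i => if i < k then 0 else n) =
      (∑ i ∈ range k, MvPolynomial.X i) ^ n := by
    rw [thresholdProd, prod_congr rfl (g := fun _ => ∑ i ∈ range k, MvPolynomial.X i)]
    · simp
    · exact fun t _ => sum_congr (filter_true_of_mem fun i hi => by simp_all) fun _ _ => rfl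
  rw [cardLisLE_eq_card_decLenBounded, card_decLenBounded_eq_detFunctional, hprod, card_range]
  · intro i _ j _ hij
    dsimp only
    split_ifs <;> lia
  · simp

lemma detFunctional_indicatorLT_sum_X_pow_nonneg (k n : ℕ) :
    0 ≤ detFunctional k (indicatorLT k) ((∑ i ∈ range k, MvPolynomial.X i) ^ n) := by
  have hnonneg := detFunctional_indicatorLT_thresholdProd_nonneg le_rfl (range n)
    (monotoneOn_const (c := 0) (s := Set.Iio k))
  simpa [thresholdProd] using hnonneg

end Gessel

section GesselGeneratingFunction

lemma sum_finsuppAntidiag_eq_sum_piAntidiag {ι M : Type*} [DecidableEq ι] [AddCommMonoid M]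
    (s : Finset ι) (n : ℕ) (f : (ι → ℕ) → M) :
    ∑ m ∈ finsuppAntidiag s n, f m = ∑ m ∈ piAntidiag s n, f m := by
  refine sum_bij (fun m _ => (m : ι → ℕ)) (fun m hm => ?_)
    (fun _ _ _ _ h => DFunLike.coe_injective h) (fun m hm => ?_) fun _ _ => rfl
  · rw [mem_finsuppAntidiag] at hm
    exact mem_piAntidiag.2 ⟨hm.1, fun i hi => hm.2 (Finsupp.mem_support_iff.2 hi)⟩
  · rw [mem_piAntidiag] at hm
    exact ⟨Finsupp.onFinset s m hm.2,
      mem_finsuppAntidiag.2 ⟨hm.1, Finsupp.support_onFinset_subset⟩, rfl⟩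

lemma multinomial_eq_div {ι : Type*} {s : Finset ι} {n : ℕ} {m : ι → ℕ} (hm : s.sum m = n) :
    (Nat.multinomial s m : ℝ) = (n.factorial : ℝ) / ∏ i ∈ s, ((m i).factorial : ℝ) := by
  rw [eq_div_iff (prod_ne_zero_iff.2 fun i _ => Nat.cast_ne_zero.2 (Nat.factorial_ne_zero _)),
    mul_comm]
  exact_mod_cast hm ▸ Nat.multinomial_spec s m

lemma detFunctional_sum_X_pow (k n : ℕ) (r : ℕ → ℤ) :
    detFunctional k r ((∑ i ∈ range k, MvPolynomial.X i) ^ n) =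
      ∑ m ∈ finsuppAntidiag (range k) n,
        (n.factorial : ℝ) / (∏ i ∈ range k, ((m i).factorial : ℝ)) *
          invFactorialDet k (fun i => (m i : ℤ) + r i) := by
  rw [sum_pow_eq_sum_piAntidiag, ← sum_finsuppAntidiag_eq_sum_piAntidiag (range k) n fun m =>
    (Nat.multinomial (range k) m : MvPolynomial ℕ ℝ) * ∏ i ∈ range k, MvPolynomial.X i ^ m i,
    map_sum]
  refine sum_congr rfl fun m hm => ?_
  rw [mem_finsuppAntidiag] at hm
  have hmonomial : ∏ i ∈ range k, (MvPolynomial.X i : MvPolynomial ℕ ℝ) ^ m i =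
      MvPolynomial.monomial m 1 := by
    rw [MvPolynomial.monomial_eq, MvPolynomial.C_1, one_mul,
      Finsupp.prod_of_support_subset _ hm.2 _ fun _ _ => pow_zero _]
  rw [hmonomial, ← nsmul_eq_mul, map_nsmul, detFunctional_monomial, nsmul_eq_mul,
    multinomial_eq_div hm.1]

/-- The power series `∑ t ^ m / (m! (m + r)!)`, where `1 / (m + r)! = 0` if `m + r < 0`. -/
noncomputable def besselSeries (r : ℤ) : PowerSeries ℝ :=
  PowerSeries.mk fun m => invFactorial ((m : ℤ) + r) / (m.factorial : ℝ)

lemma coeff_prod_besselSeries {k : ℕ} (n : ℕ) (r : Fin k → ℤ) :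
    PowerSeries.coeff n (∏ i, besselSeries (r i)) =
      ∑ m ∈ finsuppAntidiag (range k) n,
        ∏ i : Fin k, (invFactorial ((m i : ℤ) + r i) / ((m i).factorial : ℝ)) := by
  have hprod : ∏ i, besselSeries (r i) =
      ∏ i ∈ range k, if h : i < k then besselSeries (r ⟨i, h⟩) else 1 := by
    simp [prod_range]
  rw [hprod, PowerSeries.coeff_prod]
  simp [prod_range, besselSeries]

lemma coeff_det_besselSeries (k n : ℕ) {r : ℤ} {ρ : ℕ → ℤ} (hρ : ∀ i < k, ρ i = r) :
    PowerSeries.coeff n (Matrix.of fun i j : Fin k => besselSeries ((j : ℤ) - i + r)).det =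
      detFunctional k ρ ((∑ i ∈ range k, MvPolynomial.X i) ^ n) / (n.factorial : ℝ) := by
  have hn : (n.factorial : ℝ) ≠ 0 := Nat.cast_ne_zero.2 (Nat.factorial_ne_zero _)
  have hsign : ∀ σ : Equiv.Perm (Fin k), ((Equiv.Perm.sign σ : ℤ) : PowerSeries ℝ) =
      PowerSeries.C ((Equiv.Perm.sign σ : ℤ) : ℝ) := by simp
  rw [detFunctional_sum_X_pow, ← Matrix.det_transpose, Matrix.det_apply', map_sum, sum_div]
  simp only [Matrix.transpose_apply, Matrix.of_apply, hsign, PowerSeries.coeff_C_mul,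
    coeff_prod_besselSeries, mul_sum]
  rw [sum_comm]
  refine sum_congr rfl fun m _ => ?_
  rw [invFactorialDet, ← Matrix.det_transpose, Matrix.det_apply', mul_sum, sum_div]
  refine sum_congr rfl fun σ _ => ?_
  simp only [Matrix.transpose_apply, Matrix.of_apply]
  have hentry : ∀ i : Fin k, (m i : ℤ) + ρ i + (σ i : ℕ) - (i : ℕ) =
      (m i : ℤ) + ((σ i : ℕ) - (i : ℕ) + r) := fun i => by rw [hρ i i.2]; ring
  simp only [hentry, prod_div_distrib, prod_range]
  field_simp

end GesselGeneratingFunction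

section AbsolutelySummablePowerSeries

variable {R : Type*} [NormedCommRing R]

lemma coeff_mul_mul_pow (p q : PowerSeries R) (t : R) (n : ℕ) :
    PowerSeries.coeff n (p * q) * t ^ n =
      ∑ x ∈ antidiagonal n, PowerSeries.coeff x.1 p * t ^ x.1 *
        (PowerSeries.coeff x.2 q * t ^ x.2) := by
  rw [PowerSeries.coeff_mul, sum_mul]
  refine sum_congr rfl fun x hx => ?_
  rw [← mem_antidiagonal.1 hx, pow_add]
  ring

/-- The ring of power series that converge absolutely at `t`. -/
def absSummableAt (t : R) : Subring (PowerSeries R) where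
  carrier := {p | Summable fun n => ‖PowerSeries.coeff n p * t ^ n‖}
  zero_mem' := by simp [summable_zero]
  one_mem' := summable_of_ne_finset_zero (s := {0}) fun n hn => by
    simp [PowerSeries.coeff_one, mem_singleton.not.1 hn]
  add_mem' hp hq := .of_nonneg_of_le (fun _ => norm_nonneg _)
    (fun n => by rw [map_add, add_mul]; exact norm_add_le _ _) (hp.add hq)
  neg_mem' hp := by simpa using hp
  mul_mem' hp hq := (summable_norm_sum_mul_antidiagonal_of_summable_norm hp hq).congr fun n => by
    rw [coeff_mul_mul_pow]

/-- Evaluation at `t` of the power series that converge absolutely there. -/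
noncomputable def evalAt [CompleteSpace R] (t : R) : absSummableAt t →+* R where
  toFun p := ∑' n, PowerSeries.coeff n (p : PowerSeries R) * t ^ n
  map_one' := by
    rw [tsum_eq_single 0 fun n hn => by simp [PowerSeries.coeff_one, hn]]
    simp
  map_zero' := by simp
  map_add' p q := by
    rw [← (Summable.of_norm p.2).tsum_add (.of_norm q.2)]
    simp [add_mul]
  map_mul' p q := by
    rw [tsum_mul_tsum_eq_tsum_sum_antidiagonal_of_summable_norm p.2 q.2]
    exact tsum_congr fun n => coeff_mul_mul_pow _ _ t n

end AbsolutelySummablePowerSeries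

section BesselSum

lemma besselSeries_mem_absSummableAt (t : ℝ) (r : ℤ) : besselSeries r ∈ absSummableAt t := by
  refine .of_nonneg_of_le (fun _ => norm_nonneg _) (fun n => ?_)
    (NormedSpace.norm_expSeries_div_summable (𝔸 := ℝ) t)
  rw [besselSeries, PowerSeries.coeff_mk, norm_mul, norm_div, norm_div,
    Real.norm_of_nonneg (invFactorial_nonneg _), div_mul_eq_mul_div]
  gcongr
  exact mul_le_of_le_one_left (norm_nonneg _) (invFactorial_le_one _)

/-- The value of `besselSeries r` at `t`. -/
noncomputable def besselSum (t : ℝ) (r : ℤ) : ℝ :=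
  ∑' m : ℕ, invFactorial ((m : ℤ) + r) / (m.factorial : ℝ) * t ^ m

lemma summable_besselSum (t : ℝ) (r : ℤ) :
    Summable fun m : ℕ => invFactorial ((m : ℤ) + r) / (m.factorial : ℝ) * t ^ m := by
  simpa [besselSeries] using Summable.of_norm (besselSeries_mem_absSummableAt t r)

lemma hasSum_det_besselSum (k : ℕ) (t : ℝ) {r : ℤ} {ρ : ℕ → ℤ} (hρ : ∀ i < k, ρ i = r) :
    HasSum (fun n => detFunctional k ρ ((∑ i ∈ range k, MvPolynomial.X i) ^ n) /
        (n.factorial : ℝ) * t ^ n)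
      (Matrix.of fun i j : Fin k => besselSum t ((j : ℤ) - i + r)).det := by
  set M : Matrix (Fin k) (Fin k) (absSummableAt t) := .of fun i j =>
    ⟨besselSeries ((j : ℤ) - i + r), besselSeries_mem_absSummableAt t _⟩ with hM
  have hcoe : (M.det : PowerSeries ℝ) =
      (Matrix.of fun i j : Fin k => besselSeries ((j : ℤ) - i + r)).det :=
    (absSummableAt t).subtype.map_det M
  have heval : evalAt t M.det =
      (Matrix.of fun i j : Fin k => besselSum t ((j : ℤ) - i + r)).det := by
    rw [RingHom.map_det]
    congr 1
    ext i j
    simp [hM, evalAt, besselSum, besselSeries]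
  simp_rw [← heval, ← coeff_det_besselSeries k _ hρ, ← hcoe]
  exact (Summable.of_norm M.det.2).hasSum

lemma hasSum_mul_besselSum_succ (t : ℝ) (r : ℤ) :
    HasSum (fun m : ℕ => (m : ℝ) * (invFactorial ((m : ℤ) + r) / (m.factorial : ℝ) * t ^ m))
      (t * besselSum t (r + 1)) := by
  rw [hasSum_nat_add_iff' 1 |>.symm, sum_range_one, Nat.cast_zero, zero_mul, sub_zero]
  refine ((summable_besselSum t (r + 1)).hasSum.mul_left t).congr_fun fun m => ?_
  have hm : (m.factorial : ℝ) ≠ 0 := Nat.cast_ne_zero.2 (Nat.factorial_ne_zero _)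
  rw [Nat.factorial_succ, show ((m + 1 : ℕ) : ℤ) + r = m + (r + 1) by push_cast; ring]
  push_cast
  field_simp
  ring

lemma intCast_mul_besselSum (t : ℝ) (r : ℤ) :
    (r : ℝ) * besselSum t r = besselSum t (r - 1) - t * besselSum t (r + 1) := by
  refine ((summable_besselSum t r).hasSum.mul_left (r : ℝ)).unique
    (((summable_besselSum t (r - 1)).hasSum.sub (hasSum_mul_besselSum_succ t r)).congr_fun
      fun m => ?_)
  rw [show (m : ℤ) + (r - 1) = m + r - 1 by ring, ← intCast_mul_invFactorial]
  push_cast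
  ring

lemma besselSum_neg_natCast (t : ℝ) (r : ℕ) :
    besselSum t (-(r : ℤ)) = t ^ r * besselSum t r := by
  rw [besselSum, ← (summable_besselSum t (-(r : ℤ))).sum_add_tsum_nat_add r, sum_eq_zero,
    zero_add, besselSum, ← tsum_mul_left]
  · refine tsum_congr fun m => ?_
    rw [show ((m + r : ℕ) : ℤ) + -(r : ℤ) = m by push_cast; ring,
      show (m : ℤ) + (r : ℤ) = (m + r : ℕ) by push_cast; ring, invFactorial_natCast,
      invFactorial_natCast, pow_add]
    ring
  · intro m hm
    rw [mem_range] at hm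
    rw [invFactorial_of_neg (by lia), zero_div, zero_mul]

end BesselSum

section ToeplitzDeterminants

/-- The Fourier coefficients of the symbol `exp (s (z + z⁻¹))`, that is, the modified Bessel
functions `I_r (2 s)`. -/
noncomputable def toeplitzCoeff (s : ℝ) (r : ℤ) : ℝ := s ^ r * besselSum (s ^ 2) r

/-- The `k × k` Toeplitz determinant of the symbol `z⁻ʳ exp (s (z + z⁻¹))`. -/
noncomputable def toeplitzDet (s : ℝ) (r : ℤ) (k : ℕ) : ℝ :=
  (Matrix.of fun i j : Fin k => toeplitzCoeff s ((j : ℤ) - i + r)).det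

variable {s : ℝ}

lemma toeplitzCoeff_neg (hs : 0 < s) (r : ℤ) : toeplitzCoeff s (-r) = toeplitzCoeff s r := by
  have hnat : ∀ r : ℕ, toeplitzCoeff s (-(r : ℤ)) = toeplitzCoeff s r := by
    intro r
    rw [toeplitzCoeff, toeplitzCoeff, besselSum_neg_natCast, zpow_neg, zpow_natCast, ← pow_mul,
      two_mul, pow_add]
    field_simp
  obtain ⟨m, rfl | rfl⟩ := r.eq_nat_or_neg
  · exact hnat m
  · rw [neg_neg, hnat]

lemma intCast_mul_toeplitzCoeff (hs : 0 < s) (r : ℤ) :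
    (r : ℝ) * toeplitzCoeff s r = s * (toeplitzCoeff s (r - 1) - toeplitzCoeff s (r + 1)) := by
  rw [toeplitzCoeff, mul_left_comm, intCast_mul_besselSum, toeplitzCoeff, toeplitzCoeff,
    zpow_sub_one₀ hs.ne', zpow_add_one₀ hs.ne']
  field_simp

lemma toeplitzDet_eq_zpow_mul (hs : 0 < s) (r : ℤ) (k : ℕ) :
    toeplitzDet s r k =
      s ^ (r * k) * (Matrix.of fun i j : Fin k => besselSum (s ^ 2) ((j : ℤ) - i + r)).det := by
  have hscale : (Matrix.of fun i j : Fin k => toeplitzCoeff s ((j : ℤ) - i + r)) =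
      Matrix.of fun i j : Fin k => s ^ (-(i : ℤ)) *
        (Matrix.of fun i j : Fin k => s ^ ((j : ℤ) + r) *
          (Matrix.of fun i j : Fin k => besselSum (s ^ 2) ((j : ℤ) - i + r)) i j) i j := by
    ext i j
    simp only [Matrix.of_apply, toeplitzCoeff]
    rw [← mul_assoc, ← zpow_add₀ hs.ne']
    congr 2
    ring
  rw [toeplitzDet, hscale, Matrix.det_mul_column, Matrix.det_mul_row, ← mul_assoc,
    ← prod_mul_distrib]
  congr 1
  simp_rw [← zpow_add₀ hs.ne', neg_add_cancel_left]
  simp [zpow_mul]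

theorem hasSum_toeplitzDet (hs : 0 < s) (k : ℕ) :
    HasSum (fun n : ℕ => (cardLisLE k n : ℝ) / (n.factorial : ℝ) ^ 2 * (s ^ 2) ^ n)
      (toeplitzDet s 0 k) := by
  rw [toeplitzDet_eq_zpow_mul hs, zero_mul, zpow_zero, one_mul]
  refine (hasSum_det_besselSum k (s ^ 2) (ρ := 0) fun _ _ => rfl).congr_fun fun n => ?_
  rw [cardLisLE_eq_detFunctional]
  field_simp

theorem toeplitzDet_one_nonneg (hs : 0 < s) (k : ℕ) : 0 ≤ toeplitzDet s 1 k := by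
  rw [toeplitzDet_eq_zpow_mul hs]
  refine mul_nonneg (by positivity)
    ((hasSum_det_besselSum k (s ^ 2) (ρ := indicatorLT k) fun i hi => by
      simp [indicatorLT, hi]).nonneg fun n => ?_)
  have := detFunctional_indicatorLT_sum_X_pow_nonneg k n
  positivity

end ToeplitzDeterminants

section SzegoPolynomials

open Polynomial

lemma linearMap_ext_X_pow {R M : Type*} [CommSemiring R] [AddCommMonoid M] [Module R M]
    {f g : R[X] →ₗ[R] M} (h : ∀ i : ℕ, f (X ^ i) = g (X ^ i)) : f = g :=
  (basisMonomials R).ext fun i => by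
    simpa only [coe_basisMonomials, monomial_one_right_eq_X_pow] using h i

lemma linearMap_apply_eq_sum_fin {R M : Type*} [CommSemiring R] [AddCommMonoid M] [Module R M]
    (L : R[X] →ₗ[R] M) {f : R[X]} {k : ℕ} (hf : f.natDegree < k) :
    L f = ∑ m : Fin k, f.coeff m • L (X ^ (m : ℕ)) := by
  conv_lhs => rw [f.as_sum_range' k hf, map_sum, sum_range]
  refine sum_congr rfl fun m _ => ?_
  rw [← C_mul_X_pow_eq_monomial, ← smul_eq_C_mul, map_smul]

lemma X_mul_derivative_X_pow {R : Type*} [CommSemiring R] (i : ℕ) :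
    X * derivative (X ^ i : R[X]) = C (i : R) * X ^ i := by
  rw [derivative_X_pow]
  cases i with
  | zero => simp
  | succ i => rw [Nat.add_sub_cancel, pow_succ]; ring

lemma natDegree_X_mul_derivative_sub_le {R : Type*} [CommRing R] {p : R[X]} {k : ℕ}
    (hp : p.natDegree ≤ k + 1) :
    (X * derivative p - C ((k : R) + 1) * p).natDegree ≤ k := by
  refine natDegree_le_iff_coeff_eq_zero.2 fun N hN => ?_
  obtain ⟨N, rfl⟩ : ∃ M, N = M + 1 := ⟨N - 1, by lia⟩
  rw [coeff_sub, coeff_X_mul, coeff_derivative, coeff_C_mul]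
  rcases (Nat.lt_succ_iff.1 hN).eq_or_lt with rfl | hlt
  · ring
  · rw [coeff_eq_zero_of_natDegree_lt (by lia)]
    ring

/-- Integration of `f(z) z⁻ʲ` against the weight `exp (s (z + z⁻¹))` on the unit circle. -/
noncomputable def toeplitzFunctional (s : ℝ) (j : ℤ) : ℝ[X] →ₗ[ℝ] ℝ :=
  (basisMonomials ℝ).constr ℝ fun i : ℕ => toeplitzCoeff s ((i : ℤ) - j)

lemma toeplitzFunctional_X_pow (s : ℝ) (j : ℤ) (i : ℕ) :
    toeplitzFunctional s j (X ^ i) = toeplitzCoeff s ((i : ℤ) - j) := by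
  have hbasis : (X ^ i : ℝ[X]) = basisMonomials ℝ i := by
    rw [coe_basisMonomials]
    exact (monomial_one_right_eq_X_pow i).symm
  rw [hbasis, toeplitzFunctional, Module.Basis.constr_basis]

lemma toeplitzFunctional_X_mul (s : ℝ) (j : ℤ) (f : ℝ[X]) :
    toeplitzFunctional s j (X * f) = toeplitzFunctional s (j - 1) f := by
  refine LinearMap.congr_fun (f := toeplitzFunctional s j ∘ₗ LinearMap.mulLeft ℝ X)
    (linearMap_ext_X_pow fun i => ?_) f
  rw [LinearMap.comp_apply, LinearMap.mulLeft_apply, ← pow_succ', toeplitzFunctional_X_pow,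
    toeplitzFunctional_X_pow]
  congr 1
  push_cast
  ring

lemma toeplitzFunctional_C_mul (s : ℝ) (j : ℤ) (a : ℝ) (f : ℝ[X]) :
    toeplitzFunctional s j (C a * f) = a * toeplitzFunctional s j f := by
  rw [← smul_eq_C_mul, map_smul, smul_eq_mul]

/-- Integration by parts against the weight. -/
lemma toeplitzFunctional_X_mul_derivative {s : ℝ} (hs : 0 < s) (j : ℤ) (f : ℝ[X]) :
    toeplitzFunctional s j (X * derivative f) =
      s * (toeplitzFunctional s (j + 1) f - toeplitzFunctional s (j - 1) f) +
        j * toeplitzFunctional s j f := by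
  refine LinearMap.congr_fun
    (f := toeplitzFunctional s j ∘ₗ LinearMap.mulLeft ℝ X ∘ₗ derivative)
    (g := s • (toeplitzFunctional s (j + 1) - toeplitzFunctional s (j - 1)) +
      (j : ℝ) • toeplitzFunctional s j) (linearMap_ext_X_pow fun i => ?_) f
  simp only [LinearMap.comp_apply, LinearMap.mulLeft_apply, LinearMap.add_apply,
    LinearMap.smul_apply, LinearMap.sub_apply, smul_eq_mul, X_mul_derivative_X_pow,
    toeplitzFunctional_C_mul, toeplitzFunctional_X_pow]
  rw [show (i : ℤ) - (j + 1) = (i : ℤ) - j - 1 by ring,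
    show (i : ℤ) - (j - 1) = (i : ℤ) - j + 1 by ring, ← intCast_mul_toeplitzCoeff hs]
  push_cast
  ring

/-- Szegő's recursion, producing the monic orthogonal polynomial of degree `k`, its reversal and
its squared norm. -/
noncomputable def szegoData (s : ℝ) : ℕ → ℝ[X] × ℝ[X] × ℝ
  | 0 => (1, 1, toeplitzCoeff s 0)
  | k + 1 =>
    let (p, q, N) := szegoData s k
    let a := -toeplitzFunctional s (-1) p / N
    (X * p + C a * q, q + C a * (X * p), N * (1 - a ^ 2))

/-- The monic orthogonal polynomial of degree `k` on the unit circle for the weight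
`exp (s (z + z⁻¹))`. -/
noncomputable def szegoPoly (s : ℝ) (k : ℕ) : ℝ[X] := (szegoData s k).1

/-- The reversed polynomial `zᵏ p(1/z)` of `szegoPoly s k`. -/
noncomputable def szegoPolyRev (s : ℝ) (k : ℕ) : ℝ[X] := (szegoData s k).2.1

/-- The squared norm of `szegoPoly s k`. -/
noncomputable def szegoNormSq (s : ℝ) (k : ℕ) : ℝ := (szegoData s k).2.2

/-- The Verblunsky coefficients, normalized to be the constant coefficients of `szegoPoly`. -/
noncomputable def verblunsky (s : ℝ) : ℕ → ℝ
  | 0 => 1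
  | k + 1 => -toeplitzFunctional s (-1) (szegoPoly s k) / szegoNormSq s k

variable (s : ℝ) (k : ℕ)

lemma szegoPoly_zero : szegoPoly s 0 = X ^ 0 := (pow_zero X).symm

lemma szegoPolyRev_zero : szegoPolyRev s 0 = X ^ 0 := (pow_zero X).symm

lemma szegoPoly_succ :
    szegoPoly s (k + 1) = X * szegoPoly s k + C (verblunsky s (k + 1)) * szegoPolyRev s k := rfl

lemma szegoPolyRev_succ :
    szegoPolyRev s (k + 1) = szegoPolyRev s k + C (verblunsky s (k + 1)) * (X * szegoPoly s k) :=
  rfl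

lemma szegoNormSq_succ :
    szegoNormSq s (k + 1) = szegoNormSq s k * (1 - verblunsky s (k + 1) ^ 2) := rfl

lemma szegoPolyRev_coeff_zero : (szegoPolyRev s k).coeff 0 = 1 := by
  induction k with
  | zero => simp [szegoPolyRev_zero]
  | succ k ih => simp [szegoPolyRev_succ, ih]

lemma szegoPoly_coeff_zero : (szegoPoly s k).coeff 0 = verblunsky s k := by
  cases k with
  | zero => simp [szegoPoly_zero, verblunsky]
  | succ k => simp [szegoPoly_succ, szegoPolyRev_coeff_zero]

lemma natDegree_szegoPoly_le_and_rev :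
    (szegoPoly s k).natDegree ≤ k ∧ (szegoPolyRev s k).natDegree ≤ k := by
  induction k with
  | zero => simp [szegoPoly_zero, szegoPolyRev_zero]
  | succ k ih =>
    have hX : (X * szegoPoly s k).natDegree ≤ k + 1 :=
      natDegree_mul_le.trans (by have := natDegree_X_le (R := ℝ); lia)
    rw [szegoPoly_succ, szegoPolyRev_succ]
    exact ⟨natDegree_add_le_of_degree_le hX ((natDegree_C_mul_le _ _).trans (by lia)),
      natDegree_add_le_of_degree_le (by lia) ((natDegree_C_mul_le _ _).trans hX)⟩

lemma szegoPoly_natDegree_le : (szegoPoly s k).natDegree ≤ k :=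
  (natDegree_szegoPoly_le_and_rev s k).1

lemma szegoPolyRev_natDegree_le : (szegoPolyRev s k).natDegree ≤ k :=
  (natDegree_szegoPoly_le_and_rev s k).2

lemma szegoPoly_coeff_self : (szegoPoly s k).coeff k = 1 := by
  induction k with
  | zero => simp [szegoPoly_zero]
  | succ k ih =>
    rw [szegoPoly_succ, coeff_add, coeff_X_mul, ih, coeff_C_mul,
      coeff_eq_zero_of_natDegree_lt (Nat.lt_succ_of_le (szegoPolyRev_natDegree_le s k))]
    ring

lemma det_szegoPoly_coeff :
    (Matrix.of fun i m : Fin k => (szegoPoly s i).coeff m).det = 1 := by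
  rw [Matrix.det_of_isLowerTriangular]
  · exact prod_eq_one fun i _ => szegoPoly_coeff_self s i
  · exact fun i j hij => coeff_eq_zero_of_natDegree_lt ((szegoPoly_natDegree_le s i).trans_lt hij)

lemma toeplitzDet_eq_det_toeplitzFunctional (r : ℤ) :
    toeplitzDet s r k =
      (Matrix.of fun i j : Fin k => toeplitzFunctional s ((j : ℤ) - r) (szegoPoly s i)).det := by
  have hmul : (Matrix.of fun i j : Fin k => toeplitzFunctional s ((j : ℤ) - r) (szegoPoly s i)) =
      (Matrix.of fun i m : Fin k => (szegoPoly s i).coeff m) *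
        Matrix.of fun i j : Fin k => toeplitzCoeff s ((i : ℤ) - j + r) := by
    ext i j
    rw [Matrix.mul_apply, Matrix.of_apply,
      linearMap_apply_eq_sum_fin _ ((szegoPoly_natDegree_le s i).trans_lt i.2)]
    refine sum_congr rfl fun m _ => ?_
    rw [toeplitzFunctional_X_pow, smul_eq_mul, Matrix.of_apply, Matrix.of_apply]
    congr 2
    ring
  rw [hmul, Matrix.det_mul, det_szegoPoly_coeff, one_mul, toeplitzDet, ← Matrix.det_transpose]
  rfl

/-- The properties that Szegő's recursion propagates: `szegoPolyRev` is the reversal of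
`szegoPoly`, which is orthogonal to lower powers and has squared norm `szegoNormSq`. -/
structure SzegoOrthogonal (s : ℝ) (k : ℕ) : Prop where
  rev : ∀ j : ℤ, toeplitzFunctional s j (szegoPolyRev s k) =
    toeplitzFunctional s (k - j) (szegoPoly s k)
  orthogonal : ∀ j : ℤ, 0 ≤ j → j < k → toeplitzFunctional s j (szegoPoly s k) = 0
  normSq : toeplitzFunctional s k (szegoPoly s k) = szegoNormSq s k

variable {s k}

lemma SzegoOrthogonal.toeplitzFunctional_eq_ite (h : SzegoOrthogonal s k) {j : ℤ} (hj : 0 ≤ j)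
    (hjk : j ≤ k) :
    toeplitzFunctional s j (szegoPoly s k) = if j = k then szegoNormSq s k else 0 := by
  split_ifs with hj'
  · rw [hj', h.normSq]
  · exact h.orthogonal j hj (by lia)

lemma SzegoOrthogonal.toeplitzFunctional_szegoPoly_succ (h : SzegoOrthogonal s k) (j : ℤ) :
    toeplitzFunctional s j (szegoPoly s (k + 1)) = toeplitzFunctional s (j - 1) (szegoPoly s k) +
      verblunsky s (k + 1) * toeplitzFunctional s (k - j) (szegoPoly s k) := by
  rw [szegoPoly_succ, map_add, toeplitzFunctional_X_mul, toeplitzFunctional_C_mul, h.rev]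

lemma toeplitzFunctional_neg_one_szegoPoly (hN : szegoNormSq s k ≠ 0) :
    toeplitzFunctional s (-1) (szegoPoly s k) = -verblunsky s (k + 1) * szegoNormSq s k := by
  rw [verblunsky]
  field_simp

lemma szegoOrthogonal_zero (hs : 0 < s) : SzegoOrthogonal s 0 where
  rev j := by
    rw [szegoPoly_zero, szegoPolyRev_zero, toeplitzFunctional_X_pow, toeplitzFunctional_X_pow,
      ← toeplitzCoeff_neg hs]
    congr 1
    push_cast
    ring
  orthogonal j hj hj' := by
    push_cast at hj'
    lia
  normSq := by
    rw [szegoPoly_zero, toeplitzFunctional_X_pow]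
    simp [szegoNormSq, szegoData]

lemma SzegoOrthogonal.succ (h : SzegoOrthogonal s k) (hN : szegoNormSq s k ≠ 0) :
    SzegoOrthogonal s (k + 1) where
  rev j := by
    rw [h.toeplitzFunctional_szegoPoly_succ, szegoPolyRev_succ, map_add, toeplitzFunctional_C_mul,
      toeplitzFunctional_X_mul, h.rev]
    push_cast
    rw [show (k : ℤ) + 1 - j - 1 = k - j by ring, show (k : ℤ) - (k + 1 - j) = j - 1 by ring]
  orthogonal j hj hjk := by
    push_cast at hjk
    rw [h.toeplitzFunctional_szegoPoly_succ]
    rcases hj.eq_or_lt with rfl | hj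
    · rw [zero_sub, toeplitzFunctional_neg_one_szegoPoly hN, sub_zero, h.normSq]
      ring
    · rw [h.orthogonal (j - 1) (by lia) (by lia), h.orthogonal (k - j) (by lia) (by lia)]
      ring
  normSq := by
    rw [h.toeplitzFunctional_szegoPoly_succ, szegoNormSq_succ]
    push_cast
    rw [show (k : ℤ) + 1 - 1 = k by ring, show (k : ℤ) - (k + 1) = -1 by ring,
      toeplitzFunctional_neg_one_szegoPoly hN, h.normSq]
    ring

lemma toeplitzDet_eq_prod (h : ∀ i < k, SzegoOrthogonal s i) :
    toeplitzDet s 0 k = ∏ i ∈ range k, szegoNormSq s i := by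
  rw [toeplitzDet_eq_det_toeplitzFunctional, Matrix.det_of_isUpperTriangular, prod_range]
  · exact prod_congr rfl fun i _ => by simpa using (h i i.2).normSq
  · intro i j hij
    simpa using (h i i.2).orthogonal j (by lia) (by exact_mod_cast (show j < i from hij))

lemma cardLisLE_zero_right (k : ℕ) : cardLisLE k 0 = 1 := by
  rw [cardLisLE, filter_true_of_mem fun σ _ => (lisLen_le σ).trans (Nat.zero_le k)]
  simp

lemma one_le_toeplitzDet (hs : 0 < s) (k : ℕ) : 1 ≤ toeplitzDet s 0 k := by
  simpa [cardLisLE_zero_right] using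
    sum_le_hasSum {0} (fun n _ => by positivity) (hasSum_toeplitzDet hs k)

lemma szegoNormSq_ne_zero_of_forall_le (hs : 0 < s) (h : ∀ i ≤ k, SzegoOrthogonal s i) :
    szegoNormSq s k ≠ 0 := by
  have hdet := one_le_toeplitzDet hs (k + 1)
  rw [toeplitzDet_eq_prod fun i hi => h i (by lia), prod_range_succ] at hdet
  rintro h0
  rw [h0, mul_zero] at hdet
  linarith

lemma szegoOrthogonal (hs : 0 < s) (k : ℕ) : SzegoOrthogonal s k := by
  induction k using Nat.strong_induction_on with
  | _ k ih =>
    cases k with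
    | zero => exact szegoOrthogonal_zero hs
    | succ k =>
      exact (ih k k.lt_succ_self).succ
        (szegoNormSq_ne_zero_of_forall_le hs fun i hi => ih i (by lia))

lemma szegoNormSq_ne_zero (hs : 0 < s) (k : ℕ) : szegoNormSq s k ≠ 0 :=
  szegoNormSq_ne_zero_of_forall_le hs fun i _ => szegoOrthogonal hs i

lemma toeplitzDet_succ (hs : 0 < s) (k : ℕ) :
    toeplitzDet s 0 (k + 1) = toeplitzDet s 0 k * szegoNormSq s k := by
  rw [toeplitzDet_eq_prod fun i _ => szegoOrthogonal hs i,
    toeplitzDet_eq_prod fun i _ => szegoOrthogonal hs i, prod_range_succ]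

lemma szegoNormSq_pos (hs : 0 < s) (k : ℕ) : 0 < szegoNormSq s k := by
  have hprod := one_le_toeplitzDet hs (k + 1)
  rw [toeplitzDet_succ hs] at hprod
  have hdet := one_le_toeplitzDet hs k
  exact pos_of_mul_pos_right (zero_lt_one.trans_le hprod) (zero_le_one.trans hdet)

lemma toeplitzDet_one_eq (hs : 0 < s) (k : ℕ) :
    toeplitzDet s 1 (k + 1) = (-1) ^ (k + 1) * verblunsky s (k + 1) * toeplitzDet s 0 (k + 1) := by
  rw [toeplitzDet_eq_det_toeplitzFunctional, Matrix.det_succ_row _ (Fin.last k), sum_eq_single 0]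
  · have hminor : (Matrix.of fun i j : Fin (k + 1) =>
        toeplitzFunctional s ((j : ℤ) - 1) (szegoPoly s i)).submatrix
          (Fin.last k).succAbove (Fin.succAbove 0) =
        Matrix.of fun i j : Fin k => toeplitzFunctional s ((j : ℤ) - 0) (szegoPoly s i) := by
      ext i j
      simp
    rw [hminor, ← toeplitzDet_eq_det_toeplitzFunctional, toeplitzDet_succ hs]
    simp only [Matrix.of_apply, Fin.val_last, Fin.val_zero, Nat.cast_zero, zero_sub, add_zero,
      toeplitzFunctional_neg_one_szegoPoly (szegoNormSq_ne_zero hs k)]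
    ring
  · intro j _ hj
    have := Fin.val_ne_zero_iff.2 hj
    simp [(szegoOrthogonal hs k).orthogonal ((j : ℤ) - 1) (by lia) (by lia)]
  · simp

lemma eq_zero_of_toeplitzFunctional_eq_zero (hs : 0 < s) {f : ℝ[X]} (hf : f.natDegree < k)
    (h : ∀ j < k, toeplitzFunctional s j f = 0) : f = 0 := by
  have hvec : Matrix.vecMul (fun m : Fin k => f.coeff m)
      (Matrix.of fun i j : Fin k => toeplitzCoeff s ((j : ℤ) - i + 0)).transpose = 0 := by
    ext j
    rw [Pi.zero_apply, ← h j j.2, linearMap_apply_eq_sum_fin _ hf]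
    simp [Matrix.vecMul, dotProduct, toeplitzFunctional_X_pow]
  have hdet :
      (Matrix.of fun i j : Fin k => toeplitzCoeff s ((j : ℤ) - i + 0)).transpose.det ≠ 0 := by
    rw [Matrix.det_transpose]
    exact (zero_lt_one.trans_le (one_le_toeplitzDet hs k)).ne'
  have hcoeff := Matrix.eq_zero_of_vecMul_eq_zero hdet hvec
  ext m
  rcases lt_or_ge m k with hm | hm
  · exact congrFun hcoeff ⟨m, hm⟩
  · exact coeff_eq_zero_of_natDegree_lt (hf.trans_le hm)

/-- The difference of both sides has degree at most `k` and is orthogonal to `1, z, …, zᵏ`. -/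
lemma X_mul_derivative_szegoPoly (hs : 0 < s) (k : ℕ) :
    X * derivative (szegoPoly s (k + 1)) = C ((k : ℝ) + 1) * szegoPoly s (k + 1) +
      C (s * (1 - verblunsky s (k + 1) ^ 2)) *
        (szegoPoly s k + C (verblunsky s (k + 2)) * szegoPolyRev s k) := by
  rw [← sub_eq_zero, ← sub_sub]
  refine eq_zero_of_toeplitzFunctional_eq_zero hs (k := k + 1) (Nat.lt_succ_of_le ?_) ?_
  · exact (natDegree_sub_le_of_le
      (natDegree_X_mul_derivative_sub_le (szegoPoly_natDegree_le s (k + 1)))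
      ((natDegree_C_mul_le _ _).trans (natDegree_add_le_of_degree_le (szegoPoly_natDegree_le s k)
        ((natDegree_C_mul_le _ _).trans (szegoPolyRev_natDegree_le s k))))).trans
      (max_self k).le
  · intro j hj
    have hk := szegoOrthogonal hs k
    have hk' := szegoOrthogonal hs (k + 1)
    have hpred : toeplitzFunctional s ((j : ℤ) - 1) (szegoPoly s (k + 1)) =
        if (k : ℤ) - j = k then -verblunsky s (k + 2) * szegoNormSq s (k + 1) else 0 := by
      split_ifs with h
      · rw [show (j : ℤ) - 1 = -1 by lia,
          toeplitzFunctional_neg_one_szegoPoly (szegoNormSq_ne_zero hs (k + 1))]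
      · exact hk'.orthogonal _ (by lia) (by push_cast; lia)
    rw [map_sub, map_sub, toeplitzFunctional_X_mul_derivative hs, toeplitzFunctional_C_mul,
      toeplitzFunctional_C_mul, map_add (toeplitzFunctional s j), toeplitzFunctional_C_mul,
      hk.rev, hpred, hk'.orthogonal j (by lia) (by push_cast; lia),
      hk'.toeplitzFunctional_eq_ite (j := j + 1) (by lia) (by push_cast; lia),
      hk.toeplitzFunctional_eq_ite (j := j) (by lia) (by lia),
      hk.toeplitzFunctional_eq_ite (j := k - j) (by lia) (by lia), szegoNormSq_succ s k]
    simp only [Nat.cast_add_one, add_left_inj]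
    split_ifs <;> ring

/-- The discrete Painlevé II equation. -/
lemma verblunsky_recurrence (hs : 0 < s) (k : ℕ) :
    s * (1 - verblunsky s (k + 1) ^ 2) * (verblunsky s k + verblunsky s (k + 2)) =
      -((k : ℝ) + 1) * verblunsky s (k + 1) := by
  have hcoeff := congrArg (coeff · 0) (X_mul_derivative_szegoPoly hs k)
  simp only [mul_coeff_zero, coeff_X_zero, coeff_C_zero, coeff_add, szegoPoly_coeff_zero,
    szegoPolyRev_coeff_zero] at hcoeff
  linarith

end SzegoPolynomials

section AlternatingVerblunsky

/-- The Verblunsky coefficients with their alternating signs removed. -/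
noncomputable def verblunskyAlt (s : ℝ) (k : ℕ) : ℝ := (-1) ^ k * verblunsky s k

lemma verblunskyAlt_zero (s : ℝ) : verblunskyAlt s 0 = 1 := by simp [verblunskyAlt, verblunsky]

lemma verblunskyAlt_sq (s : ℝ) (k : ℕ) : verblunskyAlt s k ^ 2 = verblunsky s k ^ 2 := by
  rw [verblunskyAlt, mul_pow, ← pow_mul, mul_comm k 2, pow_mul]
  simp

lemma szegoNormSq_succ_eq_verblunskyAlt (s : ℝ) (k : ℕ) :
    szegoNormSq s (k + 1) = szegoNormSq s k * (1 - verblunskyAlt s (k + 1) ^ 2) := by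
  rw [verblunskyAlt_sq, szegoNormSq_succ]

variable {s : ℝ}

lemma verblunskyAlt_nonneg (hs : 0 < s) (k : ℕ) : 0 ≤ verblunskyAlt s k := by
  cases k with
  | zero => simp [verblunskyAlt_zero]
  | succ k =>
    have hdet := toeplitzDet_one_nonneg hs (k + 1)
    rw [toeplitzDet_one_eq hs] at hdet
    exact nonneg_of_mul_nonneg_left hdet (by linarith [one_le_toeplitzDet hs (k + 1)])

lemma verblunskyAlt_succ_lt_one (hs : 0 < s) (k : ℕ) : verblunskyAlt s (k + 1) < 1 := by
  have hpos := szegoNormSq_pos hs (k + 1)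
  rw [szegoNormSq_succ_eq_verblunskyAlt] at hpos
  have := pos_of_mul_pos_right hpos (szegoNormSq_pos hs k).le
  exact (sq_lt_one_iff₀ (verblunskyAlt_nonneg hs (k + 1))).1 (by linarith)

theorem verblunskyAlt_recurrence (hs : 0 < s) (k : ℕ) :
    s * (1 - verblunskyAlt s (k + 1) ^ 2) * (verblunskyAlt s k + verblunskyAlt s (k + 2)) =
      ((k : ℝ) + 1) * verblunskyAlt s (k + 1) := by
  rw [verblunskyAlt_sq]
  simp only [verblunskyAlt, pow_succ]
  linear_combination (-1 : ℝ) ^ k * verblunsky_recurrence hs k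

lemma verblunskyAlt_pos (hs : 0 < s) (k : ℕ) : 0 < verblunskyAlt s k := by
  induction k with
  | zero => simp [verblunskyAlt_zero]
  | succ k ih =>
    refine (verblunskyAlt_nonneg hs (k + 1)).lt_of_ne fun h => ?_
    have hrec := verblunskyAlt_recurrence hs k
    rw [← h] at hrec
    have := mul_pos hs (add_pos_of_pos_of_nonneg ih (verblunskyAlt_nonneg hs (k + 2)))
    linarith

end AlternatingVerblunsky

section PoissonizedDistribution

/-- The mass at `n` of the Poisson distribution with mean `t`. -/
noncomputable def poissonWeight (t : ℝ) (n : ℕ) : ℝ := Real.exp (-t) * (t ^ n / n.factorial)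

/-- The probability that a uniform permutation of `Fin n` has no increasing subsequence of length
greater than `k`. -/
noncomputable def probLisLE (n k : ℕ) : ℝ := (cardLisLE k n : ℝ) / n.factorial

/-- The distribution function of the longest increasing subsequence of a uniform permutation of
Poisson size with mean `s ^ 2`. -/
noncomputable def poissonLisCDF (s : ℝ) (k : ℕ) : ℝ := Real.exp (-s ^ 2) * toeplitzDet s 0 k

lemma poissonWeight_nonneg {t : ℝ} (ht : 0 ≤ t) (n : ℕ) : 0 ≤ poissonWeight t n := by
  unfold poissonWeight
  positivity

lemma hasSum_poissonWeight (t : ℝ) : HasSum (poissonWeight t) 1 := by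
  have hexp := (NormedSpace.expSeries_div_hasSum_exp (𝔸 := ℝ) t).mul_left (Real.exp (-t))
  rwa [← Real.exp_eq_exp_ℝ, ← Real.exp_add, neg_add_cancel, Real.exp_zero] at hexp

lemma probLisLE_nonneg (n k : ℕ) : 0 ≤ probLisLE n k := by
  unfold probLisLE
  positivity

lemma probLisLE_le_one (n k : ℕ) : probLisLE n k ≤ 1 := by
  have hcard : cardLisLE k n ≤ n.factorial := by
    simpa [Fintype.card_perm, cardLisLE] using card_filter_le (univ : Finset (Equiv.Perm (Fin n))) _
  rw [probLisLE, div_le_one (by positivity)]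
  exact_mod_cast hcard

lemma probLisLE_eq_one {n k : ℕ} (h : n ≤ k) : probLisLE n k = 1 := by
  have hcard : cardLisLE k n = n.factorial := by
    rw [cardLisLE, filter_true_of_mem fun σ _ => (lisLen_le σ).trans h, card_univ,
      Fintype.card_perm, Fintype.card_fin]
  rw [probLisLE, hcard, div_self (by positivity)]

lemma probLisLE_mono (n : ℕ) : Monotone (probLisLE n) := fun k k' hkk' => by
  unfold probLisLE cardLisLE
  gcongr

variable {s : ℝ}

lemma hasSum_poissonLisCDF (hs : 0 < s) (k : ℕ) :
    HasSum (fun n => poissonWeight (s ^ 2) n * probLisLE n k) (poissonLisCDF s k) := by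
  refine ((hasSum_toeplitzDet hs k).mul_left (Real.exp (-s ^ 2))).congr_fun fun n => ?_
  rw [poissonWeight, probLisLE]
  field_simp

lemma poissonLisCDF_mono (hs : 0 < s) : Monotone (poissonLisCDF s) := fun k k' hkk' =>
  hasSum_le (fun n => mul_le_mul_of_nonneg_left (probLisLE_mono n hkk')
    (poissonWeight_nonneg (sq_nonneg s) n)) (hasSum_poissonLisCDF hs k) (hasSum_poissonLisCDF hs k')

lemma poissonLisCDF_le_one (hs : 0 < s) (k : ℕ) : poissonLisCDF s k ≤ 1 :=
  hasSum_le (fun n => mul_le_of_le_one_right (poissonWeight_nonneg (sq_nonneg s) n)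
    (probLisLE_le_one n k)) (hasSum_poissonLisCDF hs k) (hasSum_poissonWeight _)

lemma poissonLisCDF_pos (hs : 0 < s) (k : ℕ) : 0 < poissonLisCDF s k :=
  mul_pos (Real.exp_pos _) (by linarith [one_le_toeplitzDet hs k])

lemma tendsto_poissonLisCDF (hs : 0 < s) : Tendsto (poissonLisCDF s) atTop (nhds 1) := by
  refine tendsto_of_tendsto_of_tendsto_of_le_of_le (hasSum_poissonWeight (s ^ 2)).tendsto_sum_nat
    tendsto_const_nhds (fun k => ?_) (poissonLisCDF_le_one hs)
  refine le_trans (sum_le_sum fun n hn => ?_) (sum_le_hasSum (range k)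
    (fun n _ => mul_nonneg (poissonWeight_nonneg (sq_nonneg s) n) (probLisLE_nonneg n k))
    (hasSum_poissonLisCDF hs k))
  rw [probLisLE_eq_one (mem_range.1 hn).le, mul_one]

lemma poissonLisCDF_succ (hs : 0 < s) (k : ℕ) :
    poissonLisCDF s (k + 1) = poissonLisCDF s k * szegoNormSq s k := by
  rw [poissonLisCDF, poissonLisCDF, toeplitzDet_succ hs, mul_assoc]

lemma one_le_szegoNormSq (hs : 0 < s) (k : ℕ) : 1 ≤ szegoNormSq s k := by
  have hmono := poissonLisCDF_mono hs k.le_succ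
  rw [Nat.succ_eq_add_one, poissonLisCDF_succ hs] at hmono
  exact (le_mul_iff_one_le_right (poissonLisCDF_pos hs k)).1 hmono

lemma tendsto_szegoNormSq (hs : 0 < s) : Tendsto (szegoNormSq s) atTop (nhds 1) := by
  have hcdf := tendsto_poissonLisCDF hs
  have hratio := (hcdf.comp (tendsto_add_atTop_nat 1)).div hcdf one_ne_zero
  rw [div_one] at hratio
  refine hratio.congr fun k => ?_
  simp only [Function.comp, Pi.div_apply]
  rw [poissonLisCDF_succ hs, mul_div_cancel_left₀ _ (poissonLisCDF_pos hs k).ne']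

lemma szegoNormSq_anti (hs : 0 < s) : Antitone (szegoNormSq s) := by
  refine antitone_nat_of_succ_le fun k => ?_
  rw [szegoNormSq_succ_eq_verblunskyAlt]
  exact mul_le_of_le_one_right (szegoNormSq_pos hs k).le
    (sub_le_self _ (sq_nonneg (verblunskyAlt s (k + 1))))

lemma szegoNormSq_mul_one_sub_sum_le (hs : 0 < s) (k w : ℕ) :
    szegoNormSq s k * (1 - ∑ j ∈ range w, verblunskyAlt s (k + 1 + j) ^ 2) ≤
      szegoNormSq s (k + w) := by
  induction w with
  | zero => simp
  | succ w ih =>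
    rw [sum_range_succ, ← add_assoc k w 1, szegoNormSq_succ_eq_verblunskyAlt, add_right_comm k w]
    have hanti := szegoNormSq_anti hs (k.le_add_right w)
    have := mul_le_mul_of_nonneg_right hanti (sq_nonneg (verblunskyAlt s (k + 1 + w)))
    linarith

lemma szegoNormSq_mul_one_add_sum_le (hs : 0 < s) (k w : ℕ) :
    szegoNormSq s (k + w) * (1 + ∑ j ∈ range w, verblunskyAlt s (k + 1 + j) ^ 2) ≤
      szegoNormSq s k := by
  induction w with
  | zero => simp
  | succ w ih =>
    rw [sum_range_succ, ← add_assoc k w 1, szegoNormSq_succ_eq_verblunskyAlt, add_right_comm k w]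
    refine le_trans ?_ ih
    have hsum : 0 ≤ ∑ j ∈ range w, verblunskyAlt s (k + 1 + j) ^ 2 :=
      sum_nonneg fun _ _ => sq_nonneg _
    have := sq_nonneg (verblunskyAlt s (k + 1 + w))
    rw [mul_assoc]
    refine mul_le_mul_of_nonneg_left ?_ (szegoNormSq_pos hs _).le
    nlinarith

lemma one_add_sum_le_szegoNormSq (hs : 0 < s) (k w : ℕ) :
    1 + ∑ j ∈ range w, verblunskyAlt s (k + 1 + j) ^ 2 ≤ szegoNormSq s k :=
  le_trans (le_mul_of_one_le_left (add_nonneg zero_le_one (sum_nonneg fun _ _ => sq_nonneg _))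
    (one_le_szegoNormSq hs (k + w))) (szegoNormSq_mul_one_add_sum_le hs k w)

lemma szegoNormSq_mul_one_sub_le_one (hs : 0 < s) {k : ℕ} {S : ℝ}
    (hS : ∀ w, ∑ j ∈ range w, verblunskyAlt s (k + 1 + j) ^ 2 ≤ S) :
    szegoNormSq s k * (1 - S) ≤ 1 := by
  have hlim : Tendsto (fun w => szegoNormSq s (k + w)) atTop (nhds 1) := by
    simp only [add_comm k]
    exact (tendsto_szegoNormSq hs).comp (tendsto_add_atTop_nat k)
  refine ge_of_tendsto' hlim fun w => le_trans ?_ (szegoNormSq_mul_one_sub_sum_le hs k w)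
  exact mul_le_mul_of_nonneg_left (by linarith [hS w]) (szegoNormSq_pos hs k).le

lemma poissonLisCDF_succ_sub_le (hs : 0 < s) {k : ℕ} {S : ℝ}
    (hS : ∀ w, ∑ j ∈ range w, verblunskyAlt s (k + 1 + j) ^ 2 ≤ S) :
    poissonLisCDF s (k + 1) - poissonLisCDF s k ≤ S := by
  have hS0 : 0 ≤ S := by simpa using hS 0
  have hcdf : poissonLisCDF s (k + 1) * (1 - S) ≤ poissonLisCDF s k := by
    rw [poissonLisCDF_succ hs, mul_assoc]
    exact mul_le_of_le_one_right (poissonLisCDF_pos hs k).le (szegoNormSq_mul_one_sub_le_one hs hS)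
  linarith [mul_le_of_le_one_left hS0 (poissonLisCDF_le_one hs (k + 1))]

end PoissonizedDistribution

section SecondDifferences

/-- The second difference of `u` centred at `k + 1`. -/
def secondDiff (u : ℕ → ℝ) (k : ℕ) : ℝ := u (k + 2) - 2 * u (k + 1) + u k

/-- If `u (j + 1)` is at least `c`, the second difference there is at least `u (j + 1) ^ 3 / 2`. The
continuous analogue `u'' ≥ u³ / 2` blows up in finite time. -/
def CubicConvexAt (c : ℝ) (u : ℕ → ℝ) (j : ℕ) : Prop :=
  c ≤ u (j + 1) → u (j + 1) ^ 3 / 2 ≤ secondDiff u j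

section Blowup

variable {c : ℝ} {T : ℕ} {u : ℕ → ℝ}

lemma linear_le_slope_of_cubicConvexAt (hu : ∀ j, j + 1 < T → CubicConvexAt c u j) (h0 : 0 ≤ u 0)
    (hc : c ≤ u 0) (h1 : u 0 ≤ u 1) :
    ∀ j < T, u 0 ≤ u j ∧ j * (u 0 ^ 3 / 2) ≤ u (j + 1) - u j := by
  intro j
  induction j with
  | zero => exact fun _ => ⟨le_rfl, by simpa using h1⟩
  | succ j ih =>
    intro hj
    obtain ⟨hle, hslope⟩ := ih (by lia)
    have hle' : u 0 ≤ u (j + 1) := by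
      have : 0 ≤ (j : ℝ) * (u 0 ^ 3 / 2) := by positivity
      linarith
    have hconv := hu j hj (hc.trans hle')
    have hcube : u 0 ^ 3 ≤ u (j + 1) ^ 3 := by gcongr
    unfold secondDiff at hconv
    refine ⟨hle', ?_⟩
    push_cast
    linarith

lemma quadratic_le_of_cubicConvexAt (hu : ∀ j, j + 1 < T → CubicConvexAt c u j) (h0 : 0 ≤ u 0)
    (hc : c ≤ u 0) (h1 : u 0 ≤ u 1) :
    ∀ h ≤ T, u 0 + u 0 ^ 3 / 4 * ((h : ℝ) * (h - 1)) ≤ u h := by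
  intro h
  induction h with
  | zero => simp
  | succ h ih =>
    intro hh
    have hslope := (linear_le_slope_of_cubicConvexAt hu h0 hc h1 h (by lia)).2
    have := ih (by lia)
    push_cast
    linarith

lemma two_mul_le_of_cubicConvexAt (hu : ∀ j, j + 1 < T → CubicConvexAt c u j) (h0 : 0 < u 0)
    (hc : c ≤ u 0) (h1 : u 0 ≤ u 1) {h : ℕ} (hT : h ≤ T) (hh : 2 / u 0 + 1 ≤ h) :
    2 * u 0 ≤ u h := by
  have hpos : 0 < 2 / u 0 := by positivity
  have hprod : (2 / u 0) * (2 / u 0) ≤ (h : ℝ) * (h - 1) := by nlinarith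
  have hquad : u 0 ^ 3 / 4 * ((2 / u 0) * (2 / u 0)) = u 0 := by
    field_simp
    norm_num
  have := mul_le_mul_of_nonneg_left hprod (by positivity : 0 ≤ u 0 ^ 3 / 4)
  linarith [quadratic_le_of_cubicConvexAt hu h0.le hc h1 h hT]

/-- Every time `u` doubles, the time to the next doubling halves, so the blow-up happens within
`8 / u 0` steps. -/
theorem mul_le_eight_of_cubicConvexAt (hu : ∀ j, j + 1 < T → CubicConvexAt c u j) (h0 : 0 < u 0)
    (hc : c ≤ u 0) (h1 : u 0 ≤ u 1) (hle : ∀ j ≤ T, u j ≤ 1) : (T : ℝ) * u 0 ≤ 8 := by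
  induction T using Nat.strong_induction_on generalizing u with
  | _ T ih =>
  have hu1 : u 0 ≤ 1 := hle 0 (Nat.zero_le _)
  set h := ⌈2 / u 0⌉₊ + 1 with hh
  have hlow : 2 / u 0 + 1 ≤ h := by
    push_cast [hh]
    linarith [Nat.le_ceil (2 / u 0)]
  have hupp : (h : ℝ) * u 0 ≤ 4 := by
    have hlt := Nat.ceil_lt_add_one (by positivity : 0 ≤ 2 / u 0)
    have : (h : ℝ) ≤ 2 / u 0 + 2 := by
      push_cast [hh]
      linarith
    have := mul_le_mul_of_nonneg_right this h0.le
    rw [add_mul, div_mul_cancel₀ _ h0.ne'] at this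
    linarith
  rcases le_or_gt T h with hT | hT
  · have : (T : ℝ) ≤ h := by exact_mod_cast hT
    nlinarith
  obtain ⟨m, rfl⟩ := Nat.exists_eq_add_of_le hT.le
  have hdouble := two_mul_le_of_cubicConvexAt hu h0 hc h1 hT.le hlow
  have hslope := (linear_le_slope_of_cubicConvexAt hu h0.le hc h1 h hT).2
  have : 0 ≤ (h : ℝ) * (u 0 ^ 3 / 2) := by positivity
  have hrec : (m : ℝ) * u h ≤ 8 := ih m (by lia) (u := fun j => u (h + j))
    (fun j hj => hu (h + j) (by lia))
    (by simp only [add_zero]; linarith) (by simp only [add_zero]; linarith)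
    (by simp only [add_zero]; linarith) fun j hj => hle _ (by lia)
  have := mul_le_mul_of_nonneg_left hdouble m.cast_nonneg
  push_cast
  linarith

lemma secondDiff_reflect (u : ℕ → ℝ) {j k : ℕ} (hjk : j + 2 ≤ k) :
    secondDiff (fun i => u (k - i)) j = secondDiff u (k - (j + 2)) := by
  unfold secondDiff
  rw [show k - (j + 2) + 2 = k - j by lia, show k - (j + 2) + 1 = k - (j + 1) by lia]
  ring

lemma succ_lt_of_cubicConvexAt {k : ℕ} (hu : ∀ j ≥ k, CubicConvexAt c u j) (h0 : 0 < u k)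
    (hc : c ≤ u k) (hle : ∀ j, u j ≤ 1) : u (k + 1) < u k := by
  by_contra! hincr
  obtain ⟨T, hT⟩ := exists_nat_gt (8 / u k)
  rw [div_lt_iff₀ h0] at hT
  exact hT.not_ge (mul_le_eight_of_cubicConvexAt (u := fun j => u (k + j))
    (fun j _ => hu (k + j) (by lia)) h0 hc hincr fun j _ => hle _)

theorem mul_le_eight_of_cubicConvexAt_left {k : ℕ} (hT : 1 ≤ T) (hTk : T ≤ k)
    (hu : ∀ j, k < j + 1 + T → CubicConvexAt c u j) (h0 : 0 < u k) (hc : c ≤ u k)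
    (hle : ∀ j, u j ≤ 1) : (T : ℝ) * u k ≤ 8 := by
  have hright := succ_lt_of_cubicConvexAt (fun j _ => hu j (by lia)) h0 hc hle
  have hleft : u k ≤ u (k - 1) := by
    obtain ⟨i, rfl⟩ := Nat.exists_eq_add_of_le' (hT.trans hTk)
    have hconv := hu i (by lia) hc
    have : 0 ≤ u (i + 1) ^ 3 := by positivity
    unfold secondDiff at hconv
    simp only [Nat.add_sub_cancel]
    linarith
  refine mul_le_eight_of_cubicConvexAt (c := c) (u := fun j => u (k - j)) (fun j hj hcj => ?_) h0 hc
    hleft fun j _ => hle _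
  have hindex : k - (j + 1) = k - (j + 2) + 1 := by lia
  rw [secondDiff_reflect u (by lia)]
  simp only [hindex] at hcj ⊢
  exact hu (k - (j + 2)) (by lia) hcj

end Blowup

/-- Once positive, `z` would grow at least linearly. -/
theorem nonpos_of_secondDiff_nonneg {z : ℕ → ℝ} {M : ℝ} (h0 : z 0 ≤ 0) (hM : ∀ k, z k ≤ M)
    (hz : ∀ k, 0 < z (k + 1) → 0 ≤ secondDiff z k) (k : ℕ) : z k ≤ 0 := by
  induction k with
  | zero => exact h0
  | succ m hm =>
  by_contra! hpos
  have hgrow : ∀ j : ℕ, z (m + 1) ≤ z (m + j + 1) - z (m + j) ∧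
      (j + 1 : ℝ) * z (m + 1) ≤ z (m + j + 1) := by
    intro j
    induction j with
    | zero => exact ⟨by simpa using hm, by simp⟩
    | succ j ih =>
      have hconv := hz (m + j) (lt_of_lt_of_le (by positivity) ih.2)
      unfold secondDiff at hconv
      rw [← add_assoc m j 1]
      push_cast
      constructor <;> linarith [ih.1, ih.2]
  obtain ⟨N, hN⟩ := exists_nat_gt (M / z (m + 1))
  rw [div_lt_iff₀ hpos] at hN
  linarith [(hgrow N).2, hM (m + N + 1)]

lemma le_of_secondDiff_neg {u : ℕ → ℝ} {c : ℝ} {p q : ℕ} (hp : c ≤ u p) (hq : c ≤ u q)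
    (hu : ∀ t, p ≤ t → t + 1 < q → u (t + 1) < c → secondDiff u t < 0) {i : ℕ} (hpi : p ≤ i)
    (hiq : i ≤ q) : c ≤ u i := by
  obtain ⟨m, hm, hmin⟩ := exists_min_image (Icc p q) u ⟨i, mem_Icc.2 ⟨hpi, hiq⟩⟩
  refine le_trans ?_ (hmin i (mem_Icc.2 ⟨hpi, hiq⟩))
  by_contra! hlt
  rw [mem_Icc] at hm
  have hmp : m ≠ p := fun h => by linarith [h ▸ hlt]
  have hmq : m ≠ q := fun h => by linarith [h ▸ hlt]
  obtain ⟨t, rfl⟩ := Nat.exists_eq_add_of_le' (show 1 ≤ m by lia)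
  have hneg := hu t (by lia) (by lia) hlt
  unfold secondDiff at hneg
  linarith [hmin t (mem_Icc.2 (by lia)), hmin (t + 2) (mem_Icc.2 (by lia))]

section Oscillation

variable {v : ℕ → ℝ} {a : ℝ} {N : ℕ}

lemma slope_anti_of_secondDiff_nonpos (hv : ∀ j, j + 1 < N → secondDiff v j ≤ 0) {i j : ℕ}
    (hij : i ≤ j) (hj : j < N) : v (j + 1) - v j ≤ v (i + 1) - v i := by
  induction j, hij using Nat.le_induction with
  | base => exact le_rfl
  | succ j _ ih =>
    have := hv j hj
    unfold secondDiff at this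
    linarith [ih (by lia)]

lemma anti_of_secondDiff_nonpos (hv : ∀ j, j + 1 < N → secondDiff v j ≤ 0) (h1 : v 1 ≤ v 0)
    {i j : ℕ} (hij : i ≤ j) (hj : j ≤ N) : v j ≤ v i := by
  induction j, hij using Nat.le_induction with
  | base => exact le_rfl
  | succ j _ ih =>
    linarith [slope_anti_of_secondDiff_nonpos hv j.zero_le hj, ih (by lia)]

/-- A discrete Sturm comparison: solutions of `v'' ≤ -a v` cannot stay positive on an interval of
length `2 / √a`. -/
theorem exists_nonpos_of_secondDiff_le {L : ℕ} (ha : 0 ≤ a) (hL : 1 ≤ a * (L : ℝ) ^ 2)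
    (h1 : v 1 ≤ v 0) (hc : ∀ j, j + 1 < 2 * L → secondDiff v j ≤ -a * v (j + 1)) :
    ∃ j ≤ 2 * L, v j ≤ 0 := by
  by_contra! hv
  have hLpos : 0 < L := Nat.pos_of_ne_zero fun h => by norm_num [h] at hL
  have hconc : ∀ j, j + 1 < 2 * L → secondDiff v j ≤ 0 := fun j hj =>
    (hc j hj).trans (by nlinarith [hv (j + 1) hj.le])
  have hslope : ∀ j ≤ L, v (j + 1) - v j ≤ -a * (j * v L) := by
    intro j
    induction j with
    | zero => simpa using h1
    | succ j ih =>
      intro hj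
      have hcj := hc j (by lia)
      have := mul_le_mul_of_nonneg_left (anti_of_secondDiff_nonpos hconc h1 hj (by lia)) ha
      unfold secondDiff at hcj
      push_cast
      linarith [ih (by lia)]
  have hlinear : ∀ j ≤ L, v (L + j) ≤ v L - j * (a * (L * v L)) := by
    intro j
    induction j with
    | zero => simp
    | succ j ih =>
      intro hj
      have := slope_anti_of_secondDiff_nonpos hconc (L.le_add_right j) (by lia)
      rw [← add_assoc]
      push_cast
      linarith [ih (by lia), hslope L le_rfl]
  have hL2 := hlinear L le_rfl
  have hlast := hv (L + L) (by lia)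
  nlinarith [hv L (by lia)]

end Oscillation

end SecondDifferences

section EdgeEstimates

/-- The ratio of the geometric series that dominates the tails at spatial scale `l`. -/
noncomputable def decayRate (l : ℕ) : ℝ := 1 - 1 / (2 * l)

lemma decayRate_le_one (l : ℕ) : decayRate l ≤ 1 := sub_le_self _ (by positivity)

section DecayRate

variable {l : ℕ}

lemma half_le_decayRate (hl : 1 ≤ l) : 1 / 2 ≤ decayRate l := by
  have hl' : (1 : ℝ) ≤ l := by exact_mod_cast hl
  have : 1 / (2 * (l : ℝ)) ≤ 1 / 2 := one_div_le_one_div_of_le two_pos (by linarith)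
  unfold decayRate
  linarith

lemma decayRate_nonneg (hl : 1 ≤ l) : 0 ≤ decayRate l :=
  le_trans (by norm_num) (half_le_decayRate hl)

lemma sum_decayRate_pow_le (hl : 1 ≤ l) (w : ℕ) : ∑ j ∈ range w, decayRate l ^ j ≤ 2 * l := by
  have : (0 : ℝ) < l := by exact_mod_cast hl
  have hsum := geom_sum_mul_neg (decayRate l) w
  have hpow := pow_nonneg (decayRate_nonneg hl) w
  have hstep : 1 - decayRate l = 1 / (2 * l) := sub_sub_cancel _ _
  rw [hstep, mul_one_div, div_eq_iff (by positivity)] at hsum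
  nlinarith

end DecayRate

variable {s : ℝ} {l : ℕ}

lemma verblunskyAlt_le_one (hs : 0 < s) (k : ℕ) : verblunskyAlt s k ≤ 1 := by
  cases k with
  | zero => rw [verblunskyAlt_zero]
  | succ k => exact (verblunskyAlt_succ_lt_one hs k).le

lemma mul_verblunskyAlt_le_add (hs : 0 < s) (k : ℕ) :
    ((k : ℝ) + 1) / s * (verblunskyAlt s (k + 1) * (1 + verblunskyAlt s (k + 1) ^ 2)) ≤
      verblunskyAlt s k + verblunskyAlt s (k + 2) := by
  have hrec := verblunskyAlt_recurrence hs k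
  have hsum : 0 ≤ verblunskyAlt s k + verblunskyAlt s (k + 2) :=
    add_nonneg (verblunskyAlt_nonneg hs k) (verblunskyAlt_nonneg hs (k + 2))
  set y := verblunskyAlt s (k + 1)
  set A := verblunskyAlt s k + verblunskyAlt s (k + 2)
  have hy : ((k : ℝ) + 1) / s * y = (1 - y ^ 2) * A := by
    rw [div_mul_eq_mul_div, div_eq_iff hs.ne']
    linarith
  rw [← mul_assoc, hy]
  nlinarith [mul_nonneg hsum (sq_nonneg (y ^ 2))]

lemma le_secondDiff_verblunskyAlt (hs : 0 < s) {k : ℕ} {x : ℝ} (hx : 0 ≤ x)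
    (hk : 2 * s + x ≤ k + 1) :
    verblunskyAlt s (k + 1) * (x / s) + 2 * verblunskyAlt s (k + 1) ^ 3 ≤
      secondDiff (verblunskyAlt s) k := by
  have hadd := mul_verblunskyAlt_le_add hs k
  have hy := verblunskyAlt_nonneg hs (k + 1)
  unfold secondDiff
  set y := verblunskyAlt s (k + 1)
  have hratio : 2 + x / s ≤ ((k : ℝ) + 1) / s := by
    rw [le_div_iff₀ hs, add_mul, div_mul_cancel₀ _ hs.ne']
    exact hk
  have := mul_le_mul_of_nonneg_right hratio (by positivity : 0 ≤ y * (1 + y ^ 2))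
  have : 0 ≤ x / s * y ^ 3 := by positivity
  linarith

lemma natCast_mul_verblunskyAlt_le (hs : 0 < s) {j : ℕ} (hj : 1 ≤ j) :
    (j : ℝ) * verblunskyAlt s (⌈2 * s⌉₊ + j) ≤ 8 := by
  refine mul_le_eight_of_cubicConvexAt_left hj (by lia) (fun i hi _ => ?_)
    (verblunskyAlt_pos hs _) (verblunskyAlt_nonneg hs _) (verblunskyAlt_le_one hs)
  have hceil : ((⌈2 * s⌉₊ : ℕ) : ℝ) ≤ i + 1 := by exact_mod_cast (by lia : ⌈2 * s⌉₊ ≤ i + 1)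
  have hconv := le_secondDiff_verblunskyAlt hs le_rfl (k := i)
    (by linarith [Nat.le_ceil (2 * s)])
  have : 0 ≤ verblunskyAlt s (i + 1) ^ 3 := pow_nonneg (verblunskyAlt_nonneg hs _) _
  rw [zero_div, mul_zero] at hconv
  linarith

/-- Right of `2s + l` the recurrence is convex enough for `8 / l * decayRate l ^ i` to be a
supersolution. -/
theorem verblunskyAlt_le_geometric (hs : 0 < s) (hl : 1 ≤ l) (hsl : s ≤ (l : ℝ) ^ 3) (i : ℕ) :
    verblunskyAlt s (⌈2 * s⌉₊ + l + i) ≤ 8 / l * decayRate l ^ i := by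
  have hlp : (0 : ℝ) < l := by exact_mod_cast hl
  set r := decayRate l
  have hr0 : 0 ≤ r := decayRate_nonneg hl
  rw [← sub_nonpos]
  refine nonpos_of_secondDiff_nonneg (M := 1)
    (z := fun i => verblunskyAlt s (⌈2 * s⌉₊ + l + i) - 8 / l * r ^ i) ?_ (fun k => ?_)
    (fun k hk => ?_) i
  · simp only [add_zero, pow_zero, mul_one, sub_nonpos]
    rw [le_div_iff₀ hlp, mul_comm]
    exact natCast_mul_verblunskyAlt_le hs hl
  · have := verblunskyAlt_le_one hs (⌈2 * s⌉₊ + l + k)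
    have : 0 ≤ 8 / l * r ^ k := by positivity
    linarith
  · have hconv := le_secondDiff_verblunskyAlt hs hlp.le (k := ⌈2 * s⌉₊ + l + k)
      (by push_cast; linarith [Nat.le_ceil (2 * s), k.cast_nonneg (α := ℝ)])
    have hy := verblunskyAlt_nonneg hs (⌈2 * s⌉₊ + l + k + 1)
    have hgeom : secondDiff (fun i => 8 / l * r ^ i) k = 8 / l * r ^ k * (1 / l ^ 2) / 4 := by
      have hstep : 1 - r = 1 / (2 * l) := sub_sub_cancel _ _
      calc secondDiff (fun i => 8 / l * r ^ i) k = 8 / l * r ^ k * (1 - r) ^ 2 := by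
            unfold secondDiff
            ring
        _ = 8 / l * r ^ k * (1 / l ^ 2) / 4 := by
            rw [hstep]
            ring
    have hhalf : 8 / l * r ^ k * (1 / 2) ≤ 8 / l * r ^ (k + 1) := by
      rw [pow_succ, ← mul_assoc]
      exact mul_le_mul_of_nonneg_left (half_le_decayRate hl) (by positivity)
    have hrate : (1 : ℝ) / l ^ 2 ≤ l / s := by
      rw [div_le_div_iff₀ (by positivity) hs]
      linarith
    have hle : 8 / l * r ^ k * (1 / 2) * (1 / l ^ 2) ≤
        verblunskyAlt s (⌈2 * s⌉₊ + l + k + 1) * (l / s) :=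
      mul_le_mul (hhalf.trans (sub_pos.1 hk).le) hrate (by positivity) hy
    have : 0 ≤ 8 / l * r ^ k * (1 / l ^ 2) := by positivity
    have : 0 ≤ verblunskyAlt s (⌈2 * s⌉₊ + l + k + 1) ^ 3 := by positivity
    simp only [secondDiff, ← add_assoc] at hgeom hconv ⊢
    linarith

lemma sum_verblunskyAlt_sq_le_geometric (hs : 0 < s) (hl : 1 ≤ l) (hsl : s ≤ (l : ℝ) ^ 3)
    (i w : ℕ) :
    ∑ j ∈ range w, verblunskyAlt s (⌈2 * s⌉₊ + l + i + 1 + j) ^ 2 ≤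
      128 / l * decayRate l ^ i := by
  have : (0 : ℝ) < l := by exact_mod_cast hl
  have hr0 := decayRate_nonneg hl
  have hr1 := decayRate_le_one l
  have hterm (j : ℕ) : verblunskyAlt s (⌈2 * s⌉₊ + l + i + 1 + j) ^ 2 ≤
      64 / l ^ 2 * decayRate l ^ i * decayRate l ^ j := by
    rw [add_assoc _ i 1, add_assoc _ (i + 1) j]
    calc verblunskyAlt s (⌈2 * s⌉₊ + l + (i + 1 + j)) ^ 2
        ≤ (8 / l * decayRate l ^ (i + 1 + j)) ^ 2 :=
          pow_le_pow_left₀ (verblunskyAlt_nonneg hs _) (verblunskyAlt_le_geometric hs hl hsl _) 2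
      _ = 64 / l ^ 2 * decayRate l ^ ((i + 1 + j) * 2) := by
          rw [mul_pow, ← pow_mul, div_pow]
          norm_num
      _ ≤ 64 / l ^ 2 * decayRate l ^ (i + j) :=
          mul_le_mul_of_nonneg_left (pow_le_pow_of_le_one hr0 hr1 (by lia)) (by positivity)
      _ = 64 / l ^ 2 * decayRate l ^ i * decayRate l ^ j := by rw [pow_add, mul_assoc]
  calc ∑ j ∈ range w, verblunskyAlt s (⌈2 * s⌉₊ + l + i + 1 + j) ^ 2
      ≤ 64 / l ^ 2 * decayRate l ^ i * ∑ j ∈ range w, decayRate l ^ j := by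
        rw [mul_sum]
        exact sum_le_sum fun j _ => hterm j
    _ ≤ 64 / l ^ 2 * decayRate l ^ i * (2 * l) :=
        mul_le_mul_of_nonneg_left (sum_decayRate_pow_le hl w) (by positivity)
    _ = 128 / l * decayRate l ^ i := by
        field_simp
        ring

theorem one_sub_poissonLisCDF_le (hs : 0 < s) (hl : 1 ≤ l) (hsl : s ≤ (l : ℝ) ^ 3) (i : ℕ) :
    1 - poissonLisCDF s (⌈2 * s⌉₊ + l + i) ≤ 256 * decayRate l ^ i := by
  have : (0 : ℝ) < l := by exact_mod_cast hl
  have hr0 := decayRate_nonneg hl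
  set k := ⌈2 * s⌉₊ + l + i with hk
  have hincr (j : ℕ) : poissonLisCDF s (k + j + 1) - poissonLisCDF s (k + j) ≤
      128 / l * decayRate l ^ i * decayRate l ^ j := by
    have := poissonLisCDF_succ_sub_le hs (sum_verblunskyAlt_sq_le_geometric hs hl hsl (i + j))
    rwa [pow_add, ← mul_assoc, ← add_assoc, ← hk] at this
  have hbound (w : ℕ) : poissonLisCDF s (k + w) ≤ poissonLisCDF s k + 256 * decayRate l ^ i := by
    calc poissonLisCDF s (k + w)
        = poissonLisCDF s k +
            ∑ j ∈ range w, (poissonLisCDF s (k + j + 1) - poissonLisCDF s (k + j)) := by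
          simp only [add_assoc k]
          rw [sum_range_sub fun j => poissonLisCDF s (k + j), add_zero, add_sub_cancel]
      _ ≤ poissonLisCDF s k + 128 / l * decayRate l ^ i * ∑ j ∈ range w, decayRate l ^ j := by
          rw [mul_sum]
          gcongr with j
          exact hincr j
      _ ≤ poissonLisCDF s k + 128 / l * decayRate l ^ i * (2 * l) := by
          gcongr
          exact sum_decayRate_pow_le hl w
      _ = poissonLisCDF s k + 256 * decayRate l ^ i := by
          field_simp
          ring
  have hlim : Tendsto (fun w => poissonLisCDF s (k + w)) atTop (nhds 1) := by
    simp only [add_comm k]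
    exact (tendsto_poissonLisCDF hs).comp (tendsto_add_atTop_nat k)
  linarith [le_of_tendsto' hlim hbound]

section DensityBound

variable {B : ℕ}

lemma cubicConvexAt_verblunskyAlt (hs : 0 < s) (hB : 1 ≤ B) (hls : (l : ℝ) ^ 3 ≤ 8 * s) {k : ℕ}
    (hl : 1 ≤ l) (hk : 2 * s ≤ k + 1 + 2 * B * l) :
    CubicConvexAt (8 * B / l) (verblunskyAlt s) k := by
  intro hy
  have hB' : (1 : ℝ) ≤ B := by exact_mod_cast hB
  have : (0 : ℝ) < l := by exact_mod_cast hl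
  have hadd := mul_verblunskyAlt_le_add hs k
  have hy0 := verblunskyAlt_nonneg hs (k + 1)
  have hy1 := verblunskyAlt_le_one hs (k + 1)
  unfold secondDiff
  set y := verblunskyAlt s (k + 1)
  set d := 2 * B * l / s with hd
  have hdy : d ≤ y ^ 2 / 4 := by
    calc d ≤ (8 * B / l) ^ 2 / 4 := by
          rw [hd, div_pow, div_div, div_le_div_iff₀ hs (by positivity)]
          have : (B : ℝ) * l ^ 3 ≤ B ^ 2 * (8 * s) :=
            mul_le_mul (by nlinarith) hls (by positivity) (by positivity)
          nlinarith
      _ ≤ y ^ 2 / 4 := by gcongr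
  have hratio : 2 - d ≤ ((k : ℝ) + 1) / s := by
    rw [hd, sub_le_iff_le_add, ← add_div, le_div_iff₀ hs]
    exact hk
  have := mul_le_mul_of_nonneg_right hratio (by positivity : 0 ≤ y * (1 + y ^ 2))
  have : d * (y * (1 + y ^ 2)) ≤ y ^ 2 / 4 * (y * (1 + 1)) := by
    have : y ^ 2 ≤ 1 := pow_le_one₀ hy0 hy1
    gcongr
  have : 0 ≤ y ^ 3 := by positivity
  linarith

lemma verblunskyAlt_le_div (hs : 0 < s) (hB : 1 ≤ B) (hls : (l : ℝ) ^ 3 ≤ 8 * s) (hl : 1 ≤ l)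
    (hlB : 8 * B ≤ l ^ 2) {k : ℕ}
    (hk : 2 * s ≤ k + B * l) : verblunskyAlt s k ≤ 8 * B / l := by
  have hB' : (1 : ℝ) ≤ B := by exact_mod_cast hB
  have hlp : (0 : ℝ) < l := by exact_mod_cast hl
  have hlB' : 8 * (B : ℝ) ≤ l ^ 2 := by exact_mod_cast hlB
  by_contra! hlt
  have hBlk : (B : ℝ) * l ≤ k := by nlinarith
  have hblow := mul_le_eight_of_cubicConvexAt_left (T := B * l) (Nat.mul_pos hB hl)
    (by exact_mod_cast hBlk) (fun j hj => cubicConvexAt_verblunskyAlt hs hB hls hl (by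
      have : (k : ℝ) < j + 1 + B * l := by exact_mod_cast hj
      linarith)) (verblunskyAlt_pos hs k) hlt.le (verblunskyAlt_le_one hs)
  rw [div_lt_iff₀ hlp] at hlt
  push_cast at hblow
  nlinarith

theorem poissonLisCDF_succ_sub_le_div (hs : 0 < s) (hB : 1 ≤ B) (hls : (l : ℝ) ^ 3 ≤ 8 * s)
    (hl : 1 ≤ l) (hsl : s ≤ (l : ℝ) ^ 3) (hlB : 8 * B ≤ l ^ 2)
    {k : ℕ} (hk : 2 * s ≤ k + B * l) :
    poissonLisCDF s (k + 1) - poissonLisCDF s k ≤ 320 * B ^ 3 / l := by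
  have hl' : (1 : ℝ) ≤ l := by exact_mod_cast hl
  have hB' : (1 : ℝ) ≤ B := by exact_mod_cast hB
  refine poissonLisCDF_succ_sub_le hs fun w => ?_
  have hedge : ⌈2 * s⌉₊ + l ≤ k + 3 * B * l := by
    have hceil := Nat.ceil_lt_add_one (by positivity : 0 ≤ 2 * s)
    have : (⌈2 * s⌉₊ + l : ℝ) ≤ k + 3 * B * l := by nlinarith
    exact_mod_cast this
  obtain ⟨i, hi⟩ := Nat.exists_eq_add_of_le hedge
  have hnear : ∑ j ∈ range (3 * B * l), verblunskyAlt s (k + 1 + j) ^ 2 ≤ 192 * B ^ 3 / l := by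
    calc ∑ j ∈ range (3 * B * l), verblunskyAlt s (k + 1 + j) ^ 2
        ≤ ∑ j ∈ range (3 * B * l), (8 * B / l : ℝ) ^ 2 := by
          refine sum_le_sum fun j _ => pow_le_pow_left₀ (verblunskyAlt_nonneg hs _)
            (verblunskyAlt_le_div hs hB hls hl hlB ?_) 2
          push_cast
          linarith [j.cast_nonneg (α := ℝ)]
      _ = 192 * B ^ 3 / l := by
        rw [sum_const, card_range, nsmul_eq_mul]
        push_cast
        field_simp
        ring
  have hfar : ∑ j ∈ range w, verblunskyAlt s (k + 1 + (3 * B * l + j)) ^ 2 ≤ 128 * B ^ 3 / l := by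
    calc ∑ j ∈ range w, verblunskyAlt s (k + 1 + (3 * B * l + j)) ^ 2
        = ∑ j ∈ range w, verblunskyAlt s (⌈2 * s⌉₊ + l + i + 1 + j) ^ 2 :=
          sum_congr rfl fun j _ => by
            rw [show k + 1 + (3 * B * l + j) = ⌈2 * s⌉₊ + l + i + 1 + j by lia]
      _ ≤ 128 / l * decayRate l ^ i := sum_verblunskyAlt_sq_le_geometric hs hl hsl i w
      _ ≤ 128 / l * B ^ 3 := by
          gcongr
          exact (pow_le_one₀ (decayRate_nonneg hl) (decayRate_le_one l)).trans (one_le_pow₀ hB')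
      _ = 128 * B ^ 3 / l := by ring
  calc ∑ j ∈ range w, verblunskyAlt s (k + 1 + j) ^ 2
      ≤ ∑ j ∈ range (3 * B * l + w), verblunskyAlt s (k + 1 + j) ^ 2 :=
        sum_le_sum_of_subset_of_nonneg (range_mono (by lia)) fun _ _ _ => sq_nonneg _
    _ ≤ 192 * B ^ 3 / l + 128 * B ^ 3 / l := by
        rw [sum_range_add]
        exact add_le_add hnear hfar
    _ = 320 * B ^ 3 / l := by ring

end DensityBound

section LowerTail

lemma secondDiff_verblunskyAlt_le (hs : 0 < s) (hls : (l : ℝ) ≤ s) {k : ℕ}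
    (hk : (k : ℝ) + 1 + 4 * l ≤ 2 * s)
    (hy : verblunskyAlt s (k + 1) ^ 2 < l / (2 * s)) :
    secondDiff (verblunskyAlt s) k ≤ -(2 * l / s) * verblunskyAlt s (k + 1) := by
  have hrec := verblunskyAlt_recurrence hs k
  have hy0 := verblunskyAlt_pos hs (k + 1)
  have hy1 := verblunskyAlt_succ_lt_one hs k
  unfold secondDiff
  set y := verblunskyAlt s (k + 1)
  set A := verblunskyAlt s k + verblunskyAlt s (k + 2)
  set q := (l : ℝ) / (2 * s) with hq
  have : 0 ≤ q := by positivity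
  have hl : (l : ℝ) = 2 * s * q := by rw [hq, mul_div_cancel₀ _ (by positivity)]
  have hq1 : q ≤ 1 / 2 := by
    rw [hq, div_le_iff₀ (by positivity)]
    linarith
  have hAy : (1 - y ^ 2) * A ≤ (2 - 8 * q) * y := by
    refine le_of_mul_le_mul_left ?_ hs
    have : ((k : ℝ) + 1) * y ≤ (2 * s - 4 * l) * y :=
      mul_le_mul_of_nonneg_right (by linarith) hy0.le
    rw [hl] at this
    linarith
  have hfactor : 2 - 8 * q ≤ (1 - y ^ 2) * (2 - 4 * q) := by nlinarith
  have hcoef : 2 * (l : ℝ) / s = 4 * q := by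
    rw [hl]
    field_simp
    ring
  have hle : A ≤ (2 - 4 * q) * y := by
    refine le_of_mul_le_mul_left (hAy.trans ?_) (by nlinarith : 0 < 1 - y ^ 2)
    rw [← mul_assoc]
    exact mul_le_mul_of_nonneg_right hfactor hy0.le
  rw [hcoef]
  linarith

lemma exists_le_verblunskyAlt_sq (hs : 0 < s) (hls : (l : ℝ) ≤ s) (hl : 1 ≤ l)
    (hsl : s ≤ (l : ℝ) ^ 3) {c : ℕ} (hlc : 2 * l ≤ c)
    (hcs : (c : ℝ) + 6 * l ≤ 2 * s) :
    ∃ p, c ≤ p + 2 * l ∧ p ≤ c + 2 * l ∧ l / (2 * s) ≤ verblunskyAlt s p ^ 2 := by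
  by_contra! hsmall
  have hosc {k : ℕ} (hck : c ≤ k + 1 + 2 * l) (hkc : k + 1 ≤ c + 2 * l) :
      secondDiff (verblunskyAlt s) k ≤ -(2 * l / s) * verblunskyAlt s (k + 1) := by
    refine secondDiff_verblunskyAlt_le hs hls ?_ (hsmall _ hck hkc)
    have : (k : ℝ) + 1 ≤ c + 2 * l := by exact_mod_cast hkc
    linarith
  have ha : (0 : ℝ) ≤ 2 * l / s := by positivity
  have haL : 1 ≤ 2 * l / s * (l : ℝ) ^ 2 := by
    rw [div_mul_eq_mul_div, le_div_iff₀ hs]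
    linarith
  rcases le_or_gt (verblunskyAlt s (c + 1)) (verblunskyAlt s c) with hdecr | hincr
  · obtain ⟨j, _, hj⟩ := exists_nonpos_of_secondDiff_le (v := fun j => verblunskyAlt s (c + j))
      ha haL hdecr fun j hj => hosc (k := c + j) (by lia) (by lia)
    exact hj.not_gt (verblunskyAlt_pos hs _)
  · have hleft : verblunskyAlt s (c - 1) ≤ verblunskyAlt s c := by
      obtain ⟨i, rfl⟩ := Nat.exists_eq_add_of_le' (show 1 ≤ c by lia)
      have hi := hosc (k := i) (by lia) (by lia)
      have := mul_nonneg ha (verblunskyAlt_nonneg hs (i + 1))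
      unfold secondDiff at hi
      simp only [Nat.add_sub_cancel]
      linarith
    obtain ⟨j, _, hj⟩ := exists_nonpos_of_secondDiff_le (v := fun j => verblunskyAlt s (c - j))
      ha haL hleft fun j hj => by
        rw [secondDiff_reflect _ (by lia), show c - (j + 1) = c - (j + 2) + 1 by lia]
        exact hosc (by lia) (by lia)
    exact hj.not_gt (verblunskyAlt_pos hs _)

lemma le_verblunskyAlt_sq_of_between (hs : 0 < s) (hls : (l : ℝ) ≤ s) (hl : 1 ≤ l) {p q i : ℕ}
    (hq : (q : ℝ) + 4 * l ≤ 2 * s)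
    (hyp : l / (2 * s) ≤ verblunskyAlt s p ^ 2) (hyq : l / (2 * s) ≤ verblunskyAlt s q ^ 2)
    (hpi : p ≤ i) (hiq : i ≤ q) : l / (2 * s) ≤ verblunskyAlt s i ^ 2 := by
  have hsq (k : ℕ) : √(l / (2 * s)) ≤ verblunskyAlt s k ↔ l / (2 * s) ≤ verblunskyAlt s k ^ 2 :=
    Real.sqrt_le_left (verblunskyAlt_nonneg hs k)
  rw [← hsq] at hyp hyq ⊢
  refine le_of_secondDiff_neg hyp hyq (fun t _ htq hlt => ?_) hpi hiq
  rw [← not_le, hsq, not_le] at hlt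
  have htq' : (t : ℝ) + 1 ≤ q := by exact_mod_cast htq.le
  have : (0 : ℝ) < l := by exact_mod_cast hl
  refine (secondDiff_verblunskyAlt_le hs hls (by linarith) hlt).trans_lt ?_
  have := mul_pos (by positivity : 0 < 2 * l / s) (verblunskyAlt_pos hs (t + 1))
  linarith

/-- On a window of length `4 * l` left of the edge every `verblunskyAlt s i ^ 2` is at least
`l / (2 * s)`, so their sum is at least `1 / l`. -/
lemma one_add_inv_le_szegoNormSq (hs : 0 < s) (hls : (l : ℝ) ≤ s) (hl : 1 ≤ l)
    (hsl : s ≤ (l : ℝ) ^ 3) {c : ℕ}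
    (hcs : (c : ℝ) + 16 * l ≤ 2 * s) : 1 + 1 / (l : ℝ) ≤ szegoNormSq s (c + 4 * l) := by
  have hlp : (0 : ℝ) < l := by exact_mod_cast hl
  obtain ⟨p, _, hpc, hyp⟩ := exists_le_verblunskyAlt_sq hs hls hl hsl (c := c + 2 * l) (by lia)
    (by push_cast; linarith)
  obtain ⟨q, hcq, hqc, hyq⟩ := exists_le_verblunskyAlt_sq hs hls hl hsl (c := c + 10 * l) (by lia)
    (by push_cast; linarith)
  have hqc' : (q : ℝ) ≤ c + 12 * l := by exact_mod_cast (by lia : q ≤ c + 12 * l)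
  refine le_trans ?_ (one_add_sum_le_szegoNormSq hs (c + 4 * l) (4 * l))
  gcongr
  calc 1 / (l : ℝ) ≤ (4 * l : ℕ) * (l / (2 * s)) := by
        push_cast
        rw [mul_div_assoc', div_le_div_iff₀ hlp (by positivity)]
        linarith
    _ = ∑ _j ∈ range (4 * l), (l / (2 * s) : ℝ) := by
        rw [sum_const, card_range, nsmul_eq_mul]
    _ ≤ ∑ j ∈ range (4 * l), verblunskyAlt s (c + 4 * l + 1 + j) ^ 2 := by
        refine sum_le_sum fun j hj => ?_
        rw [mem_range] at hj
        exact le_verblunskyAlt_sq_of_between hs hls hl (by linarith) hyp hyq (by lia) (by lia)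

end LowerTail

theorem poissonLisCDF_mul_pow_le_one (hs : 0 < s) (hl : 9 ≤ l) (hsl : s ≤ (l : ℝ) ^ 3)
    (hls : (l : ℝ) ^ 3 ≤ 8 * s) {k i : ℕ} (hk : k + i + 12 * l ≤ ⌊2 * s⌋₊) :
    poissonLisCDF s k * (1 + 1 / l) ^ i ≤ 1 := by
  have hl' : (9 : ℝ) ≤ l := by exact_mod_cast hl
  have hcube : 81 * (l : ℝ) ≤ (l : ℝ) ^ 3 := by
    rw [pow_succ]
    gcongr
    nlinarith
  have hfloor := Nat.floor_le (by positivity : 0 ≤ 2 * s)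
  have hwindow : 16 * l ≤ ⌊2 * s⌋₊ := Nat.le_floor (by push_cast; linarith)
  obtain ⟨c, hc⟩ := Nat.exists_eq_add_of_le' hwindow
  have hratio : 1 + 1 / (l : ℝ) ≤ szegoNormSq s (c + 4 * l) :=
    one_add_inv_le_szegoNormSq hs (by linarith) (by lia) hsl
      (by rw [hc] at hfloor; exact_mod_cast hfloor)
  have hgrow (j : ℕ) (hj : k + j + 12 * l ≤ ⌊2 * s⌋₊) :
      poissonLisCDF s k * (1 + 1 / (l : ℝ)) ^ j ≤ poissonLisCDF s (k + j) := by
    induction j with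
    | zero => simp
    | succ j ih =>
      rw [← add_assoc, poissonLisCDF_succ hs, pow_succ, ← mul_assoc]
      exact mul_le_mul (ih (by lia)) (hratio.trans (szegoNormSq_anti hs (by lia)))
        (by positivity) (poissonLisCDF_pos hs _).le
  exact (hgrow i hk).trans (poissonLisCDF_le_one hs _)

end EdgeEstimates

section UniformExpectation

variable {n : ℕ} {g h : Equiv.Perm (Fin n) → ℝ}

lemma En_mono (hgh : ∀ σ, g σ ≤ h σ) : En g ≤ En h := by
  unfold En
  gcongr
  exact hgh _

lemma En_add (g h : Equiv.Perm (Fin n) → ℝ) : En (fun σ => g σ + h σ) = En g + En h := by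
  rw [En, sum_add_distrib, add_div, En, En]

lemma En_sub (g h : Equiv.Perm (Fin n) → ℝ) : En (fun σ => g σ - h σ) = En g - En h := by
  rw [En, sum_sub_distrib, sub_div, En, En]

lemma En_const_mul (c : ℝ) (g : Equiv.Perm (Fin n) → ℝ) : En (fun σ => c * g σ) = c * En g := by
  rw [En, ← mul_sum, mul_div_assoc, En]

lemma En_sum {ι : Type*} (s : Finset ι) (g : ι → Equiv.Perm (Fin n) → ℝ) :
    En (fun σ => ∑ i ∈ s, g i σ) = ∑ i ∈ s, En (g i) := by
  rw [En, sum_comm, sum_div]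
  rfl

lemma En_const (c : ℝ) : En (fun _ : Equiv.Perm (Fin n) => c) = c := by
  rw [En, sum_const, card_univ, nsmul_eq_mul, mul_div_cancel_left₀]
  exact_mod_cast Fintype.card_ne_zero

lemma En_nonneg (hg : ∀ σ, 0 ≤ g σ) : 0 ≤ En g := by
  simpa only [En_const] using En_mono hg

lemma abs_En_le (g : Equiv.Perm (Fin n) → ℝ) : |En g| ≤ En fun σ => |g σ| := by
  rw [En, abs_div, Nat.abs_cast]
  exact div_le_div_of_nonneg_right (abs_sum_le_sum_abs _ _) (Nat.cast_nonneg _)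

lemma probLisLE_eq_En (n k : ℕ) :
    probLisLE n k = En fun σ : Equiv.Perm (Fin n) => if lisLen σ ≤ k then 1 else 0 := by
  rw [probLisLE, En, sum_boole, cardLisLE, Fintype.card_perm, Fintype.card_fin]

lemma one_sub_probLisLE_eq_En (n k : ℕ) :
    1 - probLisLE n k = En fun σ : Equiv.Perm (Fin n) => if k < lisLen σ then 1 else 0 := by
  rw [probLisLE_eq_En]
  nth_rw 1 [← En_const (n := n) 1]
  rw [← En_sub]
  refine congrArg En (funext fun σ => ?_)
  by_cases h : lisLen σ ≤ k <;> simp [h, ← not_le]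

end UniformExpectation

section PointDeletion

variable {n : ℕ}

/-- The permutation of `Fin n` obtained by deleting the point `(i, σ i)` from the graph of `σ` and
relabelling the remaining rows and columns in increasing order. -/
noncomputable def deletePoint (i : Fin (n + 1)) (σ : Equiv.Perm (Fin (n + 1))) :
    Equiv.Perm (Fin n) :=
  Equiv.removeNone ((finSuccEquiv' i).symm.trans (σ.trans (finSuccEquiv' (σ i))))

lemma succAbove_deletePoint (i : Fin (n + 1)) (σ : Equiv.Perm (Fin (n + 1))) (a : Fin n) :
    (σ i).succAbove (deletePoint i σ a) = σ (i.succAbove a) := by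
  obtain ⟨b, hb⟩ := Fin.exists_succAbove_eq (σ.injective.ne (Fin.succAbove_ne i a))
  have hsome : ((finSuccEquiv' i).symm.trans (σ.trans (finSuccEquiv' (σ i)))) (some a) =
      some b := by simp [← hb]
  have := Equiv.removeNone_some _ ⟨b, hsome⟩
  rw [hsome, Option.some_inj] at this
  rw [deletePoint, this, hb]

lemma bijective_apply_deletePoint (i : Fin (n + 1)) :
    Function.Bijective fun σ : Equiv.Perm (Fin (n + 1)) => (σ i, deletePoint i σ) := by
  rw [Fintype.bijective_iff_injective_and_card]
  refine ⟨fun σ τ hστ => Equiv.ext fun x => ?_, by simp [Fintype.card_perm, Nat.factorial_succ]⟩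
  obtain ⟨hi, hdel⟩ := Prod.ext_iff.1 hστ
  simp only at hi hdel
  rcases eq_or_ne x i with rfl | hx
  · exact hi
  · obtain ⟨a, rfl⟩ := Fin.exists_succAbove_eq hx
    rw [← succAbove_deletePoint, ← succAbove_deletePoint, hi, hdel]

lemma En_comp_deletePoint (i : Fin (n + 1)) (g : Equiv.Perm (Fin n) → ℝ) :
    En (fun σ => g (deletePoint i σ)) = En g := by
  have hsum : ∑ σ, g (deletePoint i σ) = (n + 1) * ∑ τ, g τ := by
    rw [Fintype.sum_bijective _ (bijective_apply_deletePoint i) _ (fun x => g x.2) fun _ => rfl,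
      Fintype.sum_prod_type]
    simp
  rw [En, hsum, En, Fintype.card_perm, Fintype.card_perm, Fintype.card_fin, Fintype.card_fin,
    Nat.factorial_succ]
  push_cast
  exact mul_div_mul_left _ _ (by positivity)

lemma lisLen_deletePoint_le (i : Fin (n + 1)) (σ : Equiv.Perm (Fin (n + 1))) :
    lisLen (deletePoint i σ) ≤ lisLen σ := by
  obtain ⟨s, hs, hcard⟩ := exists_strictMonoOn_card_eq_lisLen (deletePoint i σ)
  rw [← hcard, ← card_map i.succAboveEmb]
  refine card_le_lisLen ?_
  rw [coe_map]
  rintro _ ⟨a, ha, rfl⟩ _ ⟨b, hb, rfl⟩ hab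
  simp only [Fin.succAboveEmb_apply, ← succAbove_deletePoint] at hab ⊢
  exact Fin.strictMono_succAbove _ (hs ha hb ((Fin.strictMono_succAbove i).lt_iff_lt.1 hab))

lemma card_erase_le_lisLen_deletePoint (i : Fin (n + 1)) {σ : Equiv.Perm (Fin (n + 1))}
    {s : Finset (Fin (n + 1))} (hs : StrictMonoOn (fun i => σ i) (s : Set (Fin (n + 1)))) :
    #(s.erase i) ≤ lisLen (deletePoint i σ) := by
  have hmap : s.erase i = ({a | i.succAbove a ∈ s} : Finset (Fin n)).map i.succAboveEmb := by
    ext x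
    simp only [mem_erase, Finset.mem_map, mem_filter_univ, Fin.succAboveEmb_apply]
    refine ⟨fun ⟨hx, hxs⟩ => ?_, ?_⟩
    · obtain ⟨a, rfl⟩ := Fin.exists_succAbove_eq hx
      exact ⟨a, hxs, rfl⟩
    · rintro ⟨a, ha, rfl⟩
      exact ⟨Fin.succAbove_ne i a, ha⟩
  rw [hmap, card_map]
  refine card_le_lisLen fun a ha b hb hab => ?_
  rw [coe_filter_univ] at ha hb
  have := hs ha hb (Fin.strictMono_succAbove i hab)
  simp only [← succAbove_deletePoint] at this
  exact (Fin.strictMono_succAbove _).lt_iff_lt.1 this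

variable {φ : ℕ → ℝ} {c : ℝ}

/-- Deleting a point off a fixed longest increasing subsequence does not change its length. -/
lemma sum_sub_lisLen_deletePoint_le (hφ : Antitone φ) (hc : ∀ k, φ k ≤ φ (k + 1) + c)
    (σ : Equiv.Perm (Fin (n + 1))) :
    ∑ i, (φ (lisLen (deletePoint i σ)) - φ (lisLen σ)) ≤ c * lisLen σ := by
  obtain ⟨s, hs, hcard⟩ := exists_strictMonoOn_card_eq_lisLen σ
  calc ∑ i, (φ (lisLen (deletePoint i σ)) - φ (lisLen σ)) ≤ ∑ i, if i ∈ s then c else 0 := by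
        refine sum_le_sum fun i _ => ?_
        have hdel := hφ (card_erase_le_lisLen_deletePoint i hs)
        split_ifs with his
        · have hstep := hc (#(s.erase i))
          rw [card_erase_add_one his, hcard] at hstep
          linarith
        · rw [erase_eq_of_notMem his, hcard] at hdel
          linarith
    _ = c * lisLen σ := by
        rw [sum_ite_mem, univ_inter, sum_const, hcard, nsmul_eq_mul, mul_comm]

lemma En_lisLen_anti (hφ : Antitone φ) :
    Antitone fun n => En fun σ : Equiv.Perm (Fin n) => φ (lisLen σ) := by
  refine antitone_nat_of_succ_le fun n => ?_
  rw [← En_comp_deletePoint 0 fun σ : Equiv.Perm (Fin n) => φ (lisLen σ)]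
  exact En_mono fun σ => hφ (lisLen_deletePoint_le 0 σ)

lemma En_lisLen_sub_succ_le (hφ : Antitone φ) (hc : ∀ k, φ k ≤ φ (k + 1) + c) (n : ℕ) :
    En (fun σ : Equiv.Perm (Fin n) => φ (lisLen σ)) -
        En (fun σ : Equiv.Perm (Fin (n + 1)) => φ (lisLen σ)) ≤
      c * En (fun σ : Equiv.Perm (Fin (n + 1)) => (lisLen σ : ℝ)) / (n + 1) := by
  rw [le_div_iff₀ (by positivity), ← En_const_mul]
  refine le_trans (le_of_eq ?_) (En_mono fun σ => sum_sub_lisLen_deletePoint_le hφ hc σ)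
  simp only [En_sum, En_sub, En_comp_deletePoint _ fun τ => φ (lisLen τ), sum_const, card_univ,
    Fintype.card_fin, nsmul_eq_mul]
  push_cast
  ring

lemma probLisLE_anti (k : ℕ) : Antitone fun n => probLisLE n k := by
  simp only [probLisLE_eq_En]
  refine En_lisLen_anti (φ := fun u => if u ≤ k then 1 else 0) fun u v huv => ?_
  by_cases hv : v ≤ k
  · simp [hv, huv.trans hv]
  · simp only [hv, if_false]
    positivity

end PointDeletion

section PoissonMoments

variable {t S A B : ℝ} {h : ℕ → ℝ}

lemma poissonWeight_succ_mul (t : ℝ) (n : ℕ) :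
    poissonWeight t (n + 1) * (n + 1) = t * poissonWeight t n := by
  rw [poissonWeight, poissonWeight, Nat.factorial_succ]
  push_cast
  field_simp
  ring

lemma hasSum_poissonWeight_mul_id (t : ℝ) : HasSum (fun n => poissonWeight t n * n) t := by
  rw [← hasSum_nat_add_iff' 1]
  simpa [poissonWeight_succ_mul] using (hasSum_poissonWeight t).mul_left t

lemma hasSum_poissonWeight_mul_descFactorial (t : ℝ) :
    HasSum (fun n : ℕ => poissonWeight t n * (n * ((n : ℝ) - 1))) (t ^ 2) := by
  rw [← hasSum_nat_add_iff' 1]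
  simpa [← mul_assoc, poissonWeight_succ_mul, sq] using (hasSum_poissonWeight_mul_id t).mul_left t

lemma hasSum_poissonWeight_variance (t : ℝ) :
    HasSum (fun n : ℕ => poissonWeight t n * ((n : ℝ) - t) ^ 2) t := by
  have hsum := ((hasSum_poissonWeight_mul_descFactorial t).add
    ((hasSum_poissonWeight_mul_id t).mul_left (1 - 2 * t))).add
    ((hasSum_poissonWeight t).mul_left (t ^ 2))
  rw [show t ^ 2 + (1 - 2 * t) * t + t ^ 2 * 1 = t by ring] at hsum
  exact hsum.congr_fun fun n => by ring

lemma hasSum_poisson_le (ht : 0 ≤ t) (hS : HasSum (fun n => poissonWeight t n * h n) S)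
    (hh : ∀ n : ℕ, h n ≤ A + B * ((n : ℝ) - t) ^ 2) : S ≤ A + B * t := by
  have hsum := ((hasSum_poissonWeight t).mul_left A).add
    ((hasSum_poissonWeight_variance t).mul_left B)
  rw [mul_one] at hsum
  refine hasSum_le (fun n => ?_) hS hsum
  have := mul_le_mul_of_nonneg_left (hh n) (poissonWeight_nonneg ht n)
  linarith

lemma le_hasSum_poisson (ht : 0 ≤ t) (hS : HasSum (fun n => poissonWeight t n * h n) S)
    (hh : ∀ n : ℕ, A - B * ((n : ℝ) - t) ^ 2 ≤ h n) : A - B * t ≤ S := by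
  have hneg : HasSum (fun n => poissonWeight t n * -h n) (-S) := by simpa using hS.neg
  linarith [hasSum_poisson_le ht hneg (A := -A) (B := B) fun n => by linarith [hh n]]

end PoissonMoments

section DePoissonization

variable (n k : ℕ)

lemma one_sub_probLisLE_le_poissonLisCDF :
    1 - probLisLE n k ≤ 4 / 3 * (1 - poissonLisCDF (√n + 2) k) := by
  have hr := Real.sqrt_nonneg n
  have hn := Real.sq_sqrt (n.cast_nonneg (α := ℝ))
  set r := √(n : ℝ)
  set p := 1 - probLisLE n k
  have hp0 : 0 ≤ p := sub_nonneg.2 (probLisLE_le_one n k)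
  have hchebyshev : poissonLisCDF (r + 2) k ≤ probLisLE n k +
      p / (4 * r + 4) ^ 2 * (r + 2) ^ 2 := by
    refine hasSum_poisson_le (sq_nonneg _) (hasSum_poissonLisCDF (by positivity) k) fun N => ?_
    rw [div_mul_eq_mul_div]
    rcases le_or_gt n N with hnN | hNn
    · refine (probLisLE_anti k hnN).trans (le_add_of_nonneg_right ?_)
      positivity
    · have hNn' : (N : ℝ) < n := by exact_mod_cast hNn
      have hdev : (4 * r + 4) ^ 2 ≤ ((N : ℝ) - (r + 2) ^ 2) ^ 2 := by
        rw [← neg_sq ((N : ℝ) - (r + 2) ^ 2)]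
        gcongr
        nlinarith
      have : p ≤ p * ((N : ℝ) - (r + 2) ^ 2) ^ 2 / (4 * r + 4) ^ 2 := by
        rw [le_div_iff₀ (by positivity)]
        gcongr
      linarith [probLisLE_le_one N k]
  have hratio : p / (4 * r + 4) ^ 2 * (r + 2) ^ 2 ≤ p * (1 / 4) := by
    rw [div_mul_eq_mul_div, mul_div_assoc]
    refine mul_le_mul_of_nonneg_left ?_ hp0
    rw [div_le_div_iff₀ (by positivity) (by norm_num)]
    nlinarith
  linarith

variable {n}

lemma probLisLE_le_poissonLisCDF (hn2 : 2 < √(n : ℝ)) :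
    probLisLE n k ≤ 16 / 15 * poissonLisCDF (√n - 2) k := by
  have hn := Real.sq_sqrt (n.cast_nonneg (α := ℝ))
  set r := √(n : ℝ)
  set p := probLisLE n k
  have hp0 : 0 ≤ p := probLisLE_nonneg n k
  have hr : 0 < 4 * r - 4 := by linarith
  have hchebyshev : p - p / (4 * r - 4) ^ 2 * (r - 2) ^ 2 ≤ poissonLisCDF (r - 2) k := by
    refine le_hasSum_poisson (sq_nonneg _) (hasSum_poissonLisCDF (sub_pos.2 hn2) k) fun N => ?_
    rw [div_mul_eq_mul_div]
    rcases le_or_gt N n with hNn | hnN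
    · refine (sub_le_self _ ?_).trans (probLisLE_anti k hNn)
      positivity
    · have hnN' : (n : ℝ) < N := by exact_mod_cast hnN
      have hdev : (4 * r - 4) ^ 2 ≤ ((N : ℝ) - (r - 2) ^ 2) ^ 2 :=
        pow_le_pow_left₀ hr.le (by nlinarith) 2
      have : p ≤ p * ((N : ℝ) - (r - 2) ^ 2) ^ 2 / (4 * r - 4) ^ 2 := by
        rw [le_div_iff₀ (by positivity)]
        gcongr
      linarith [probLisLE_nonneg N k]
  have hratio : p / (4 * r - 4) ^ 2 * (r - 2) ^ 2 ≤ p * (1 / 16) := by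
    rw [div_mul_eq_mul_div, mul_div_assoc]
    refine mul_le_mul_of_nonneg_left ?_ hp0
    rw [div_le_div_iff₀ (by positivity) (by norm_num)]
    nlinarith
  linarith

end DePoissonization

section EdgeScale

/-- `l` is a natural number of order `n ^ (1 / 6)`, the scale of the fluctuations of the longest
increasing subsequence; the margins `± 2` leave room for de-Poissonization. -/
structure EdgeScale (n l : ℕ) : Prop where
  nine_le : 9 ≤ l
  sqrt_add_two_le : √n + 2 ≤ (l : ℝ) ^ 3
  cube_le : (l : ℝ) ^ 3 ≤ 8 * (√n - 2)

lemma eventually_exists_edgeScale (l₀ : ℕ) : ∀ᶠ n : ℕ in atTop, ∃ l, l₀ ≤ l ∧ EdgeScale n l := by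
  have hsqrt : Tendsto (fun n : ℕ => √(n : ℝ)) atTop atTop :=
    Real.tendsto_sqrt_atTop.comp tendsto_natCast_atTop_atTop
  filter_upwards [hsqrt.eventually_ge_atTop 1000, hsqrt.eventually_ge_atTop ((l₀ : ℝ) ^ 3)]
    with n hn hnl₀
  set r := √(n : ℝ)
  have hex : ∃ l : ℕ, r + 2 ≤ (l : ℝ) ^ 3 := by
    obtain ⟨l, hl⟩ := exists_nat_ge (r + 2)
    exact ⟨l, hl.trans (le_self_pow₀ (by linarith) (by norm_num))⟩
  have hspec := Nat.find_spec hex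
  have hmin := fun m => Nat.find_min hex (m := m)
  set l := Nat.find hex
  have hle {m : ℕ} (hm : (m : ℝ) ^ 3 < r + 2) : m ≤ l := by
    by_contra! hlm
    have : (l : ℝ) ^ 3 ≤ (m : ℝ) ^ 3 := by gcongr
    linarith
  have h9 : 9 ≤ l := hle (by push_cast; linarith)
  refine ⟨l, hle (by linarith), h9, hspec, ?_⟩
  obtain ⟨m, hm⟩ := Nat.exists_eq_add_of_le' (show 1 ≤ l by lia)
  have hm8 : (8 : ℝ) ≤ m := by exact_mod_cast (by lia : 8 ≤ m)
  have hmr := not_le.1 (hmin m (by lia))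
  have : (l : ℝ) ^ 3 ≤ 2 * (m : ℝ) ^ 3 := by
    calc (l : ℝ) ^ 3 ≤ (9 / 8 * m) ^ 3 := by
          rw [hm]
          push_cast
          gcongr
          linarith
      _ ≤ 2 * (m : ℝ) ^ 3 := by
          rw [mul_pow]
          gcongr
          norm_num
  linarith

variable {n l : ℕ}

lemma nine_le_of_edgeScale (hnl : EdgeScale n l) : (9 : ℝ) ≤ l := by exact_mod_cast hnl.nine_le

lemma two_lt_sqrt_of_edgeScale (hnl : EdgeScale n l) : 2 < √(n : ℝ) := by
  have := nine_le_of_edgeScale hnl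
  have : (0 : ℝ) < (l : ℝ) ^ 3 := by positivity
  linarith [hnl.cube_le]

end EdgeScale

section TailBounds

lemma decayRate_pow_le {l : ℕ} (hl : 1 ≤ l) (r : ℕ) :
    decayRate l ^ (2 * l * r) ≤ (1 / 2) ^ r := by
  rw [pow_mul]
  refine pow_le_pow_left₀ (pow_nonneg (decayRate_nonneg hl) _) ?_ r
  have hexp := Real.one_sub_div_pow_le_exp_neg (n := 2 * l) (t := 1) (by exact_mod_cast (by lia))
  push_cast at hexp
  exact hexp.trans Real.exp_neg_one_lt_half.le

lemma two_pow_le_one_add_inv_pow {l : ℕ} (hl : 1 ≤ l) (r : ℕ) :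
    (2 : ℝ) ^ r ≤ (1 + 1 / (l : ℝ)) ^ (l * r) := by
  have : (0 : ℝ) < l := by exact_mod_cast hl
  have hinv : (0 : ℝ) ≤ 1 / l := by positivity
  rw [pow_mul]
  refine pow_le_pow_left₀ zero_le_two ?_ r
  calc (2 : ℝ) = 1 + l * (1 / l) := by
        field_simp
        norm_num
    _ ≤ (1 + 1 / (l : ℝ)) ^ l := one_add_mul_le_pow (by linarith) l

variable {n l : ℕ} {x : ℝ}

lemma En_lt_lisLen_le (hnl : EdgeScale n l) (r : ℕ) (hx : 2 * √n + 6 + (1 + 2 * r) * l ≤ x) :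
    En (fun σ : Equiv.Perm (Fin n) => if x < lisLen σ then (1 : ℝ) else 0) ≤
      342 * (1 / 2) ^ r := by
  have hl : 1 ≤ l := by linarith [hnl.nine_le]
  have hs : 0 < √(n : ℝ) + 2 := by positivity
  have hx0 : 0 ≤ x := le_trans (by positivity) hx
  simp only [← Nat.floor_lt hx0, ← one_sub_probLisLE_eq_En]
  have hedge : ⌈2 * (√(n : ℝ) + 2)⌉₊ + l + 2 * l * r ≤ ⌊x⌋₊ := by
    refine Nat.le_floor ?_
    have := Nat.ceil_lt_add_one (by positivity : 0 ≤ 2 * (√(n : ℝ) + 2))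
    push_cast
    linarith
  have htail := one_sub_poissonLisCDF_le hs hl hnl.sqrt_add_two_le (2 * l * r)
  have : (0 : ℝ) ≤ (1 / 2) ^ r := by positivity
  linarith [one_sub_probLisLE_le_poissonLisCDF n ⌊x⌋₊, poissonLisCDF_mono hs hedge,
    decayRate_pow_le hl r]

lemma En_lisLen_le_le (hnl : EdgeScale n l) (r : ℕ) (hx : x + 5 + (12 + r) * l ≤ 2 * √n) :
    En (fun σ : Equiv.Perm (Fin n) => if (lisLen σ : ℝ) ≤ x then (1 : ℝ) else 0) ≤
      2 * (1 / 2) ^ r := by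
  rcases lt_or_ge x 0 with hx0 | hx0
  · simp only [(hx0.trans_le (Nat.cast_nonneg _)).not_ge, if_false, En_const]
    positivity
  simp only [← Nat.le_floor_iff hx0, ← probLisLE_eq_En]
  have hs : 0 < √(n : ℝ) - 2 := sub_pos.2 (two_lt_sqrt_of_edgeScale hnl)
  have hl : 1 ≤ l := by linarith [hnl.nine_le]
  have hF := (poissonLisCDF_pos hs ⌊x⌋₊).le
  have hpow : poissonLisCDF (√n - 2) ⌊x⌋₊ * 2 ^ r ≤ 1 := by
    refine (mul_le_mul_of_nonneg_left (two_pow_le_one_add_inv_pow hl r) hF).trans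
      (poissonLisCDF_mul_pow_le_one hs hnl.nine_le (by linarith [hnl.sqrt_add_two_le])
        hnl.cube_le (Nat.le_floor ?_))
    push_cast
    linarith [Nat.floor_le hx0]
  have : poissonLisCDF (√n - 2) ⌊x⌋₊ ≤ (1 / 2) ^ r := by
    rwa [one_div, inv_pow, ← one_div, le_div_iff₀ (by positivity)]
  have : (0 : ℝ) ≤ (1 / 2) ^ r := by positivity
  linarith [probLisLE_le_poissonLisCDF ⌊x⌋₊ (two_lt_sqrt_of_edgeScale hnl)]

end TailBounds

section Moments

/-- The deviation of the longest increasing subsequence from `2√n`, in units of `l`. -/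
noncomputable def edgeDev {n : ℕ} (l : ℕ) (σ : Equiv.Perm (Fin n)) : ℝ :=
  |(lisLen σ : ℝ) - 2 * √n| / l

lemma edgeDev_nonneg {n : ℕ} (l : ℕ) (σ : Equiv.Perm (Fin n)) : 0 ≤ edgeDev l σ := by
  unfold edgeDev
  positivity

lemma En_le_edgeDev_le {n l : ℕ} (hnl : EdgeScale n l) (r : ℕ) :
    En (fun σ : Equiv.Perm (Fin n) => if 14 + 2 * (r : ℝ) ≤ edgeDev l σ then (1 : ℝ) else 0) ≤
      344 * (1 / 2) ^ r := by
  have hl := nine_le_of_edgeScale hnl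
  have : (0 : ℝ) ≤ r := r.cast_nonneg
  have hupper := En_lt_lisLen_le hnl r (x := 2 * √n + (13 + 2 * r) * l) (by nlinarith)
  have hlower := En_lisLen_le_le hnl r (x := 2 * √n - (14 + 2 * r) * l) (by nlinarith)
  refine le_trans (En_mono fun σ => ?_) (((En_add _ _).trans_le (add_le_add hupper hlower)).trans
    (by linarith))
  split_ifs with hdev hgt hle hle <;> try norm_num
  rw [edgeDev, le_div_iff₀ (by linarith), le_abs] at hdev
  rcases hdev with hdev | hdev <;> linarith

lemma pow_le_sum_layers {x : ℝ} (hx : 0 ≤ x) {R : ℕ} (hxR : x ≤ R) (q : ℕ) :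
    x ^ q ≤ 14 ^ q +
      ∑ r ∈ range (R + 1), (16 + 2 * (r : ℝ)) ^ q * if 14 + 2 * (r : ℝ) ≤ x then 1 else 0 := by
  have hterm (r : ℕ) :
      0 ≤ (16 + 2 * (r : ℝ)) ^ q * if 14 + 2 * (r : ℝ) ≤ x then (1 : ℝ) else 0 := by
    split_ifs <;> positivity
  rcases lt_or_ge x 14 with hx14 | hx14
  · exact (pow_le_pow_left₀ hx hx14.le q).trans
      (le_add_of_nonneg_right (sum_nonneg fun r _ => hterm r))
  set r := ⌊(x - 14) / 2⌋₊
  have hfloor := Nat.floor_le (by linarith : 0 ≤ (x - 14) / 2)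
  have hlt := Nat.lt_floor_add_one ((x - 14) / 2)
  have hrR : r ∈ range (R + 1) := by
    rw [mem_range]
    exact_mod_cast (by linarith : (r : ℝ) < R + 1)
  calc x ^ q ≤ (16 + 2 * (r : ℝ)) ^ q := pow_le_pow_left₀ hx (by linarith) q
    _ = (16 + 2 * (r : ℝ)) ^ q * if 14 + 2 * (r : ℝ) ≤ x then 1 else 0 := by
        rw [if_pos (by linarith), mul_one]
    _ ≤ ∑ r ∈ range (R + 1), (16 + 2 * (r : ℝ)) ^ q * if 14 + 2 * (r : ℝ) ≤ x then 1 else 0 :=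
        single_le_sum (fun r _ => hterm r) hrR
    _ ≤ _ := le_add_of_nonneg_left (by positivity)

lemma summable_layers (q : ℕ) : Summable fun r : ℕ => (16 + 2 * (r : ℝ)) ^ q * (1 / 2) ^ r := by
  have hgeom : Summable fun r : ℕ => (r : ℝ) ^ q * (1 / 2 : ℝ) ^ r :=
    summable_pow_mul_geometric_of_norm_lt_one q (by norm_num)
  refine Summable.of_nonneg_of_le (fun r => by positivity) (fun r => ?_)
    (((summable_nat_add_iff 1).2 hgeom).mul_left (16 ^ q * 2))
  calc (16 + 2 * (r : ℝ)) ^ q * (1 / 2) ^ r ≤ (16 * ((r + 1 : ℕ) : ℝ)) ^ q * (1 / 2) ^ r := by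
        gcongr
        push_cast
        linarith [r.cast_nonneg (α := ℝ)]
    _ = 16 ^ q * 2 * (((r + 1 : ℕ) : ℝ) ^ q * (1 / 2) ^ (r + 1)) := by
        rw [mul_pow, pow_succ (1 / 2 : ℝ)]
        ring

theorem exists_En_edgeDev_pow_le (q : ℕ) : ∃ K : ℝ, 0 < K ∧ ∀ n l, EdgeScale n l →
    En (fun σ : Equiv.Perm (Fin n) => edgeDev l σ ^ q) ≤ K := by
  have hpos (r : ℕ) : (0 : ℝ) ≤ (16 + 2 * (r : ℝ)) ^ q * (1 / 2) ^ r := by positivity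
  refine ⟨14 ^ q + 344 * ∑' r : ℕ, (16 + 2 * (r : ℝ)) ^ q * (1 / 2) ^ r,
    add_pos_of_pos_of_nonneg (by positivity) (mul_nonneg (by norm_num) (tsum_nonneg hpos)),
    fun n l hnl => ?_⟩
  obtain ⟨M, hM⟩ := (Set.finite_range (edgeDev (n := n) l)).bddAbove
  obtain ⟨R, hR⟩ := exists_nat_ge M
  have hdevR (σ : Equiv.Perm (Fin n)) : edgeDev l σ ≤ R := (hM (Set.mem_range_self σ)).trans hR
  refine (En_mono fun σ => pow_le_sum_layers (edgeDev_nonneg l σ) (hdevR σ) q).trans ?_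
  rw [En_add, En_const, En_sum]
  gcongr
  calc ∑ r ∈ range (R + 1), En (fun σ : Equiv.Perm (Fin n) =>
          (16 + 2 * (r : ℝ)) ^ q * if 14 + 2 * (r : ℝ) ≤ edgeDev l σ then 1 else 0)
      ≤ ∑ r ∈ range (R + 1), (16 + 2 * (r : ℝ)) ^ q * (344 * (1 / 2) ^ r) := by
        gcongr with r
        rw [En_const_mul]
        gcongr
        exact En_le_edgeDev_le hnl r
    _ = 344 * ∑ r ∈ range (R + 1), (16 + 2 * (r : ℝ)) ^ q * (1 / 2) ^ r := by
        rw [mul_sum]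
        exact sum_congr rfl fun r _ => mul_left_comm _ _ _
    _ ≤ 344 * ∑' r : ℕ, (16 + 2 * (r : ℝ)) ^ q * (1 / 2) ^ r := by
        gcongr
        exact (summable_layers q).sum_le_tsum _ fun r _ => hpos r

/-- The mean length of the longest increasing subsequence of a uniform permutation of `Fin n`. -/
noncomputable def lisMean (n : ℕ) : ℝ := En fun σ : Equiv.Perm (Fin n) => (lisLen σ : ℝ)

lemma lisMean_le (n : ℕ) : lisMean n ≤ n :=
  (En_mono fun σ => by exact_mod_cast lisLen_le σ).trans_eq (En_const (n : ℝ))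

lemma exists_abs_lisMean_sub_le :
    ∃ K : ℝ, 0 < K ∧ ∀ n l, EdgeScale n l → |lisMean n - 2 * √n| ≤ K * l := by
  obtain ⟨K, hK, hmoment⟩ := exists_En_edgeDev_pow_le 1
  refine ⟨K, hK, fun n l hnl => ?_⟩
  have hl : (0 : ℝ) < l := by linarith [nine_le_of_edgeScale hnl]
  have hdev (σ : Equiv.Perm (Fin n)) : |(lisLen σ : ℝ) - 2 * √n| = l * edgeDev l σ ^ 1 := by
    rw [edgeDev, pow_one, mul_div_cancel₀ _ hl.ne']
  calc |lisMean n - 2 * √n| = |En fun σ : Equiv.Perm (Fin n) => (lisLen σ : ℝ) - 2 * √n| := by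
        rw [En_sub, En_const, lisMean]
    _ ≤ En fun σ : Equiv.Perm (Fin n) => |(lisLen σ : ℝ) - 2 * √n| := abs_En_le _
    _ = l * En fun σ : Equiv.Perm (Fin n) => edgeDev l σ ^ 1 := by
        simp only [hdev, En_const_mul]
    _ ≤ K * l := by
        rw [mul_comm K]
        gcongr
        exact hmoment n l hnl

lemma exists_lisMean_le_mul_sqrt : ∃ C : ℝ, 0 < C ∧ ∀ n, lisMean n ≤ C * √n := by
  obtain ⟨K, hK, hdev⟩ := exists_abs_lisMean_sub_le
  obtain ⟨N, hN⟩ := eventually_atTop.1 (eventually_exists_edgeScale 1)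
  refine ⟨2 + 8 * K + √N, by positivity, fun n => ?_⟩
  have hn := Real.sqrt_nonneg (n : ℝ)
  have hKn := mul_nonneg hK.le hn
  have hNn := mul_nonneg (Real.sqrt_nonneg (N : ℝ)) hn
  rcases le_or_gt N n with hNn | hnN
  · obtain ⟨l, -, hnl⟩ := hN n hNn
    have hl : (l : ℝ) ≤ 8 * √n := by
      linarith [hnl.cube_le, le_self_pow₀ (by linarith [nine_le_of_edgeScale hnl] : (1 : ℝ) ≤ l)
        (by norm_num : 3 ≠ 0)]
    have := mul_le_mul_of_nonneg_left hl hK.le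
    linarith [(abs_le.1 (hdev n l hnl)).2]
  · have hsq := Real.mul_self_sqrt (n.cast_nonneg (α := ℝ))
    have : √(n : ℝ) * √n ≤ √N * √n := by gcongr
    linarith [lisMean_le n]

end Moments

section Interpolation

lemma one_le_two_mul_sqrt_mul_sub {x : ℝ} (hx : 0 ≤ x) : 1 ≤ 2 * √(x + 1) * (√(x + 1) - √x) := by
  nlinarith [Real.sq_sqrt hx, Real.sq_sqrt (by linarith : 0 ≤ x + 1), sq_nonneg (√(x + 1) - √x)]

lemma abs_sqrt_sub_sqrt_le {a b : ℝ} (ha : 0 ≤ a) (hb : 0 < b) :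
    |√a - √b| ≤ (1 + (a - b) ^ 2 / b) / 2 := by
  have hsb := Real.sqrt_pos.2 hb
  have hle : |√a - √b| ≤ |a - b| / √b := by
    rw [le_div_iff₀ hsb]
    calc |√a - √b| * √b ≤ |√a - √b| * |√a + √b| := by
          gcongr
          exact (le_add_of_nonneg_left (Real.sqrt_nonneg a)).trans (le_abs_self _)
      _ = |a - b| := by
          rw [← abs_mul, mul_comm, ← sq_sub_sq, Real.sq_sqrt ha, Real.sq_sqrt hb.le]
  have hsq : (|a - b| / √b) ^ 2 = (a - b) ^ 2 / b := by rw [div_pow, sq_abs, Real.sq_sqrt hb.le]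
  linarith [two_mul_le_add_sq 1 (|a - b| / √b)]

variable {φ : ℕ → ℝ} {c C : ℝ} {n N k d : ℕ}

lemma En_lisLen_sub_le (hC : ∀ n, lisMean n ≤ C * √n) (hφ : Antitone φ)
    (hc : ∀ k, φ k ≤ φ (k + 1) + c) (hnN : n ≤ N) :
    En (fun σ : Equiv.Perm (Fin n) => φ (lisLen σ)) -
        En (fun σ : Equiv.Perm (Fin N) => φ (lisLen σ)) ≤ 2 * C * c * (√N - √n) := by
  have hC0 : 0 ≤ C := by
    simpa using (En_nonneg fun σ => (lisLen σ).cast_nonneg).trans (hC 1)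
  have hc0 : 0 ≤ c := by linarith [hc 0, hφ (Nat.zero_le (0 + 1))]
  induction N, hnN using Nat.le_induction with
  | base => simp
  | succ N _ ih =>
    have hincr : c * lisMean (N + 1) / (N + 1) ≤ 2 * C * c * (√(N + 1 : ℕ) - √N) := by
      have hmean := hC (N + 1)
      push_cast at hmean ⊢
      have hgap := one_le_two_mul_sqrt_mul_sub N.cast_nonneg
      rw [div_le_iff₀ (by positivity)]
      calc c * lisMean (N + 1) ≤ c * (C * √(N + 1)) := by gcongr
        _ ≤ c * (C * √(N + 1)) * (2 * √(N + 1) * (√(N + 1) - √N)) :=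
            le_mul_of_one_le_right (by positivity) hgap
        _ = 2 * C * c * (√(N + 1) - √N) * (√(N + 1) ^ 2) := by ring
        _ = 2 * C * c * (√(N + 1) - √N) * (N + 1) := by rw [Real.sq_sqrt (by positivity)]
    rw [lisMean] at hincr
    linarith [En_lisLen_sub_succ_le hφ hc N]

lemma abs_En_lisLen_sub_le (hC : ∀ n, lisMean n ≤ C * √n) (hφ : Antitone φ)
    (hc : ∀ k, φ k ≤ φ (k + 1) + c) (n N : ℕ) :
    |En (fun σ : Equiv.Perm (Fin N) => φ (lisLen σ)) -
        En (fun σ : Equiv.Perm (Fin n) => φ (lisLen σ))| ≤ 2 * C * c * |√N - √n| := by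
  wlog hnN : n ≤ N generalizing n N
  · rw [abs_sub_comm, abs_sub_comm √N]
    exact this N n (le_of_not_ge hnN)
  · have hsqrt : √(n : ℝ) ≤ √N := by gcongr
    rw [abs_sub_comm, abs_of_nonneg (sub_nonneg.2 (En_lisLen_anti hφ hnN)),
      abs_of_nonneg (sub_nonneg.2 hsqrt)]
    exact En_lisLen_sub_le hC hφ hc hnN

/-- The piecewise linear cutoff equal to `1` up to `k` and to `0` from `k + d` on. -/
noncomputable def rampDown (k d u : ℕ) : ℝ := max 0 (min 1 (((k : ℝ) + d - u) / d))

lemma rampDown_anti (k d : ℕ) : Antitone (rampDown k d) := fun u v huv => by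
  unfold rampDown
  gcongr

lemma rampDown_le_succ_add (k d u : ℕ) : rampDown k d u ≤ rampDown k d (u + 1) + 1 / d := by
  have hshift : ((k : ℝ) + d - (u + 1 : ℕ)) / d = ((k : ℝ) + d - u) / d - 1 / d := by
    push_cast
    ring
  have hd : (0 : ℝ) ≤ 1 / d := by positivity
  rw [rampDown, rampDown, hshift]
  grind

lemma ite_le_rampDown (hd : 0 < d) (k u : ℕ) : (if u ≤ k then (1 : ℝ) else 0) ≤ rampDown k d u := by
  split_ifs with huk
  · have : (u : ℝ) ≤ k := by exact_mod_cast huk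
    refine le_max_of_le_right (le_min le_rfl ?_)
    rw [le_div_iff₀ (by exact_mod_cast hd)]
    linarith
  · exact le_max_left _ _

lemma rampDown_le_ite (k d u : ℕ) : rampDown k d u ≤ if u ≤ k + d then (1 : ℝ) else 0 := by
  split_ifs with hu
  · exact max_le zero_le_one (min_le_left _ _)
  · have : (k : ℝ) + d < u := by exact_mod_cast not_le.1 hu
    exact max_le le_rfl ((min_le_right _ _).trans
      (div_nonpos_of_nonpos_of_nonneg (by linarith) d.cast_nonneg))

lemma probLisLE_le_En_rampDown (hd : 0 < d) (n k : ℕ) :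
    probLisLE n k ≤ En fun σ : Equiv.Perm (Fin n) => rampDown k d (lisLen σ) := by
  rw [probLisLE_eq_En]
  exact En_mono fun σ => ite_le_rampDown hd k _

lemma En_rampDown_le_probLisLE (n k d : ℕ) :
    En (fun σ : Equiv.Perm (Fin n) => rampDown k d (lisLen σ)) ≤ probLisLE n (k + d) := by
  rw [probLisLE_eq_En]
  exact En_mono fun σ => rampDown_le_ite k d _

lemma abs_En_rampDown_sub_le (hC : ∀ n, lisMean n ≤ C * √n) (hd : 0 < d) (hCd : 16 * C ≤ d)
    (hn : 0 < n) (k N : ℕ) :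
    |En (fun σ : Equiv.Perm (Fin N) => rampDown k d (lisLen σ)) -
        En (fun σ : Equiv.Perm (Fin n) => rampDown k d (lisLen σ))| ≤
      1 / 16 + 1 / (16 * n) * ((N : ℝ) - n) ^ 2 := by
  have hd' : (0 : ℝ) < d := by exact_mod_cast hd
  have hn' : (0 : ℝ) < n := by exact_mod_cast hn
  have hslope : 2 * C * (1 / d) ≤ 1 / 8 := by
    rw [mul_one_div, div_le_div_iff₀ hd' (by norm_num)]
    linarith
  calc _ ≤ 2 * C * (1 / d) * |√N - √n| :=
        abs_En_lisLen_sub_le hC (rampDown_anti k d) (rampDown_le_succ_add k d) n N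
    _ ≤ 1 / 8 * ((1 + ((N : ℝ) - n) ^ 2 / n) / 2) := by
        gcongr
        exact abs_sqrt_sub_sqrt_le N.cast_nonneg hn'
    _ = 1 / 16 + 1 / (16 * n) * ((N : ℝ) - n) ^ 2 := by
        field_simp
        norm_num

lemma exists_probLisLE_poissonLisCDF_interlace : ∃ d : ℕ, 0 < d ∧ ∀ n k : ℕ, 0 < n →
    probLisLE n k - 1 / 8 ≤ poissonLisCDF √n (k + d) ∧
      poissonLisCDF √n k ≤ probLisLE n (k + d) + 1 / 8 := by
  obtain ⟨C, hC0, hC⟩ := exists_lisMean_le_mul_sqrt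
  obtain ⟨d, hCd⟩ := exists_nat_ge (16 * C)
  have hd : 0 < d := by exact_mod_cast (by linarith : (0 : ℝ) < d)
  refine ⟨d, hd, fun n k hn => ?_⟩
  have hs : 0 < √(n : ℝ) := Real.sqrt_pos.2 (by exact_mod_cast hn)
  have hcdf := hasSum_poissonLisCDF hs
  have hramp (N : ℕ) := abs_le.1 (abs_En_rampDown_sub_le hC hd hCd hn k N)
  have hvar : 1 / (16 * (n : ℝ)) * n = 1 / 16 := by field_simp
  simp only [Real.sq_sqrt n.cast_nonneg] at hcdf
  constructor
  · have := le_hasSum_poisson (A := probLisLE n k - 1 / 16) (B := 1 / (16 * n)) n.cast_nonneg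
      (hcdf (k + d)) fun N => by
        linarith [(hramp N).1, probLisLE_le_En_rampDown hd n k, En_rampDown_le_probLisLE N k d]
    linarith
  · have := hasSum_poisson_le (A := probLisLE n (k + d) + 1 / 16) (B := 1 / (16 * n))
      n.cast_nonneg (hcdf k) fun N => by
        linarith [(hramp N).2, probLisLE_le_En_rampDown hd N k, En_rampDown_le_probLisLE n k d]
    linarith

end Interpolation

section Variance

lemma sub_le_mul_of_succ_sub_le {F : ℕ → ℝ} {S : ℝ} {a b : ℕ} (hab : a ≤ b)
    (hF : ∀ j, a ≤ j → F (j + 1) - F j ≤ S) : F b - F a ≤ ((b : ℝ) - a) * S := by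
  induction b, hab using Nat.le_induction with
  | base => simp
  | succ b hab ih =>
    push_cast
    linarith [hF b hab]

lemma exists_probLisLE_sub_le_mul : ∃ d : ℕ, ∀ n l B a b : ℕ, EdgeScale n l → 1 ≤ B →
    8 * B ≤ l ^ 2 → a ≤ b + d → 2 * √n ≤ a + B * l →
    probLisLE n b - probLisLE n (a + d) ≤
      1 / 4 + ((b : ℝ) + d - a) * (320 * (B : ℝ) ^ 3 / l) := by
  obtain ⟨d, -, hinterlace⟩ := exists_probLisLE_poissonLisCDF_interlace
  refine ⟨d, fun n l B a b hnl hB hlB hab ha => ?_⟩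
  have hl := hnl.nine_le
  have hs := two_lt_sqrt_of_edgeScale hnl
  have hn : 0 < n := by
    by_contra! h
    norm_num [Nat.le_zero.1 h] at hs
  have htele := sub_le_mul_of_succ_sub_le (F := poissonLisCDF √n) (S := 320 * (B : ℝ) ^ 3 / l)
    hab fun j hj => by
      have : (a : ℝ) ≤ j := by exact_mod_cast hj
      exact poissonLisCDF_succ_sub_le_div (by linarith) hB (by linarith [hnl.cube_le]) (by lia)
        (by linarith [hnl.sqrt_add_two_le]) hlB (by linarith)
  push_cast at htele
  linarith [(hinterlace n b hn).1, (hinterlace n a hn).2]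

lemma exists_nat_window {x w : ℝ} {d : ℕ} (hw : 0 ≤ w) (hx : 0 ≤ x - w - d) :
    ∃ a b : ℕ, ((a + d : ℕ) : ℝ) ≤ x - w ∧ x + w ≤ b ∧ x - w - d - 1 < a ∧ b < x + w + 1 := by
  have hfloor := Nat.floor_le hx
  refine ⟨⌊x - w - d⌋₊, ⌈x + w⌉₊, ?_, Nat.le_ceil _, Nat.sub_one_lt_floor _,
    Nat.ceil_lt_add_one (by linarith [d.cast_nonneg (α := ℝ)])⟩
  push_cast
  linarith

/-- The distribution function has slope `O(1 / l)` near `2√n`, so a window of width a small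
multiple of `l` cannot carry most of the mass. -/
lemma exists_probLisLE_sub_le_half (K : ℝ) : ∃ c : ℝ, 0 < c ∧ ∃ l₀ : ℕ, ∀ n l x, EdgeScale n l →
    l₀ ≤ l → |x - 2 * √n| ≤ K * l → ∃ a b : ℕ, a ≤ x - 2 * (c * l) ∧ x + 2 * (c * l) ≤ b ∧
      probLisLE n b - probLisLE n a ≤ 1 / 2 := by
  obtain ⟨d, hslope⟩ := exists_probLisLE_sub_le_mul
  obtain ⟨B, hBK⟩ := exists_nat_ge (|K| + 3)
  have hB : (1 : ℝ) ≤ B := by linarith [abs_nonneg K]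
  have hB3 : (B : ℝ) ≤ (B : ℝ) ^ 3 := le_self_pow₀ hB (by norm_num)
  have : (0 : ℝ) ≤ d := d.cast_nonneg
  refine ⟨1 / (10240 * B ^ 3), by positivity, 2560 * B ^ 3 * (2 * d + 3), fun n l x hnl hl hx => ?_⟩
  have hl' : 2560 * (B : ℝ) ^ 3 * (2 * d + 3) ≤ l := by exact_mod_cast hl
  have hl0 : (0 : ℝ) < l := by linarith [nine_le_of_edgeScale hnl]
  have hBl : 8 * (B : ℝ) ≤ (l : ℝ) ^ 2 :=
    (by nlinarith : 8 * (B : ℝ) ≤ l).trans (le_self_pow₀ (by nlinarith) (by norm_num))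
  set w := 1 / (10240 * (B : ℝ) ^ 3) * l with hw
  have hwB : w * (10240 * (B : ℝ) ^ 3) = l := by
    rw [hw]
    field_simp
  have hw0 : 0 < w := by positivity
  have hedge : 2 * B * l ≤ 2 * √n := by nlinarith [hnl.cube_le]
  have hbulk : K * l + 2 * w + d + 1 ≤ B * l := by nlinarith [le_abs_self K]
  obtain ⟨hx_ge, hx_le⟩ := abs_le.1 hx
  obtain ⟨a, b, ha_le, hb_ge, ha_gt, hb_lt⟩ :=
    exists_nat_window (by linarith : 0 ≤ 2 * w) (by linarith : 0 ≤ x - 2 * w - d)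
  refine ⟨a + d, b, ha_le, hb_ge, ?_⟩
  push_cast at ha_le
  have hmass : ((b : ℝ) + d - a) * (320 * (B : ℝ) ^ 3 / l) ≤ 1 / 4 := by
    have : (b : ℝ) + d - a ≤ 4 * w + (2 * d + 3) := by linarith
    rw [mul_div_assoc', div_le_iff₀ hl0]
    nlinarith
  have hab : (a : ℝ) ≤ b + d := by linarith
  linarith [hslope n l B a b hnl (by exact_mod_cast hB) (by exact_mod_cast hBl)
    (by exact_mod_cast hab) (by linarith)]

/-- The standard deviation of the longest increasing subsequence of a uniform permutation of
`Fin n`. -/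
noncomputable def lisSD (n : ℕ) : ℝ := √(VarN fun σ : Equiv.Perm (Fin n) => (lisLen σ : ℝ))

lemma lisSD_nonneg (n : ℕ) : 0 ≤ lisSD n := Real.sqrt_nonneg _

lemma lisLenBar_eq {n : ℕ} (σ : Equiv.Perm (Fin n)) :
    lisLenBar σ = ((lisLen σ : ℝ) - lisMean n) / lisSD n := rfl

lemma probLisLE_add_le_variance_div_sq {n a b : ℕ} {t : ℝ} (ht : 0 < t) (ha : a ≤ lisMean n - t)
    (hb : lisMean n + t ≤ b) :
    probLisLE n a + (1 - probLisLE n b) ≤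
      VarN (fun σ : Equiv.Perm (Fin n) => (lisLen σ : ℝ)) / t ^ 2 := by
  rw [probLisLE_eq_En, one_sub_probLisLE_eq_En, ← En_add, le_div_iff₀ (by positivity), mul_comm,
    ← En_const_mul]
  refine En_mono fun σ => ?_
  rw [← lisMean, ← sq_abs (_ - _)]
  have hfar : lisLen σ ≤ a ∨ b < lisLen σ → t ^ 2 ≤ |(lisLen σ : ℝ) - lisMean n| ^ 2 := by
    intro h
    refine pow_le_pow_left₀ ht.le (le_abs.2 ?_) 2
    rcases h with h | h
    · have : (lisLen σ : ℝ) ≤ a := by exact_mod_cast h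
      right
      linarith
    · have : (b : ℝ) < lisLen σ := by exact_mod_cast h
      left
      linarith
  have hab : a ≤ b := by exact_mod_cast (by linarith : (a : ℝ) ≤ b)
  split_ifs with hle hlt hlt
  · lia
  · simpa using hfar (.inl hle)
  · simpa using hfar (.inr hlt)
  · simpa using sq_nonneg _

lemma exists_mul_le_lisSD :
    ∃ c : ℝ, 0 < c ∧ ∃ l₀ : ℕ, ∀ n l, EdgeScale n l → l₀ ≤ l → c * l ≤ lisSD n := by
  obtain ⟨K, -, hmean⟩ := exists_abs_lisMean_sub_le
  obtain ⟨c, hc, l₀, hwindow⟩ := exists_probLisLE_sub_le_half K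
  refine ⟨c, hc, l₀, fun n l hnl hl => Real.le_sqrt_of_sq_le ?_⟩
  have hl0 : (0 : ℝ) < l := by linarith [nine_le_of_edgeScale hnl]
  obtain ⟨a, b, ha, hb, hmass⟩ := hwindow n l _ hnl hl (hmean n l hnl)
  have hcheb := probLisLE_add_le_variance_div_sq (by positivity) ha hb
  have : (1 : ℝ) / 2 ≤
      VarN (fun σ : Equiv.Perm (Fin n) => (lisLen σ : ℝ)) / (2 * (c * l)) ^ 2 := by linarith
  rw [le_div_iff₀ (by positivity)] at this
  nlinarith [sq_nonneg (c * l)]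

lemma exists_mul_rpow_le_lisSD :
    ∃ c : ℝ, 0 < c ∧ ∀ᶠ n : ℕ in atTop, c * (n : ℝ) ^ (1 / 6 : ℝ) ≤ lisSD n := by
  obtain ⟨c, hc, l₀, hsd⟩ := exists_mul_le_lisSD
  refine ⟨c, hc, ?_⟩
  filter_upwards [eventually_exists_edgeScale l₀] with n ⟨l, hl, hnl⟩
  refine le_trans ?_ (hsd n l hnl hl)
  gcongr
  have hn : (n : ℝ) ≤ (l : ℝ) ^ 6 := by
    calc (n : ℝ) = √n ^ 2 := (Real.sq_sqrt n.cast_nonneg).symm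
      _ ≤ ((l : ℝ) ^ 3) ^ 2 := by
          gcongr
          linarith [hnl.sqrt_add_two_le]
      _ = (l : ℝ) ^ 6 := by ring
  calc (n : ℝ) ^ (1 / 6 : ℝ) ≤ ((l : ℝ) ^ 6) ^ (1 / 6 : ℝ) := by gcongr
    _ = l := by simpa using Real.pow_rpow_inv_natCast l.cast_nonneg (by norm_num : 6 ≠ 0)

lemma exists_En_abs_lisLenBar_pow_le (q : ℕ) : ∃ K : ℝ, 0 < K ∧ ∀ᶠ n : ℕ in atTop,
    En (fun σ : Equiv.Perm (Fin n) => |lisLenBar σ| ^ q) ≤ K := by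
  obtain ⟨c, hc, l₀, hsd⟩ := exists_mul_le_lisSD
  obtain ⟨K₁, hK₁, hmean⟩ := exists_abs_lisMean_sub_le
  obtain ⟨K, hK, hmoment⟩ := exists_En_edgeDev_pow_le q
  refine ⟨(1 / c) ^ q * 2 ^ (q - 1) * (K + K₁ ^ q), by positivity, ?_⟩
  filter_upwards [eventually_exists_edgeScale l₀] with n ⟨l, hl, hnl⟩
  have hl0 : (0 : ℝ) < l := by linarith [nine_le_of_edgeScale hnl]
  have hbar (σ : Equiv.Perm (Fin n)) : |lisLenBar σ| ≤ 1 / c * (edgeDev l σ + K₁) := by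
    have hcl : 0 < c * l := by positivity
    rw [lisLenBar_eq, abs_div, abs_of_pos (hcl.trans_le (hsd n l hnl hl))]
    calc |(lisLen σ : ℝ) - lisMean n| / lisSD n
        ≤ (|(lisLen σ : ℝ) - 2 * √n| + K₁ * l) / (c * l) := by
          gcongr
          · refine (abs_sub_le _ (2 * √n) _).trans ?_
            rw [abs_sub_comm (2 * √n)]
            linarith [hmean n l hnl]
          · exact hsd n l hnl hl
      _ = 1 / c * (edgeDev l σ + K₁) := by
          rw [edgeDev]
          field_simp
  calc En (fun σ : Equiv.Perm (Fin n) => |lisLenBar σ| ^ q)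
      ≤ En fun σ : Equiv.Perm (Fin n) =>
          (1 / c) ^ q * 2 ^ (q - 1) * (edgeDev l σ ^ q + K₁ ^ q) := by
        refine En_mono fun σ => (pow_le_pow_left₀ (abs_nonneg _) (hbar σ) q).trans ?_
        rw [mul_pow, mul_assoc]
        gcongr
        exact add_pow_le (edgeDev_nonneg l σ) hK₁.le q
    _ ≤ (1 / c) ^ q * 2 ^ (q - 1) * (K + K₁ ^ q) := by
        rw [En_const_mul, En_add, En_const]
        gcongr
        exact hmoment n l hnl

end Variance

section CycleMerging

open Equiv Equiv.Perm

variable {α : Type*} {σ : Perm α} {x y a b : α}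

lemma sameCycle_swap_mul [Finite α] [DecidableEq α] (hxy : ¬σ.SameCycle x y) :
    (swap x y * σ).SameCycle x y := by
  have horbit (k : ℕ) : (swap x y * σ).SameCycle x ((σ ^ k) x) := by
    induction k with
    | zero => exact SameCycle.refl _ _
    | succ k ih =>
      by_cases hx : (σ ^ (k + 1)) x = x
      · rw [hx]
      · have hy : (σ ^ (k + 1)) x ≠ y := fun hy => hxy ⟨(k + 1 : ℕ), by rwa [zpow_natCast]⟩
        rw [← swap_apply_of_ne_of_ne hx hy, pow_succ', Perm.mul_apply, ← Perm.mul_apply (swap x y)]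
        exact sameCycle_apply_right.2 ih
  obtain ⟨k, hk⟩ := SameCycle.exists_nat_pow_eq (⟨-1, by simp⟩ : σ.SameCycle x (σ⁻¹ x))
  have hlast := sameCycle_apply_right.2 (horbit k)
  simpa [hk] using hlast

lemma sameCycle_swap_mul_of_sameCycle [Finite α] [DecidableEq α] (hxy : ¬σ.SameCycle x y)
    (hab : σ.SameCycle a b) :
    (swap x y * σ).SameCycle a b := by
  have hmerge := sameCycle_swap_mul hxy
  have hstep (c : α) : (swap x y * σ).SameCycle c (σ c) := by
    have hc := sameCycle_apply_right.2 (SameCycle.refl (swap x y * σ) c)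
    rw [Perm.mul_apply] at hc
    rcases eq_or_ne (σ c) x with hx | hx
    · rw [hx, swap_apply_left] at hc
      exact hx ▸ hc.trans hmerge.symm
    rcases eq_or_ne (σ c) y with hy | hy
    · rw [hy, swap_apply_right] at hc
      exact hy ▸ hc.trans hmerge
    · rwa [swap_apply_of_ne_of_ne hx hy] at hc
  obtain ⟨k, rfl⟩ := hab.exists_nat_pow_eq
  clear hab
  induction k with
  | zero => exact SameCycle.refl _ _
  | succ k ih =>
    rw [pow_succ', Perm.mul_apply]
    exact ih.trans (hstep _)

lemma isConj_of_forall_sameCycle [Finite α] {ρ γ : Perm α} (hρ : ∀ a b, ρ.SameCycle a b)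
    (hγ : ∀ a b, γ.SameCycle a b) : IsConj ρ γ := by
  cases nonempty_fintype α
  rcases subsingleton_or_nontrivial α with _ | _
  · rw [Subsingleton.elim ρ γ]
  have hne {τ : Perm α} (hτ : ∀ a b, τ.SameCycle a b) (z : α) : τ z ≠ z := fun hz => by
    obtain ⟨w, hw⟩ := exists_ne z
    exact hw ((hτ z w).eq_of_left hz).symm
  have hcycle {τ : Perm α} (hτ : ∀ a b, τ.SameCycle a b) : τ.IsCycle :=
    let z := Classical.arbitrary α
    ⟨z, hne hτ z, fun w _ => hτ z w⟩
  have hsupp {τ : Perm α} (hτ : ∀ a b, τ.SameCycle a b) : τ.support = univ :=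
    eq_univ_iff_forall.2 fun z => mem_support.2 (hne hτ z)
  exact (hcycle hρ).isConj (hcycle hγ) (by rw [hsupp hρ, hsupp hγ])

/-- The number of cycles of a permutation, fixed points included, as the number of its orbits. -/
noncomputable def cycleCount [Fintype α] (σ : Perm α) : ℕ :=
  Fintype.card (Quotient (SameCycle.setoid σ))

lemma cycleCount_le_card [Fintype α] {R : Finset α} (hR : ∀ z, ∃ r ∈ R, σ.SameCycle r z) :
    cycleCount σ ≤ #R := by
  rw [← Fintype.card_coe]
  refine Fintype.card_le_of_surjective (fun r : R => Quotient.mk (SameCycle.setoid σ) r)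
    fun q => ?_
  obtain ⟨z, rfl⟩ := Quotient.exists_rep q
  obtain ⟨r, hr, hrz⟩ := hR z
  exact ⟨⟨r, hr⟩, Quotient.sound hrz⟩

variable [Fintype α] [DecidableEq α]

lemma cycleCount_swap_mul_lt (hxy : ¬σ.SameCycle x y) :
    cycleCount (swap x y * σ) < cycleCount σ := by
  have hmap : ∀ a b, σ.SameCycle a b → (swap x y * σ).SameCycle a b := fun _ _ =>
    sameCycle_swap_mul_of_sameCycle hxy
  refine Fintype.card_lt_of_surjective_not_injective (Quotient.map id hmap)
    (Quotient.map_surjective hmap Function.surjective_id) fun hinj => hxy ?_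
  exact Quotient.exact (@hinj (Quotient.mk _ x) (Quotient.mk _ y)
    (Quotient.sound (sameCycle_swap_mul hxy)))

lemma cycleCount_le_card_parts (σ : Perm α) : cycleCount σ ≤ σ.partition.parts.card := by
  rcases isEmpty_or_nonempty α with _ | _
  · simp [cycleCount]
  have hne (c : Perm α) (hc : c ∈ σ.cycleFactorsFinset) : ∃ z, z ∈ c.support :=
    (mem_cycleFactorsFinset_iff.1 hc).1.nonempty_support
  choose! r hr using hne
  calc cycleCount σ ≤ #(σ.cycleFactorsFinset.image r ∪ σ.supportᶜ) := by
        refine cycleCount_le_card fun z => ?_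
        by_cases hz : z ∈ σ.support
        · have hcyc := cycleOf_mem_cycleFactorsFinset_iff.2 hz
          exact ⟨r (σ.cycleOf z), mem_union_left _ (mem_image_of_mem _ hcyc),
            (mem_support_cycleOf_iff.1 (hr _ hcyc)).1.symm⟩
        · exact ⟨z, mem_union_right _ (mem_compl.2 hz), SameCycle.refl _ _⟩
    _ ≤ #σ.cycleFactorsFinset + #σ.supportᶜ :=
        (card_union_le _ _).trans (Nat.add_le_add_right card_image_le _)
    _ = σ.partition.parts.card := by
        rw [parts_partition, Multiset.card_add, Multiset.card_replicate, card_compl,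
          cycleType_def, Multiset.card_map, card_def]

lemma hammingDist_conj (κ σ ρ : Perm α) :
    hammingDist ⇑(κ * σ * κ⁻¹) ⇑(κ * ρ * κ⁻¹) = hammingDist ⇑σ ⇑ρ :=
  card_equiv κ⁻¹ fun i => by simp

lemma hammingDist_swap_mul_le_two (σ : Perm α) (x y : α) :
    hammingDist ⇑σ ⇑(swap x y * σ) ≤ 2 := by
  refine (card_le_card (t := {σ⁻¹ x, σ⁻¹ y}) fun i hi => ?_).trans card_le_two
  contrapose! hi
  simp only [mem_insert, mem_singleton, not_or, eq_inv_iff_eq] at hi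
  rw [mem_filter, not_and_not_right, Perm.mul_apply, swap_apply_of_ne_of_ne hi.1 hi.2]
  exact fun _ => rfl

lemma exists_forall_sameCycle_hammingDist_le (σ : Perm α) :
    ∃ ρ : Perm α, (∀ a b, ρ.SameCycle a b) ∧ hammingDist ⇑σ ⇑ρ ≤ 2 * cycleCount σ := by
  induction hk : cycleCount σ using Nat.strong_induction_on generalizing σ with
  | _ k ih =>
    by_cases hσ : ∀ a b, σ.SameCycle a b
    · exact ⟨σ, hσ, by simp⟩
    push Not at hσ
    obtain ⟨x, y, hxy⟩ := hσ
    have hlt := cycleCount_swap_mul_lt hxy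
    obtain ⟨ρ, hρ, hdist⟩ := ih _ (hk ▸ hlt) _ rfl
    refine ⟨ρ, hρ, (hammingDist_triangle _ ⇑(swap x y * σ) _).trans ?_⟩
    linarith [hammingDist_swap_mul_le_two σ x y]

lemma exists_conj_hammingDist_le (σ τ : Perm α) :
    ∃ κ : Perm α, hammingDist ⇑(κ * σ * κ⁻¹) ⇑τ ≤ 2 * (cycleCount σ + cycleCount τ) := by
  obtain ⟨ρ, hρ, hσρ⟩ := exists_forall_sameCycle_hammingDist_le σ
  obtain ⟨γ, hγ, hτγ⟩ := exists_forall_sameCycle_hammingDist_le τ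
  obtain ⟨κ, hκ⟩ := isConj_iff.1 (isConj_of_forall_sameCycle hρ hγ)
  refine ⟨κ, (hammingDist_triangle_right _ _ ⇑γ).trans ?_⟩
  have hconj := hammingDist_conj κ σ ρ
  rw [hκ] at hconj
  lia

lemma exists_partition_eq (lam : (Fintype.card α).Partition) : ∃ σ : Perm α, σ.partition = lam := by
  set big := lam.parts.filter (2 ≤ ·)
  set ones := lam.parts.filter (¬2 ≤ ·)
  have hsplit : big + ones = lam.parts := Multiset.filter_add_not _ _
  have hones : ones = Multiset.replicate ones.card 1 := by
    refine Multiset.eq_replicate_card.2 fun b hb => ?_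
    obtain ⟨hb, hb2⟩ := Multiset.mem_filter.1 hb
    have := lam.parts_pos hb
    lia
  have hsum : big.sum + ones.card = Fintype.card α := by
    rw [← lam.parts_sum, ← hsplit, Multiset.sum_add, hones]
    simp
  obtain ⟨σ, hσ⟩ := (exists_with_cycleType_iff α (m := big)).2
    ⟨by lia, fun a ha => (Multiset.mem_filter.1 ha).2⟩
  refine ⟨σ, Nat.Partition.ext ?_⟩
  rw [parts_partition, ← sum_cycleType, hσ, ← hsplit, ← hsum, Nat.add_sub_cancel_left, ← hones]

end CycleMerging

section ExpectedCycleCount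

open Equiv Equiv.Perm

variable {n : ℕ}

lemma decomposeFin_symm_eq_swap_mul (p : Fin (n + 1)) (e : Perm (Fin n)) :
    decomposeFin.symm (p, e) = swap 0 p * decomposeFin.symm (0, e) := by
  ext i
  refine Fin.cases ?_ (fun j => ?_) i <;> simp

lemma sameCycle_decomposeFin_symm_zero {e : Perm (Fin n)} {a b : Fin n} (hab : e.SameCycle a b) :
    (decomposeFin.symm (0, e)).SameCycle a.succ b.succ := by
  obtain ⟨k, rfl⟩ := hab.exists_nat_pow_eq
  clear hab
  induction k with
  | zero => exact SameCycle.refl _ _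
  | succ k ih =>
    have hstep : decomposeFin.symm (0, e) ((e ^ k) a).succ = ((e ^ (k + 1)) a).succ := by
      rw [decomposeFin_symm_apply_succ, swap_self, refl_apply, pow_succ', Perm.mul_apply]
    rw [← hstep]
    exact sameCycle_apply_right.2 ih

lemma cycleCount_decomposeFin_symm_zero_le (e : Perm (Fin n)) :
    cycleCount (decomposeFin.symm (0, e)) ≤ cycleCount e + 1 := by
  rw [cycleCount, cycleCount, ← Fintype.card_option]
  refine Fintype.card_le_of_surjective (fun o => o.elim (Quotient.mk _ 0)
    (Quotient.map Fin.succ fun _ _ => sameCycle_decomposeFin_symm_zero)) fun q => ?_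
  obtain ⟨z, rfl⟩ := Quotient.exists_rep q
  refine Fin.cases ⟨none, rfl⟩ (fun j => ⟨some (Quotient.mk _ j), rfl⟩) z

lemma cycleCount_decomposeFin_symm_le (p : Fin (n + 1)) (e : Perm (Fin n)) :
    cycleCount (decomposeFin.symm (p, e)) ≤ cycleCount e + if p = 0 then 1 else 0 := by
  have hzero := cycleCount_decomposeFin_symm_zero_le e
  split_ifs with hp
  · rwa [hp]
  · have hne : ¬(decomposeFin.symm (0, e)).SameCycle 0 p := fun h =>
      hp (h.eq_of_left (by simp [Function.IsFixedPt])).symm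
    rw [decomposeFin_symm_eq_swap_mul]
    linarith [cycleCount_swap_mul_lt hne]

lemma sum_cycleCount_le (n : ℕ) :
    ∑ σ : Perm (Fin n), (cycleCount σ : ℝ) ≤ n.factorial * (harmonic n : ℝ) := by
  induction n with
  | zero => simp [cycleCount]
  | succ n ih =>
    calc ∑ σ : Perm (Fin (n + 1)), (cycleCount σ : ℝ)
        = ∑ p : Fin (n + 1), ∑ e : Perm (Fin n), (cycleCount (decomposeFin.symm (p, e)) : ℝ) := by
          rw [← Equiv.sum_comp decomposeFin.symm, Fintype.sum_prod_type]
      _ ≤ ∑ p : Fin (n + 1), ∑ e : Perm (Fin n), ((cycleCount e : ℝ) + if p = 0 then 1 else 0) := by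
          gcongr with p _ e
          exact_mod_cast cycleCount_decomposeFin_symm_le p e
      _ = (n + 1) * ∑ e : Perm (Fin n), (cycleCount e : ℝ) + n.factorial := by
          simp [sum_add_distrib, Fintype.card_perm]
      _ ≤ (n + 1) * (n.factorial * (harmonic n : ℝ)) + n.factorial := by gcongr
      _ = (n + 1).factorial * (harmonic (n + 1) : ℝ) := by
          rw [harmonic_succ, Nat.factorial_succ]
          push_cast
          field_simp

lemma En_cycleCount_le (n : ℕ) :
    En (fun σ : Perm (Fin n) => (cycleCount σ : ℝ)) ≤ 1 + Real.log n := by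
  refine le_trans ?_ (harmonic_le_one_add_log n)
  rw [En, Fintype.card_perm, Fintype.card_fin, div_le_iff₀' (by positivity)]
  exact sum_cycleCount_le n

lemma En_lt_cycleCount_le (n : ℕ) {t : ℝ} (ht : 0 < t) :
    En (fun σ : Perm (Fin n) => if t < cycleCount σ then (1 : ℝ) else 0) ≤
      (1 + Real.log n) / t := by
  rw [le_div_iff₀' ht, ← En_const_mul]
  refine (En_mono fun σ => ?_).trans (En_cycleCount_le n)
  split_ifs with h
  · linarith
  · simp

end ExpectedCycleCount

section ConjugationAverage

open Equiv Equiv.Perm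

variable {n : ℕ}

/-- The average of `g` over the conjugates of `σ` by a uniformly random permutation. -/
noncomputable def conjAvg (g : Perm (Fin n) → ℝ) (σ : Perm (Fin n)) : ℝ :=
  En fun π => g (π * σ * π⁻¹)

lemma conjAvg_conj (g : Perm (Fin n) → ℝ) (κ σ : Perm (Fin n)) :
    conjAvg g (κ * σ * κ⁻¹) = conjAvg g σ := by
  simp only [conjAvg, En]
  rw [← Equiv.sum_comp (Equiv.mulRight κ) fun π => g (π * σ * π⁻¹)]
  simp [mul_assoc]

lemma sum_conjAvg (g : Perm (Fin n) → ℝ) {S : Finset (Perm (Fin n))}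
    (hS : ∀ π τ, π * τ * π⁻¹ ∈ S ↔ τ ∈ S) : ∑ τ ∈ S, conjAvg g τ = ∑ τ ∈ S, g τ := by
  have hconj (π : Perm (Fin n)) : ∑ τ ∈ S, g (π * τ * π⁻¹) = ∑ τ ∈ S, g τ :=
    sum_equiv (MulAut.conj π).toEquiv (fun τ => (hS π τ).symm) fun _ _ => rfl
  simp only [conjAvg, ← En_sum, hconj, En_const]

lemma En_conjAvg (g : Perm (Fin n) → ℝ) : En (conjAvg g) = En g := by
  rw [En, sum_conjAvg g (by simp), En]

lemma EnCond_partition (g : Perm (Fin n) → ℝ) (σ : Perm (Fin n)) :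
    EnCond σ.partition g = conjAvg g σ := by
  have hmem (τ : Perm (Fin n)) :
      τ ∈ univ.filter (fun τ => τ.partition = σ.partition) ↔ IsConj τ σ := by
    rw [mem_filter_univ, partition_eq_of_isConj]
  have hconst (τ) (hτ : τ ∈ univ.filter fun τ : Perm (Fin n) => τ.partition = σ.partition) :
      conjAvg g τ = conjAvg g σ := by
    obtain ⟨κ, rfl⟩ := isConj_iff.1 ((hmem τ).1 hτ)
    exact (conjAvg_conj g κ τ).symm
  have hclosed (π τ : Perm (Fin n)) : IsConj (π * τ * π⁻¹) σ ↔ IsConj τ σ :=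
    have h : IsConj τ (π * τ * π⁻¹) := isConj_iff.2 ⟨π, rfl⟩
    ⟨h.trans, h.symm.trans⟩
  rw [EnCond, ← sum_conjAvg g fun π τ => by rw [hmem, hmem, hclosed], sum_congr rfl hconst,
    sum_const, nsmul_eq_mul, mul_div_cancel_left₀]
  exact_mod_cast card_ne_zero_of_mem ((hmem σ).2 (IsConj.refl σ))

lemma abs_conjAvg_sub_conjAvg_le {g v : Perm (Fin n) → ℝ} {σ₀ σ : Perm (Fin n)}
    (hgv : ∀ τ₀ τ : Perm (Fin n),
      hammingDist ⇑τ ⇑τ₀ ≤ 2 * (cycleCount σ + cycleCount σ₀) → |g τ₀ - g τ| ≤ v τ) :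
    |conjAvg g σ₀ - conjAvg g σ| ≤ conjAvg v σ := by
  obtain ⟨κ, hκ⟩ := exists_conj_hammingDist_le σ σ₀
  rw [← conjAvg_conj g κ σ, ← conjAvg_conj v κ σ]
  simp only [conjAvg, ← En_sub]
  refine (abs_En_le _).trans (En_mono fun π => hgv _ _ ?_)
  rwa [hammingDist_conj]

end ConjugationAverage

section RareExceptions

variable {n : ℕ} {a v : Equiv.Perm (Fin n) → ℝ} {B : Equiv.Perm (Fin n) → Prop} [DecidablePred B]
  {e D V p : ℝ}

lemma abs_le_of_abs_sub_le_off_rare (hv : ∀ σ, 0 ≤ v σ) (hoff : ∀ σ, ¬B σ → |e - a σ| ≤ v σ)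
    (ha : ∀ σ, |a σ| ≤ D + v σ) (hV : En v ≤ V)
    (hrare : En (fun σ => if B σ then (1 : ℝ) else 0) ≤ 1 / 2) : |e| ≤ 2 * D + 4 * V := by
  have hpointwise (σ) : |e| ≤ |e| * (if B σ then (1 : ℝ) else 0) + (D + 2 * v σ) := by
    have := ha σ
    have := hv σ
    split_ifs with hB
    · linarith [abs_nonneg (a σ)]
    · linarith [hoff σ hB, abs_sub_abs_le_abs_sub e (a σ)]
  have hmean := En_mono hpointwise
  rw [En_const, En_add, En_const_mul, En_add, En_const, En_const_mul] at hmean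
  linarith [mul_le_mul_of_nonneg_left hrare (abs_nonneg e)]

lemma abs_sub_En_le_of_abs_sub_le_off_rare (hv : ∀ σ, 0 ≤ v σ)
    (hoff : ∀ σ, ¬B σ → |e - a σ| ≤ v σ) (hD : 0 ≤ D) (ha : ∀ σ, |a σ| ≤ D + v σ)
    (hV : En v ≤ V) (hp : p ≤ 1 / 2)
    (hrare : En (fun σ => if B σ then (1 : ℝ) else 0) ≤ p) :
    |e - En a| ≤ V + (3 * D + 4 * V) * p := by
  have he := abs_le_of_abs_sub_le_off_rare hv hoff ha hV (hrare.trans hp)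
  have hp0 : 0 ≤ p := (En_nonneg fun σ => by split_ifs <;> simp).trans hrare
  have hpointwise (σ) : |e - a σ| ≤ v σ + (|e| + D) * if B σ then (1 : ℝ) else 0 := by
    split_ifs with hB
    · linarith [ha σ, abs_sub e (a σ)]
    · linarith [hoff σ hB]
  calc |e - En a| = |En fun σ => e - a σ| := by rw [En_sub, En_const]
    _ ≤ En fun σ => v σ + (|e| + D) * if B σ then (1 : ℝ) else 0 :=
        (abs_En_le _).trans (En_mono hpointwise)
    _ = En v + (|e| + D) * En fun σ => if B σ then (1 : ℝ) else 0 := by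
        rw [En_add, En_const_mul]
    _ ≤ V + (|e| + D) * p := by gcongr
    _ ≤ V + (3 * D + 4 * V) * p :=
        add_le_add_right (mul_le_mul_of_nonneg_right (by linarith) hp0) V

end RareExceptions

section PolynomialGrowth

variable {f : ℝ → ℝ} {C η : ℝ} {m : ℕ}

lemma exists_abs_le_add_mul_pow_succ (hf : ∀ x, |f x| ≤ C * (1 + |x| ^ m)) (hη : 0 < η) :
    ∃ D, 0 ≤ D ∧ ∀ x, |f x| ≤ D + η * (1 + |x| ^ (m + 1)) := by
  have hC : 0 ≤ C := nonneg_of_mul_nonneg_left ((abs_nonneg _).trans (hf 0)) (by positivity)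
  refine ⟨C + C * (C / η) ^ m, by positivity, fun x => (hf x).trans ?_⟩
  have : 0 ≤ η * |x| ^ (m + 1) := by positivity
  have : 0 ≤ C * (C / η) ^ m := by positivity
  rcases le_total (C / η) |x| with hx | hx
  · have : C * |x| ^ m ≤ η * |x| ^ (m + 1) := by
      rw [pow_succ', ← mul_assoc]
      gcongr
      rwa [div_le_iff₀' hη] at hx
    linarith
  · have : C * |x| ^ m ≤ C * (C / η) ^ m := by gcongr
    linarith

lemma abs_sub_le_mul_pow_of_le_abs (hf : ∀ x, |f x| ≤ C * (1 + |x| ^ m)) {x y : ℝ}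
    (hxy : |y - x| ≤ 1) (hx : 1 ≤ |x|) : |f y - f x| ≤ C * (3 + 2 ^ m) * |x| ^ m := by
  have hC : 0 ≤ C := nonneg_of_mul_nonneg_left ((abs_nonneg _).trans (hf 0)) (by positivity)
  have hy : |y| ^ m ≤ 2 ^ m * |x| ^ m := by
    rw [← mul_pow]
    gcongr
    linarith [abs_sub_abs_le_abs_sub y x]
  have hone : 1 ≤ |x| ^ m := one_le_pow₀ hx
  calc |f y - f x| ≤ |f y| + |f x| := abs_sub _ _
    _ ≤ C * (1 + |y| ^ m) + C * (1 + |x| ^ m) := add_le_add (hf y) (hf x)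
    _ = C * (2 + |x| ^ m + |y| ^ m) := by ring
    _ ≤ C * (3 * |x| ^ m + 2 ^ m * |x| ^ m) := by gcongr; linarith
    _ = C * (3 + 2 ^ m) * |x| ^ m := by ring

lemma exists_abs_sub_le_mul_pow_succ (hcont : Continuous f) (hf : ∀ x, |f x| ≤ C * (1 + |x| ^ m))
    (hη : 0 < η) :
    ∃ δ > 0, ∀ x y, |y - x| ≤ δ → |f y - f x| ≤ η * (1 + |x| ^ (m + 1)) := by
  set M := max 1 (C * (3 + 2 ^ m) / η)
  obtain ⟨δ, hδ, huniform⟩ := Metric.uniformContinuousOn_iff_le.1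
    ((isCompact_closedBall (0 : ℝ) (M + 1)).uniformContinuousOn_of_continuous hcont.continuousOn)
    η hη
  refine ⟨min δ 1, by positivity, fun x y hxy => ?_⟩
  obtain ⟨hxyδ, hxy1⟩ := le_min_iff.1 hxy
  rcases le_total |x| M with hx | hx
  · have hball := huniform y
      (by rw [mem_closedBall_zero_iff, Real.norm_eq_abs]; linarith [abs_sub_abs_le_abs_sub y x])
      x (by rw [mem_closedBall_zero_iff, Real.norm_eq_abs]; linarith) hxyδ
    refine hball.trans (le_mul_of_one_le_right hη.le ?_)
    linarith [pow_nonneg (abs_nonneg x) (m + 1)]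
  · obtain ⟨hx1, hxη⟩ := max_le_iff.1 hx
    calc |f y - f x| ≤ C * (3 + 2 ^ m) * |x| ^ m := abs_sub_le_mul_pow_of_le_abs hf hxy1 hx1
      _ ≤ η * |x| * |x| ^ m :=
          mul_le_mul_of_nonneg_right ((div_le_iff₀' hη).1 hxη) (by positivity)
      _ ≤ η * (1 + |x| ^ (m + 1)) := by
          rw [mul_assoc, ← pow_succ']
          gcongr
          linarith

end PolynomialGrowth

section Comparison

variable {n : ℕ}

lemma lisLen_le_add_hammingDist (σ ρ : Equiv.Perm (Fin n)) :
    lisLen σ ≤ lisLen ρ + hammingDist ⇑σ ⇑ρ := by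
  obtain ⟨s, hs, hcard⟩ := exists_strictMonoOn_card_eq_lisLen σ
  have hagree : #(s.filter fun i => σ i = ρ i) ≤ lisLen ρ := by
    refine card_le_lisLen fun i hi j hj hij => ?_
    obtain ⟨his, hi⟩ := mem_filter.1 hi
    obtain ⟨hjs, hj⟩ := mem_filter.1 hj
    simpa only [hi, hj] using hs his hjs hij
  have hdiffer : #(s.filter fun i => σ i ≠ ρ i) ≤ hammingDist ⇑σ ⇑ρ :=
    card_le_card (filter_subset_filter _ (subset_univ s))
  rw [← hcard, ← card_filter_add_card_filter_not (s := s) fun i => σ i = ρ i]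
  exact add_le_add hagree hdiffer

lemma abs_lisLenBar_sub_le (σ ρ : Equiv.Perm (Fin n)) :
    |lisLenBar ρ - lisLenBar σ| ≤ hammingDist ⇑σ ⇑ρ / lisSD n := by
  have hσ : (lisLen σ : ℝ) ≤ lisLen ρ + hammingDist ⇑σ ⇑ρ :=
    mod_cast lisLen_le_add_hammingDist σ ρ
  have hρ : (lisLen ρ : ℝ) ≤ lisLen σ + hammingDist ⇑σ ⇑ρ :=
    mod_cast hammingDist_comm ⇑ρ ⇑σ ▸ lisLen_le_add_hammingDist ρ σ
  rw [lisLenBar_eq, lisLenBar_eq, ← sub_div, sub_sub_sub_cancel_right, abs_div,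
    abs_of_nonneg (lisSD_nonneg n)]
  exact div_le_div_of_nonneg_right (abs_sub_le_iff.2 ⟨by linarith, by linarith⟩) (lisSD_nonneg n)

variable {f v : ℝ → ℝ} {δ D V t : ℝ}

lemma abs_EnCond_sub_En_le (lam : (Fintype.card (Fin n)).Partition) (hsd : 0 < lisSD n)
    (hv : ∀ x, 0 ≤ v x) (hcont : ∀ x y, |y - x| ≤ δ → |f y - f x| ≤ v x) (hD : 0 ≤ D)
    (hgrowth : ∀ x, |f x| ≤ D + v x) (hV : En (fun σ : Equiv.Perm (Fin n) => v (lisLenBar σ)) ≤ V)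
    (ht : 0 < t) (hdist : 2 * (t + lam.parts.card) ≤ δ * lisSD n)
    (hrare : (1 + Real.log n) / t ≤ 1 / 2) :
    |EnCond lam (fun σ => f (lisLenBar σ)) - En (n := n) (fun σ => f (lisLenBar σ))| ≤
      V + (3 * D + 4 * V) * ((1 + Real.log n) / t) := by
  obtain ⟨σ₀, rfl⟩ := exists_partition_eq lam
  rw [EnCond_partition, ← En_conjAvg]
  refine abs_sub_En_le_of_abs_sub_le_off_rare (v := conjAvg fun σ => v (lisLenBar σ))
    (B := fun σ => t < cycleCount σ) (fun σ => En_nonneg fun π => hv _) (fun σ hσ => ?_) hD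
    (fun σ => ?_) (by rwa [En_conjAvg]) hrare (En_lt_cycleCount_le n ht)
  · refine abs_conjAvg_sub_conjAvg_le fun τ₀ τ hτ => hcont _ _ ?_
    refine (abs_lisLenBar_sub_le τ τ₀).trans ((div_le_iff₀ hsd).2 (le_trans ?_ hdist))
    have hτ' : (hammingDist ⇑τ ⇑τ₀ : ℝ) ≤ 2 * (cycleCount σ + cycleCount σ₀) := mod_cast hτ
    have hσ₀ : (cycleCount σ₀ : ℝ) ≤ σ₀.partition.parts.card := mod_cast cycleCount_le_card_parts σ₀
    linarith [not_lt.1 hσ]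
  · refine (abs_En_le _).trans ((En_mono fun π => hgrowth _).trans_eq ?_)
    rw [En_add, En_const, conjAvg]

end Comparison

section Limit

open Asymptotics

lemma isBigO_rpow_lisSD : (fun n : ℕ => (n : ℝ) ^ (1 / 6 : ℝ)) =O[atTop] lisSD := by
  obtain ⟨c, hc, hsd⟩ := exists_mul_rpow_le_lisSD
  refine IsBigO.of_bound c⁻¹ (hsd.mono fun n hn => ?_)
  rw [Real.norm_of_nonneg (by positivity), Real.norm_of_nonneg (lisSD_nonneg n),
    le_inv_mul_iff₀ hc]
  exact hn

lemma eventually_lisSD_pos : ∀ᶠ n in atTop, 0 < lisSD n := by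
  obtain ⟨c, hc, hsd⟩ := exists_mul_rpow_le_lisSD
  filter_upwards [hsd, eventually_gt_atTop 0] with n hn hpos
  exact lt_of_lt_of_le (by positivity) hn

lemma isLittleO_natCast_rpow {a b : ℝ} (hab : a < b) :
    (fun n : ℕ => (n : ℝ) ^ a) =o[atTop] fun n : ℕ => (n : ℝ) ^ b := by
  have hdiv := (tendsto_rpow_neg_atTop (sub_pos.2 hab)).comp (tendsto_natCast_atTop_atTop (R := ℝ))
  refine isLittleO_of_tendsto' ?_ (hdiv.congr' ?_)
  · filter_upwards [eventually_gt_atTop 0] with n hn h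
    exact absurd h (by positivity)
  · filter_upwards [eventually_gt_atTop 0] with n hn
    rw [Function.comp_apply, neg_sub, Real.rpow_sub (by exact_mod_cast hn)]

lemma tendsto_one_add_log_div_rpow {a : ℝ} (ha : 0 < a) :
    Tendsto (fun n : ℕ => (1 + Real.log n) / (n : ℝ) ^ a) atTop (nhds 0) := by
  have hone : (fun _ : ℝ => (1 : ℝ)) =o[atTop] fun x => x ^ a :=
    isLittleO_const_left.2 <| Or.inr <| tendsto_norm_atTop_atTop.comp (tendsto_rpow_atTop ha)
  exact (hone.add (isLittleO_log_rpow_atTop ha)).tendsto_div_nhds_zero.comp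
    tendsto_natCast_atTop_atTop

variable {lam : ∀ n : ℕ, (Fintype.card (Fin n)).Partition}

lemma eventually_add_card_parts_le
    (hlam : (fun n => ((lam n).parts.card : ℝ)) =o[atTop] fun n : ℕ => (n : ℝ) ^ (1 / 6 : ℝ))
    {δ : ℝ} (hδ : 0 < δ) :
    ∀ᶠ n : ℕ in atTop, 2 * ((n : ℝ) ^ (1 / 12 : ℝ) + (lam n).parts.card) ≤ δ * lisSD n := by
  have hsum := (((isLittleO_natCast_rpow (a := 1 / 12) (b := 1 / 6) (by norm_num)).add hlam)
    |>.const_mul_left 2).trans_isBigO isBigO_rpow_lisSD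
  filter_upwards [hsum.def hδ] with n hn
  rwa [Real.norm_of_nonneg (by positivity), Real.norm_of_nonneg (lisSD_nonneg n)] at hn

theorem condExp_lisLenBar_given_cycleType_tendsto_general
    (hlam : (fun n => ((lam n).parts.card : ℝ)) =o[atTop] fun n : ℕ => (n : ℝ) ^ (1 / 6 : ℝ))
    {f : ℝ → ℝ} (hf : Continuous f)
    (hpoly : ∃ C : ℝ, ∃ m : ℕ, ∀ x : ℝ, |f x| ≤ C * (1 + |x| ^ m)) :
    Tendsto (fun n : ℕ =>
        EnCond (lam n) (fun σ => f (lisLenBar σ)) -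
          En (n := n) (fun σ => f (lisLenBar σ)))
      atTop (nhds 0) := by
  obtain ⟨C, m, hC⟩ := hpoly
  obtain ⟨K, hK, hmoment⟩ := exists_En_abs_lisLenBar_pow_le (m + 1)
  refine Metric.tendsto_nhds.2 fun r hr => ?_
  obtain ⟨η, hη, hηr⟩ : ∃ η > 0, η * (1 + K) < r :=
    ⟨r / (2 * (1 + K)), by positivity, by field_simp; norm_num⟩
  obtain ⟨D, hD, hgrowth⟩ := exists_abs_le_add_mul_pow_succ hC hη
  obtain ⟨δ, hδ, hcont⟩ := exists_abs_sub_le_mul_pow_succ hf hC hη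
  have hlog := tendsto_one_add_log_div_rpow (a := 1 / 12) (by norm_num)
  have hbound := (hlog.const_mul (3 * D + 4 * (η * (1 + K)))).const_add (η * (1 + K))
  rw [mul_zero, add_zero] at hbound
  filter_upwards [hmoment, eventually_lisSD_pos, eventually_add_card_parts_le hlam hδ,
    hlog.eventually_le_const (by norm_num : (0 : ℝ) < 1 / 2), hbound.eventually_lt_const hηr,
    eventually_gt_atTop 0] with n hmom hsd hdist hrare hlt hn
  rw [dist_zero_right, Real.norm_eq_abs]
  refine (abs_EnCond_sub_En_le (v := fun x => η * (1 + |x| ^ (m + 1))) (lam n) hsd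
    (fun x => by positivity) hcont hD hgrowth ?_ (by positivity) hdist hrare).trans_lt hlt
  rw [En_const_mul, En_add, En_const]
  gcongr

end Limit

/-- For `0 < ε < 1/6` and partitions `λ^n ⊢ n` with at most `n^ε` parts, the
conditional expectation of `f(Ū)` given cycle type `λ^n` converges to the
unconditional expectation, for every continuous `f` of polynomial growth. -/
theorem condExp_lisLenBar_given_cycleType_tendsto
    (ε : ℝ) (hε0 : 0 < ε) (hε : ε < 1 / 6)
    (lam : ∀ n : ℕ, (Fintype.card (Fin n)).Partition)
    (hlam : ∀ n : ℕ, ((lam n).parts.card : ℝ) ≤ (n : ℝ) ^ ε)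
    (f : ℝ → ℝ) (hf : Continuous f)
    (hpoly : ∃ C : ℝ, ∃ m : ℕ, ∀ x : ℝ, |f x| ≤ C * (1 + |x| ^ m)) :
    Tendsto (fun n : ℕ =>
        EnCond (lam n) (fun σ => f (lisLenBar σ)) -
          En (n := n) (fun σ => f (lisLenBar σ)))
      atTop (nhds 0) :=
  condExp_lisLenBar_given_cycleType_tendsto_general
    ((Asymptotics.IsBigO.of_norm_le fun n => by simpa using hlam n).trans_isLittleO
      (isLittleO_natCast_rpow hε)) hf hpoly
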